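/- Suppose A ⊂ F_p satisfies |A| ≤ p^{64/117}. Then max{|A+A|, |AA|} ≳ |A|^{39/32}, where ≳ hides absolute constants and powers of log|A|. -/

import Mathlib

set_option linter.all false

namespace SP
open Polynomial

noncomputable section

abbrev R3 (F : Type*) [Field F] := MvPolynomial (Fin 3) F

structure IsDer {S : Type*} [CommRing S] (D : S → S) : Prop where
  add : ∀ a b, D (a + b) = D a + D b
  mul : ∀ a b, D (a * b) = a * D b + b * D a

lemma IsDer.zero {S : Type*} [CommRing S] {D : S → S} (h : IsDer D) : D 0 = 0 := by
  simpa using h.add 0 0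

lemma IsDer.neg {S : Type*} [CommRing S] {D : S → S} (h : IsDer D) (a : S) : D (-a) = - D a := by
  have := h.add a (-a)
  rw [add_neg_cancel, h.zero] at this
  exact (neg_eq_of_add_eq_zero_right this.symm).symm

lemma IsDer.sub {S : Type*} [CommRing S] {D : S → S} (h : IsDer D) (a b : S) :
    D (a - b) = D a - D b := by
  rw [sub_eq_add_neg, h.add, h.neg, sub_eq_add_neg]

lemma IsDer.sum {S : Type*} [CommRing S] {D : S → S} (h : IsDer D) {ι : Type*} (s : Finset ι)
    (g : ι → S) : D (∑ i ∈ s, g i) = ∑ i ∈ s, D (g i) := by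
  classical
  induction s using Finset.induction_on with
  | empty => simp [h.zero]
  | insert a s ha ih => rw [Finset.sum_insert ha, Finset.sum_insert ha, h.add, ih]

lemma IsDer.one {S : Type*} [CommRing S] {D : S → S} (h : IsDer D) : D 1 = 0 := by
  simpa using h.mul 1 1

lemma IsDer.of_derivation {F S : Type*} [Field F] [CommRing S] [Algebra F S]
    (D : Derivation F S S) (c : S) : IsDer (fun a => c * D a) :=
  ⟨fun a b => by simp [mul_add], fun a b => by simp [Derivation.leibniz]; ring⟩

def mapC {S : Type*} [CommRing S] (D : S → S) (q : S[X]) : S[X] :=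
  ∑ i ∈ Finset.range (q.natDegree + 1), monomial i (D (q.coeff i))

lemma coeff_mapC {S : Type*} [CommRing S] {D : S → S} (hD : IsDer D) (q : S[X]) (i : ℕ) :
    (mapC D q).coeff i = D (q.coeff i) := by
  simp only [mapC, finset_sum_coeff, coeff_monomial]
  rw [Finset.sum_ite_eq']
  split_ifs with h
  · rfl
  · rw [coeff_eq_zero_of_natDegree_lt (by simpa using h), hD.zero]

lemma mapC_C {S : Type*} [CommRing S] {D : S → S} (hD : IsDer D) (a : S) :
    mapC D (C a) = C (D a) := by
  ext i
  rw [coeff_mapC hD, coeff_C, coeff_C]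
  split_ifs <;> simp [hD.zero]

lemma mapC_X {S : Type*} [CommRing S] {D : S → S} (hD : IsDer D) :
    mapC D (X : S[X]) = 0 := by
  ext i
  rw [coeff_mapC hD, coeff_X, coeff_zero]
  split_ifs <;> simp [hD.zero, hD.one]

lemma mapC_isDer {S : Type*} [CommRing S] {D : S → S} (hD : IsDer D) : IsDer (mapC D) := by
  constructor
  · intro a b
    ext i
    simp [coeff_mapC hD, hD.add]
  · intro a b
    ext i
    rw [coeff_mapC hD, coeff_mul, hD.sum, mul_comm b, coeff_add, coeff_mul, coeff_mul,
      ← Finset.sum_add_distrib]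
    apply Finset.sum_congr rfl
    intro x _
    rw [coeff_mapC hD, coeff_mapC hD, hD.mul]
    ring

lemma chain_ideal {F S : Type*} [Field F] [CommRing S] [Algebra F S] {D : S → S}
    (hDer : IsDer D) (J : Ideal S) (hc : ∀ c : F, D (algebraMap F S c) = 0) (v : Fin 3 → S)
    (hv : ∀ i, D (v i) ∈ J) (h : R3 F) : D (MvPolynomial.aeval v h) ∈ J := by
  induction h using MvPolynomial.induction_on with
  | C a => simp [hc]
  | add p q hp hq => rw [map_add, hDer.add]; exact J.add_mem hp hq
  | mul_X p i hp =>
    rw [map_mul, MvPolynomial.aeval_X, hDer.mul]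
    exact J.add_mem (J.mul_mem_left _ (hv i)) (J.mul_mem_left _ hp)

lemma natDegree_aeval_le {F S σ : Type*} [Field F] [CommRing S] [Algebra F S] (v : σ → S[X])
    (hv : ∀ i, (v i).natDegree ≤ 1) (h : MvPolynomial σ F) :
    (MvPolynomial.aeval v h).natDegree ≤ h.totalDegree := by
  rw [MvPolynomial.aeval_def, MvPolynomial.eval₂]
  apply (Polynomial.natDegree_sum_le _ _).trans
  apply Finset.sup_le
  intro d hd
  simp only [Function.comp_apply]
  rw [IsScalarTower.algebraMap_apply F S S[X], ← Polynomial.C_eq_algebraMap]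
  apply (Polynomial.natDegree_C_mul_le _ _).trans
  apply (Polynomial.natDegree_prod_le _ _).trans
  calc ∑ i ∈ d.support, ((v i) ^ d i).natDegree ≤ ∑ i ∈ d.support, d i := by
        apply Finset.sum_le_sum
        intro i _
        exact (Polynomial.natDegree_pow_le).trans (by nlinarith [hv i])
    _ ≤ _ := by
        rw [MvPolynomial.totalDegree]
        exact Finset.le_sup_of_le hd le_rfl

/-- Inductive propagation of ideal membership along coefficients. -/
lemma coeff_prop {F S : Type*} [Field F] [CommRing S] [Algebra F S] {D : S → S}
    (hDer : IsDer D) (J : Ideal S) (hD : ∀ a ∈ J, D a ∈ J) (c : S) (G : S[X]) (d : ℕ) (hG : G.natDegree ≤ d)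
    (hd : ∀ i : ℕ, 0 < i → i ≤ d → (i : F) ≠ 0)
    (h0 : G.coeff 0 ∈ J)
    (h : ∀ i, (mapC D G - (1 + C c * X) * derivative G).coeff i ∈ J) (i : ℕ) : G.coeff i ∈ J := by
  induction i with
  | zero => exact h0
  | succ i ih =>
    by_cases hi : i + 1 ≤ d
    · have h1 := h i
      have h2 : (C c * X * derivative G).coeff i ∈ J := by
        rw [mul_assoc, coeff_C_mul]
        apply J.mul_mem_left
        rcases i with _ | i
        · simp
        · rw [coeff_X_mul, coeff_derivative]
          exact J.mul_mem_right _ ih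
      rw [add_mul, one_mul, coeff_sub, coeff_add, coeff_mapC hDer, coeff_derivative] at h1
      have h3 : G.coeff (i + 1) * ((i : S) + 1) ∈ J := by
        have h4 := J.sub_mem (J.sub_mem (hD _ ih) h1) h2
        convert h4 using 1
        ring
      have h5 : (((i + 1 : ℕ) : F)) ≠ 0 := hd _ (by omega) hi
      have h6 := J.mul_mem_left (algebraMap F S (((i + 1 : ℕ) : F))⁻¹) h3
      have h7 : algebraMap F S (((i + 1 : ℕ) : F))⁻¹ * ((i : S) + 1) = 1 := by
        rw [show ((i : S) + 1) = algebraMap F S ((i + 1 : ℕ) : F) by simp, ← map_mul,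
          inv_mul_cancel₀ h5, map_one]
      convert h6 using 1
      rw [mul_left_comm, h7, mul_one]
    · rw [coeff_eq_zero_of_natDegree_lt (by omega)]
      exact J.zero_mem

lemma pderiv_comm' {F : Type*} [Field F] (i j : Fin 3) (f : R3 F) :
    MvPolynomial.pderiv i (MvPolynomial.pderiv j f) =
      MvPolynomial.pderiv j (MvPolynomial.pderiv i f) := by
  have h : ⁅MvPolynomial.pderiv (R := F) i, MvPolynomial.pderiv (R := F) j⁆ = 0 := by
    apply MvPolynomial.derivation_ext
    intro k
    rw [Derivation.commutator_apply]
    classical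
    simp only [MvPolynomial.pderiv_X, Pi.single_apply]
    split_ifs <;> simp
  have h2 := congrArg (fun D => D f) h
  simp only [Derivation.commutator_apply] at h2
  exact sub_eq_zero.mp h2

/-- Degenerate second fundamental form in direction `j`. -/
def GG {F : Type*} [Field F] (j : Fin 3) (f : R3 F) : R3 F :=
  MvPolynomial.pderiv 0 (MvPolynomial.pderiv 0 f) * MvPolynomial.pderiv j f ^ 2
    - 2 * MvPolynomial.pderiv 0 (MvPolynomial.pderiv j f) * MvPolynomial.pderiv 0 f *
      MvPolynomial.pderiv j f
    + MvPolynomial.pderiv j (MvPolynomial.pderiv j f) * MvPolynomial.pderiv 0 f ^ 2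

def VV {F : Type*} [Field F] (j : Fin 3) (f : R3 F) : Derivation F (R3 F) (R3 F) :=
  (MvPolynomial.pderiv 0 f) • MvPolynomial.pderiv j - (MvPolynomial.pderiv j f) • MvPolynomial.pderiv 0

lemma VV_apply {F : Type*} [Field F] (j : Fin 3) (f g : R3 F) :
    VV j f g = MvPolynomial.pderiv 0 f * MvPolynomial.pderiv j g -
      MvPolynomial.pderiv j f * MvPolynomial.pderiv 0 g := by
  simp [VV]

lemma VV_self {F : Type*} [Field F] (j : Fin 3) (f : R3 F) : VV j f f = 0 := by
  rw [VV_apply]; ring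

def EE {F : Type*} [Field F] (f : R3 F) : R3 F :=
  VV 1 f (MvPolynomial.pderiv 0 f) * MvPolynomial.pderiv 2 f
    - MvPolynomial.pderiv 0 f * VV 1 f (MvPolynomial.pderiv 2 f)

lemma GG_eq {F : Type*} [Field F] (j : Fin 3) (f : R3 F) :
    MvPolynomial.pderiv j f * VV j f (MvPolynomial.pderiv 0 f)
      - MvPolynomial.pderiv 0 f * VV j f (MvPolynomial.pderiv j f) = - GG j f := by
  rw [VV_apply, VV_apply, GG, pderiv_comm' j 0 f]; ring

lemma EE_eq {F : Type*} [Field F] (f : R3 F) :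
    MvPolynomial.pderiv 0 f * VV 1 f (EE f) - 3 * VV 1 f (MvPolynomial.pderiv 0 f) * EE f
      = - (MvPolynomial.pderiv 0 f * VV 2 f (GG 1 f)
        - 3 * VV 2 f (MvPolynomial.pderiv 0 f) * GG 1 f) := by
  have c1 := pderiv_comm' 1 0 f
  have c2 := pderiv_comm' 2 0 f
  have c3 := pderiv_comm' 2 1 f
  simp only [VV_apply, GG, EE, map_add, map_sub, Derivation.leibniz, smul_eq_mul,
    Derivation.leibniz_pow, c1, c2, c3, pderiv_comm' 1 0 (MvPolynomial.pderiv _ _),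
    pderiv_comm' 2 0 (MvPolynomial.pderiv _ _), pderiv_comm' 2 1 (MvPolynomial.pderiv _ _)]
  have t2 : ∀ i : Fin 3, MvPolynomial.pderiv i (2 : R3 F) = 0 := fun i =>
    Derivation.map_natCast (MvPolynomial.pderiv i) 2
  simp only [t2]
  simp only [nsmul_eq_mul, Nat.cast_ofNat]
  ring

lemma VV_const {F : Type*} [Field F] (j : Fin 3) (f : R3 F) (c : F) :
    VV j f (algebraMap F (R3 F) c) = 0 := Derivation.map_algebraMap _ _

lemma VV_span {F : Type*} [Field F] (j : Fin 3) (f a : R3 F) (ha : a ∈ Ideal.span {f}) :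
    VV j f a ∈ Ideal.span {f} := by
  rw [Ideal.mem_span_singleton] at ha ⊢
  obtain ⟨b, rfl⟩ := ha
  rw [Derivation.leibniz, VV_self]
  simp

lemma VV_X0 {F : Type*} [Field F] {j : Fin 3} (hj : j ≠ 0) (f : R3 F) :
    VV j f (MvPolynomial.X 0) = - MvPolynomial.pderiv j f := by
  rw [VV_apply, MvPolynomial.pderiv_X_self, MvPolynomial.pderiv_X_of_ne hj.symm]; ring

lemma VV_Xj {F : Type*} [Field F] {j : Fin 3} (hj : j ≠ 0) (f : R3 F) :
    VV j f (MvPolynomial.X j) = MvPolynomial.pderiv 0 f := by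
  rw [VV_apply, MvPolynomial.pderiv_X_self, MvPolynomial.pderiv_X_of_ne hj]; ring

lemma VV_Xk {F : Type*} [Field F] {j k : Fin 3} (hk : k ≠ 0) (hjk : k ≠ j) (f : R3 F) :
    VV j f (MvPolynomial.X k) = 0 := by
  rw [VV_apply, MvPolynomial.pderiv_X_of_ne hk, MvPolynomial.pderiv_X_of_ne hjk]; ring

lemma C_mem {S : Type*} [CommRing S] {J : Ideal S} {a : S} (h : a ∈ J) (q : S[X]) :
    C a * q ∈ Ideal.map (C : S →+* S[X]) J :=
  Ideal.mul_mem_right _ _ (Ideal.mem_map_of_mem _ h)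

def DD {S : Type*} [CommRing S] (D0 : S → S) (c : S[X]) (q : S[X]) : S[X] :=
  mapC D0 q - c * derivative q

lemma DD_isDer {S : Type*} [CommRing S] {D0 : S → S} (h : IsDer D0) (c : S[X]) :
    IsDer (DD D0 c) := by
  constructor
  · intro a b
    simp only [DD, (mapC_isDer h).add, derivative_add]; ring
  · intro a b
    simp only [DD, (mapC_isDer h).mul, derivative_mul]; ring

def v1 {F : Type*} [Field F] (f : R3 F) : Fin 3 → (R3 F)[X] :=
  ![C (MvPolynomial.X 0) - C (MvPolynomial.pderiv 0 f ^ 2 * MvPolynomial.pderiv 2 f) * X,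
    C (MvPolynomial.X 1), C (MvPolynomial.X 2) + C (MvPolynomial.pderiv 0 f ^ 3) * X]

lemma step1 {F : Type*} [Field F] (f : R3 F)
    (hd : ∀ i : ℕ, 0 < i → i ≤ f.totalDegree → (i : F) ≠ 0)
    (h2 : f ∣ GG 2 f) :
    MvPolynomial.aeval (v1 f) f ∈ Ideal.map (C : R3 F →+* (R3 F)[X]) (Ideal.span {f}) := by
  set u := MvPolynomial.pderiv 0 f with hu
  set fz := MvPolynomial.pderiv 2 f with hfz
  set w := VV 2 f u with hw
  let D0 : R3 F → R3 F := fun a => u ^ 2 * VV 2 f a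
  have hD0 : IsDer D0 := IsDer.of_derivation _ _
  have D0a : ∀ a, D0 a = u ^ 2 * VV 2 f a := fun a => rfl
  let c := (1 + C (3 * u * w) * X)
  have hD := DD_isDer hD0 c
  have hM := mapC_isDer hD0
  have key : DD D0 c (MvPolynomial.aeval (v1 f) f) ∈
      Ideal.map (C : R3 F →+* (R3 F)[X]) (Ideal.span {f}) := by
    apply chain_ideal (F := F) hD
    · intro t
      rw [IsScalarTower.algebraMap_apply F (R3 F) (R3 F)[X], ← Polynomial.C_eq_algebraMap, DD,
        mapC_C hD0, D0a, VV_const]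
      simp
    · intro i
      fin_cases i
      · have : DD D0 c (v1 f 0) = C (u ^ 3 * (fz * VV 2 f u - u * VV 2 f fz)) * X := by
          simp only [v1, Matrix.cons_val_zero, ← hu, ← hfz, DD, c]
          simp only [hM.sub, hM.mul, mapC_C hD0, mapC_X hD0, D0a, VV_X0 (j := 2) (by decide),
            smul_eq_mul, derivative_C, derivative_mul, derivative_X, derivative_sub,
            Derivation.leibniz, Derivation.leibniz_pow, ← hfz, ← hw]
          simp only [map_mul, map_add, map_neg, map_sub, map_pow, nsmul_eq_mul, map_ofNat,
            map_natCast]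
          push_cast
          ring
        show DD D0 c (v1 f 0) ∈ _
        rw [this]
        apply C_mem
        apply Ideal.mul_mem_left
        rw [hu, hfz, GG_eq, neg_mem_iff]
        exact Ideal.mem_span_singleton.mpr h2
      · have : DD D0 c (v1 f 1) = 0 := by
          simp only [v1, Matrix.cons_val_one, DD]
          simp [mapC_C hD0, D0a, VV_Xk (j := 2) (k := 1)]
        show DD D0 c (v1 f 1) ∈ _
        rw [this]; exact Ideal.zero_mem _
      · have : DD D0 c (v1 f 2) = 0 := by
          simp only [v1, Matrix.cons_val, ← hu, DD, c]
          simp only [hM.add, hM.mul, mapC_C hD0, mapC_X hD0, D0a, VV_Xj (j := 2) (by decide),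
            smul_eq_mul, derivative_C, derivative_mul, derivative_X, derivative_add,
            Derivation.leibniz, Derivation.leibniz_pow, ← hu, ← hw]
          simp only [map_mul, map_add, map_neg, map_sub, map_pow, nsmul_eq_mul, map_ofNat,
            map_natCast]
          push_cast
          ring
        show DD D0 c (v1 f 2) ∈ _
        rw [this]; exact Ideal.zero_mem _
  rw [Ideal.mem_map_C_iff]
  refine coeff_prop (F := F) hD0 _ ?_ (3 * u * w) _ f.totalDegree ?_ hd ?_ ?_
  · intro a ha
    rw [D0a]
    exact Ideal.mul_mem_left _ _ (VV_span _ _ _ ha)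
  · apply natDegree_aeval_le
    intro i
    fin_cases i <;> simp only [v1] <;> simp <;> compute_degree
  · have : (MvPolynomial.aeval (v1 f) f).coeff 0 = f := by
      rw [coeff_zero_eq_eval_zero]
      have h := MvPolynomial.map_aeval (v1 f) (evalRingHom (0 : R3 F)) f
      have h5 : (evalRingHom (0 : R3 F)) (MvPolynomial.aeval (v1 f) f) =
        eval 0 (MvPolynomial.aeval (v1 f) f) := rfl
      rw [← h5, h]
      conv_rhs => rw [← MvPolynomial.aeval_X_left_apply (R := F) f]
      rw [MvPolynomial.aeval_def]
      have e1 : ((evalRingHom (0 : R3 F)).comp (algebraMap F (R3 F)[X])) = algebraMap F (R3 F) := by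
        ext c
        simp [IsScalarTower.algebraMap_apply F (R3 F) (R3 F)[X], ← Polynomial.C_eq_algebraMap]
      rw [e1]
      have e2 : (fun i => (evalRingHom (0 : R3 F)) (v1 f i)) = MvPolynomial.X := by
        funext i
        fin_cases i <;> simp [v1]
      rw [← e2]
      rfl
    rw [this]
    exact Ideal.mem_span_singleton_self f
  · intro i
    exact Ideal.mem_map_C_iff.mp key i

lemma coeff_zero_aeval {F S : Type*} [Field F] [CommRing S] [Algebra F S] (v : Fin 3 → S[X])
    (h : R3 F) : (MvPolynomial.aeval v h).coeff 0 = MvPolynomial.aeval (fun i => (v i).coeff 0) h := by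
  induction h using MvPolynomial.induction_on with
  | C a => simp [IsScalarTower.algebraMap_apply F S S[X], ← Polynomial.C_eq_algebraMap]
  | add p q hp hq => simp [hp, hq]
  | mul_X p i hp => simp [hp, mul_coeff_zero]

def v2 {F : Type*} [Field F] (f : R3 F) : Fin 3 → (R3 F)[X][X] :=
  ![C (C (MvPolynomial.X 0) - C (MvPolynomial.pderiv 0 f ^ 2 * MvPolynomial.pderiv 2 f) * X)
     - C (C (MvPolynomial.pderiv 0 f ^ 2 * MvPolynomial.pderiv 1 f)) * X
     + C (C (MvPolynomial.pderiv 0 f ^ 3 * EE f) * X) * X,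
    C (C (MvPolynomial.X 1)) + C (C (MvPolynomial.pderiv 0 f ^ 3)) * X,
    C (C (MvPolynomial.X 2) + C (MvPolynomial.pderiv 0 f ^ 3) * X)]

lemma step2 {F : Type*} [Field F] (f : R3 F)
    (hd : ∀ i : ℕ, 0 < i → i ≤ f.totalDegree → (i : F) ≠ 0)
    (h1 : f ∣ GG 1 f) (h2 : f ∣ GG 2 f) :
    MvPolynomial.aeval (v2 f) f ∈ Ideal.map (C : (R3 F)[X] →+* (R3 F)[X][X])
      (Ideal.map (C : R3 F →+* (R3 F)[X]) (Ideal.span {f})) := by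
  set u := MvPolynomial.pderiv 0 f with hu
  set fz := MvPolynomial.pderiv 2 f with hfz
  set fy := MvPolynomial.pderiv 1 f with hfy
  set w := VV 1 f u with hw
  set E := EE f with hE
  let D0 : R3 F → R3 F := fun a => u ^ 2 * VV 1 f a
  have hD0 : IsDer D0 := IsDer.of_derivation _ _
  have D0a : ∀ a, D0 a = u ^ 2 * VV 1 f a := fun a => rfl
  have hM := mapC_isDer hD0
  let c0 : (R3 F)[X] := C (3 * u * w) * X
  let D1 := DD D0 c0
  have hD1 : IsDer D1 := DD_isDer hD0 c0
  have D1a : ∀ a, D1 a = mapC D0 a - c0 * derivative a := fun a => rfl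
  let c : (R3 F)[X][X] := 1 + C (C (3 * u * w)) * X
  have hD := DD_isDer hD1 c
  have hM1 := mapC_isDer hD1
  have key : DD D1 c (MvPolynomial.aeval (v2 f) f) ∈
      Ideal.map (C : (R3 F)[X] →+* (R3 F)[X][X])
      (Ideal.map (C : R3 F →+* (R3 F)[X]) (Ideal.span {f})) := by
    apply chain_ideal (F := F) hD
    · intro t
      rw [IsScalarTower.algebraMap_apply F (R3 F)[X] (R3 F)[X][X], ← Polynomial.C_eq_algebraMap, DD,
        mapC_C hD1, IsScalarTower.algebraMap_apply F (R3 F) (R3 F)[X], ← Polynomial.C_eq_algebraMap,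
        D1a, mapC_C hD0, D0a, VV_const]
      simp
    · intro i
      fin_cases i
      · have : DD D1 c (v2 f 0) = C (C (u ^ 3 * (fy * VV 1 f u - u * VV 1 f fy)) * 1) * X
            + C (C (u ^ 4 * (u * VV 1 f E - 3 * w * E)) * X) * X := by
          have hEf : E = w * fz - u * VV 1 f fz := rfl
          have hV : VV 1 f fz * u = w * fz - E := by rw [hEf]; ring
          have hV' : C (C (VV 1 f fz)) * C (C u) = C (C w) * C (C fz) - C (C E) := by
            rw [← map_mul, ← map_mul, hV]; simp
          simp only [v2, Matrix.cons_val_zero, ← hu, ← hfz, ← hfy, ← hE, DD, c]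
          simp only [hM1.sub, hM1.add, hM1.mul, mapC_C hD1, mapC_X hD1, D1a, hM.sub, hM.mul, mapC_C hD0,
            mapC_X hD0, D0a, VV_X0 (j := 1) (by decide), derivative_add,
            smul_eq_mul, derivative_C, derivative_mul, derivative_X, derivative_sub,
            Derivation.leibniz, Derivation.leibniz_pow, ← hfz, ← hfy, ← hw, c0]
          simp only [map_mul, map_add, map_neg, map_sub, map_pow, nsmul_eq_mul, map_ofNat,
            map_natCast, map_one, map_zero]
          push_cast
          linear_combination (-(C (C u))^3 * C X) * hV'
        show DD D1 c (v2 f 0) ∈ _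
        rw [this]
        apply Ideal.add_mem
        · apply C_mem
          apply C_mem
          apply Ideal.mul_mem_left
          rw [hu, hfy, GG_eq, neg_mem_iff]
          exact Ideal.mem_span_singleton.mpr h1
        · apply C_mem
          apply C_mem
          apply Ideal.mul_mem_left
          rw [hu, hw, hE, EE_eq, neg_mem_iff]
          apply Ideal.sub_mem
          · exact Ideal.mul_mem_left _ _ (VV_span _ _ _ (Ideal.mem_span_singleton.mpr h1))
          · exact Ideal.mul_mem_left _ _ (Ideal.mem_span_singleton.mpr h1)
      · have : DD D1 c (v2 f 1) = 0 := by
          simp only [v2, Matrix.cons_val_one, Matrix.cons_val_zero, DD, c, ← hu]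
          simp only [hM1.sub, hM1.add, hM1.mul, mapC_C hD1, mapC_X hD1, D1a, hM.sub, hM.mul, mapC_C hD0,
            mapC_X hD0, D0a, VV_Xj (j := 1) (by decide), derivative_add,
            smul_eq_mul, derivative_C, derivative_mul, derivative_X, derivative_sub,
            Derivation.leibniz, Derivation.leibniz_pow, ← hfz, ← hfy, ← hw, ← hu, c0]
          simp only [map_mul, map_add, map_neg, map_sub, map_pow, nsmul_eq_mul, map_ofNat,
            map_natCast, map_one, map_zero]
          push_cast
          ring
        show DD D1 c (v2 f 1) ∈ _
        rw [this]; exact Ideal.zero_mem _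
      · have : DD D1 c (v2 f 2) = 0 := by
          simp only [v2, Matrix.cons_val, ← hu, DD, c]
          simp only [hM1.sub, hM1.add, hM1.mul, mapC_C hD1, mapC_X hD1, D1a, hM.sub, hM.add, hM.mul,
            mapC_C hD0,
            mapC_X hD0, D0a, VV_Xk (j := 1) (k := 2) (by decide) (by decide), derivative_add,
            smul_eq_mul, derivative_C, derivative_mul, derivative_X, derivative_sub,
            Derivation.leibniz, Derivation.leibniz_pow, ← hfz, ← hfy, ← hw, ← hu, c0]
          simp only [map_mul, map_add, map_neg, map_sub, map_pow, nsmul_eq_mul, map_ofNat,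
            map_natCast, map_one, map_zero]
          push_cast
          ring
        show DD D1 c (v2 f 2) ∈ _
        rw [this]; exact Ideal.zero_mem _
  rw [Ideal.mem_map_C_iff]
  refine coeff_prop (F := F) hD1 _ ?_ (C (3 * u * w)) _ f.totalDegree ?_ hd ?_ ?_
  · intro a ha
    rw [Ideal.mem_map_C_iff] at ha ⊢
    intro i
    rw [D1a, coeff_sub, coeff_mapC hD0, D0a]
    apply Ideal.sub_mem
    · exact Ideal.mul_mem_left _ _ (VV_span _ _ _ (ha i))
    · simp only [c0]
      rw [mul_assoc, coeff_C_mul]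
      apply Ideal.mul_mem_left
      rcases i with _ | i
      · simp
      · rw [coeff_X_mul, coeff_derivative]
        exact Ideal.mul_mem_right _ _ (ha _)
  · apply natDegree_aeval_le
    intro i
    fin_cases i
    · simp only [v2]; simp only [Fin.zero_eta, Matrix.cons_val_zero]; compute_degree
    · simp only [v2]; simp only [Fin.mk_one, Matrix.cons_val_one, Matrix.cons_val_zero]; compute_degree
    · simp only [v2]; simp only [Fin.reduceFinMk, Matrix.cons_val]; rw [natDegree_C]; exact zero_le_one
  · rw [coeff_zero_aeval]
    have : (fun i => (v2 f i).coeff 0) = v1 f := by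
      funext i
      fin_cases i <;> simp [v2, v1, coeff_zero_eq_eval_zero]
    rw [this]
    exact step1 f hd h2
  · intro i
    exact Ideal.mem_map_C_iff.mp key i

/-- Evaluate both levels. -/
lemma quadric {F : Type*} [Field F] [Infinite F] (f : R3 F) (hf : Irreducible f)
    (hd : ∀ i : ℕ, 0 < i → i ≤ f.totalDegree → (i : F) ≠ 0)
    (h1 : f ∣ GG 1 f) (h2 : f ∣ GG 2 f) (P : Fin 3 → F) (h0 : MvPolynomial.eval P f = 0)
    (hx : MvPolynomial.eval P (MvPolynomial.pderiv 0 f) ≠ 0) :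
    ∃ ε β γ δ : F, f ∣ MvPolynomial.X 0 - (MvPolynomial.C ε * MvPolynomial.X 1 * MvPolynomial.X 2
      + MvPolynomial.C β * MvPolynomial.X 1 + MvPolynomial.C γ * MvPolynomial.X 2
      + MvPolynomial.C δ) := by
  have hs := step2 f hd h1 h2
  set u := MvPolynomial.eval P (MvPolynomial.pderiv 0 f) with hu
  set a := MvPolynomial.eval P (MvPolynomial.pderiv 1 f) with ha
  set b := MvPolynomial.eval P (MvPolynomial.pderiv 2 f) with hb
  set e := MvPolynomial.eval P (EE f) with he
  have van : ∀ s t : F, MvPolynomial.eval ![P 0 - u ^ 2 * b * t - u ^ 2 * a * s + u ^ 3 * e * t * s,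
      P 1 + u ^ 3 * s, P 2 + u ^ 3 * t] f = 0 := by
    intro s t
    let φ : (R3 F)[X] →+* F := Polynomial.eval₂RingHom (MvPolynomial.eval P) t
    let ψ : (R3 F)[X][X] →+* F := Polynomial.eval₂RingHom φ s
    have k1 : ψ (MvPolynomial.aeval (v2 f) f) = 0 := by
      have : Ideal.map (C : (R3 F)[X] →+* (R3 F)[X][X])
        (Ideal.map (C : R3 F →+* (R3 F)[X]) (Ideal.span {f})) ≤ RingHom.ker ψ := by
        rw [Ideal.map_le_iff_le_comap, Ideal.map_le_iff_le_comap, Ideal.span_singleton_le_iff_mem]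
        simp [RingHom.mem_ker, ψ, φ, h0]
      exact this hs
    have k2 := (MvPolynomial.map_aeval (v2 f) ψ f).symm.trans k1
    rw [← k2]
    have e1 : ψ.comp (algebraMap F (R3 F)[X][X]) = RingHom.id F := by
      ext x
      simp [IsScalarTower.algebraMap_apply F (R3 F)[X] (R3 F)[X][X], ← Polynomial.C_eq_algebraMap,
        IsScalarTower.algebraMap_apply F (R3 F) (R3 F)[X], ψ, φ]
    rw [e1]
    have e2 : (fun i => ψ (v2 f i)) = ![P 0 - u ^ 2 * b * t - u ^ 2 * a * s + u ^ 3 * e * t * s,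
      P 1 + u ^ 3 * s, P 2 + u ^ 3 * t] := by
      funext i
      fin_cases i
      · simp [v2, ψ, φ, hu, ha, hb, he, eval₂_pow]
      · simp [v2, ψ, φ, hu, ha, hb, he, eval₂_pow]
      · simp [v2, ψ, φ, hu, ha, hb, he, eval₂_pow]
    rw [e2]; rfl
  set ε := e / u ^ 3
  set β := - (a / u) - P 2 * ε
  set γ := - (b / u) - P 1 * ε
  set δ := P 0 + (a / u) * P 1 + (b / u) * P 2 + ε * P 1 * P 2
  refine ⟨ε, β, γ, δ, ?_⟩
  set φ : R3 F := (MvPolynomial.C ε * MvPolynomial.X 1 * MvPolynomial.X 2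
      + MvPolynomial.C β * MvPolynomial.X 1 + MvPolynomial.C γ * MvPolynomial.X 2
      + MvPolynomial.C δ) with hφ
  have hz : MvPolynomial.aeval ![φ, MvPolynomial.X 1, MvPolynomial.X 2] f = (0 : R3 F) := by
    apply MvPolynomial.funext
    intro Q
    rw [map_zero, MvPolynomial.map_aeval, ← van ((Q 1 - P 1) / u ^ 3) ((Q 2 - P 2) / u ^ 3)]
    have e1 : (MvPolynomial.eval Q).comp (algebraMap F (R3 F)) = RingHom.id F := by
      ext x
      simp
    rw [e1]
    have e2 : (fun i => MvPolynomial.eval Q ((![φ, MvPolynomial.X 1, MvPolynomial.X 2] : Fin 3 → R3 F) i)) =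
       ![P 0 - u ^ 2 * b * ((Q 2 - P 2) / u ^ 3) - u ^ 2 * a * ((Q 1 - P 1) / u ^ 3) +
          u ^ 3 * e * ((Q 2 - P 2) / u ^ 3) * ((Q 1 - P 1) / u ^ 3),
        P 1 + u ^ 3 * ((Q 1 - P 1) / u ^ 3), P 2 + u ^ 3 * ((Q 2 - P 2) / u ^ 3)] := by
      funext i
      fin_cases i
      · simp [hφ, ε, β, γ, δ]
        field_simp
        ring
      · simp; field_simp; ring
      · simp; field_simp; ring
    rw [e2]; rfl
  have hdv : (MvPolynomial.X 0 - φ) ∣ f := by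
    rw [← Ideal.mem_span_singleton, ← Ideal.Quotient.eq_zero_iff_mem]
    set I : Ideal (R3 F) := Ideal.span {MvPolynomial.X 0 - φ}
    have : Ideal.Quotient.mk I f = Ideal.Quotient.mk I
        (MvPolynomial.aeval ![φ, MvPolynomial.X 1, MvPolynomial.X 2] f) := by
      conv_lhs => rw [← MvPolynomial.aeval_X_left_apply (R := F) f]
      rw [MvPolynomial.map_aeval, MvPolynomial.map_aeval]
      congr 1
      congr 1
      funext i
      fin_cases i
      · simp only [Fin.zero_eta, Matrix.cons_val_zero]
        rw [Ideal.Quotient.eq]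
        exact Ideal.mem_span_singleton_self _
      · simp
      · simp
    rw [this, hz, map_zero]
  have hnu : ¬ IsUnit (MvPolynomial.X 0 - φ) := by
    intro h
    have h3 := h.map (MvPolynomial.eval P)
    have : MvPolynomial.eval P (MvPolynomial.X 0 - φ) = 0 := by
      simp [hφ, ε, β, γ, δ]
      ring
    rw [this] at h3
    exact not_isUnit_zero h3
  exact ((hf.dvd_iff.mp hdv).resolve_left hnu).dvd

end
end SP


namespace SP
open Polynomial

noncomputable section

lemma resultant_ne_zero_aux {R : Type*} [CommRing R] [IsDomain R] [UniqueFactorizationMonoid R]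
    (p q : R[X]) (hp : Irreducible p) (hpd : p.natDegree ≠ 0) (hq : ¬ p ∣ q) :
    resultant p q ≠ 0 := by
  intro h0
  let K := FractionRing R
  have hinj : Function.Injective (algebraMap R K) := IsFractionRing.injective R K
  have hprim := hp.isPrimitive hpd
  have hirr := (hprim.irreducible_iff_irreducible_map_fraction_map (K := K)).mp hp
  have h1 : resultant (p.map (algebraMap R K)) (q.map (algebraMap R K)) = 0 := by
    rw [natDegree_map_eq_of_injective hinj, natDegree_map_eq_of_injective hinj, resultant_map_map,
      h0, map_zero]
  rw [resultant_eq_zero_iff, hirr.coprime_iff_not_dvd, not_not] at h1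
  obtain ⟨s, hs⟩ := h1.2
  obtain ⟨b, hb, hbs⟩ := IsLocalization.integerNormalization_spec (nonZeroDivisors R) s
  have hb0 : b ≠ 0 := nonZeroDivisors.ne_zero hb
  have h2 : C b * q = p * IsLocalization.integerNormalization (nonZeroDivisors R) s := by
    apply Polynomial.map_injective _ hinj
    rw [Polynomial.map_mul, Polynomial.map_mul, hs, hbs, map_C, Algebra.smul_def,
      Polynomial.algebraMap_apply]
    ring
  have h3 : p ∣ C b * q := ⟨_, h2⟩
  rcases hp.prime.dvd_or_dvd h3 with h4 | h4
  · have := natDegree_le_of_dvd h4 (by simpa using hb0)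
    rw [natDegree_C] at this
    omega
  · exact hq h4

lemma totalDegree_resultant {F : Type*} [Field F] {n : ℕ} (p q : (MvPolynomial (Fin n) F)[X])
    (a b : ℕ) (hp : ∀ i, (p.coeff i).totalDegree ≤ a) (hq : ∀ i, (q.coeff i).totalDegree ≤ b) :
    (resultant p q).totalDegree ≤ p.natDegree * b + q.natDegree * a := by
  rw [resultant, Matrix.det_apply]
  apply MvPolynomial.totalDegree_finsetSum_le
  intro σ _
  have h1 : (Equiv.Perm.sign σ • ∏ i, sylvester p q p.natDegree q.natDegree (σ i) i).totalDegree ≤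
      (∏ i, sylvester p q p.natDegree q.natDegree (σ i) i).totalDegree := by
    rcases Int.units_eq_one_or (Equiv.Perm.sign σ) with h | h
    · rw [h, one_smul]
    · rw [h, Units.neg_smul, one_smul, MvPolynomial.totalDegree_neg]
  refine h1.trans ((MvPolynomial.totalDegree_finsetProd _ _).trans ?_)
  rw [Fin.sum_univ_add]
  apply add_le_add
  · calc _ ≤ ∑ i : Fin p.natDegree, b := by
          apply Finset.sum_le_sum
          intro i _
          simp only [sylvester, Matrix.of_apply, Fin.addCases_left]
          split_ifs
          · exact hq _
          · simp
      _ = _ := by simp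
  · calc _ ≤ ∑ i : Fin q.natDegree, a := by
          apply Finset.sum_le_sum
          intro i _
          simp only [sylvester, Matrix.of_apply, Fin.addCases_right]
          split_ifs
          · exact hp _
          · simp
      _ = _ := by simp

lemma coeff_fse_totalDegree {F : Type*} [Field F] (f : R3 F) (i : ℕ) :
    ((MvPolynomial.finSuccEquiv F 2 f).coeff i).totalDegree ≤ f.totalDegree := by
  by_cases h : (MvPolynomial.finSuccEquiv F 2 f).coeff i = 0
  · rw [h]; simp
  · have := MvPolynomial.totalDegree_coeff_finSuccEquiv_add_le f i h
    omega

lemma elim {F : Type*} [Field F] (f g : R3 F) (hf : Irreducible f) (hfg : ¬ f ∣ g) :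
    ∃ r : MvPolynomial (Fin 2) F, r ≠ 0 ∧ r.totalDegree ≤ 2 * f.totalDegree * g.totalDegree ∧
      ∀ x y z, MvPolynomial.eval ![x, y, z] f = 0 → MvPolynomial.eval ![x, y, z] g = 0 →
        MvPolynomial.eval ![y, z] r = 0 := by
  have ev : ∀ (x y z : F) (h : R3 F), MvPolynomial.eval ![x, y, z] h =
    Polynomial.eval x (Polynomial.map (MvPolynomial.eval ![y, z]) (MvPolynomial.finSuccEquiv F 2 h)) :=
    fun x y z h => MvPolynomial.eval_eq_eval_mv_eval' _ _ _
  have hg0 : g ≠ 0 := fun h => hfg (h ▸ dvd_zero f)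
  by_cases hg : g.totalDegree = 0
  · rw [MvPolynomial.totalDegree_eq_zero_iff_eq_C] at hg
    have hc : MvPolynomial.coeff 0 g ≠ 0 := by
      intro h; rw [h, map_zero] at hg; exact hg0 hg
    refine ⟨1, one_ne_zero, by simp, ?_⟩
    intro x y z _ h
    rw [hg, MvPolynomial.eval_C] at h
    exact absurd h hc
  set p := MvPolynomial.finSuccEquiv F 2 f with hp
  set q := MvPolynomial.finSuccEquiv F 2 g with hq
  have hpirr : Irreducible p := (MulEquiv.irreducible_iff (MvPolynomial.finSuccEquiv F 2)).mpr hf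
  have hpq : ¬ p ∣ q := by
    intro h
    exact hfg ((map_dvd_iff (MvPolynomial.finSuccEquiv F 2)).mp h)
  by_cases hpd : p.natDegree = 0
  · refine ⟨p.coeff 0, ?_, ?_, ?_⟩
    · intro h
      apply hpirr.ne_zero
      rw [eq_C_of_natDegree_eq_zero hpd, h, map_zero]
    · refine (coeff_fse_totalDegree f 0).trans ?_
      have : 1 ≤ g.totalDegree := Nat.one_le_iff_ne_zero.mpr hg
      nlinarith
    · intro x y z h _
      rw [ev, ← hp, eq_C_of_natDegree_eq_zero hpd] at h
      simpa using h
  · refine ⟨resultant p q, resultant_ne_zero_aux p q hpirr hpd hpq, ?_, ?_⟩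
    · refine (totalDegree_resultant p q f.totalDegree g.totalDegree (coeff_fse_totalDegree f)
        (coeff_fse_totalDegree g)).trans ?_
      have h1 : p.natDegree ≤ f.totalDegree := by
        rw [hp, MvPolynomial.natDegree_finSuccEquiv]; exact MvPolynomial.degreeOf_le_totalDegree _ _
      have h2 : q.natDegree ≤ g.totalDegree := by
        rw [hq, MvPolynomial.natDegree_finSuccEquiv]; exact MvPolynomial.degreeOf_le_totalDegree _ _
      nlinarith
    · intro x y z h1 h2
      obtain ⟨a, b, -, -, hab⟩ := exists_mul_add_mul_eq_C_resultant p q le_rfl le_rfl (Or.inl hpd)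
      rw [ev, ← hp] at h1
      rw [ev, ← hq] at h2
      have := congrArg (fun t => Polynomial.eval x (Polynomial.map (MvPolynomial.eval ![y, z]) t)) hab
      simp only [Polynomial.map_add, Polynomial.map_mul, eval_add, eval_mul, h1, h2, map_C, eval_C,
        zero_mul, add_zero] at this
      exact this.symm

/-- Parametrisation of the two kinds of lines. -/
def pt1 {F : Type*} [Field F] (l : F × F × F) (t : F) : Fin 3 → F := ![t, l.1 * t + l.2.1, l.2.2]
def pt2 {F : Type*} [Field F] (l : F × F × F) (t : F) : Fin 3 → F := ![t, l.1, l.2.1 * t + l.2.2]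

def Van {F : Type*} [Field F] (c : F → Fin 3 → F) (f : R3 F) : Prop :=
  ∀ t, MvPolynomial.eval (c t) f = 0

lemma card_le_of_eval2 {F : Type*} [Field F] [Infinite F] (r : MvPolynomial (Fin 2) F) (hr : r ≠ 0)
    (Y : Finset F) (h : ∀ y ∈ Y, ∀ z, MvPolynomial.eval ![y, z] r = 0) : Y.card ≤ r.totalDegree := by
  classical
  have ev : ∀ z0 x : F, (MvPolynomial.aeval ![(X : F[X]), C z0] r).eval x
      = MvPolynomial.eval ![x, z0] r := by
    intro z0 x
    rw [← Polynomial.coe_evalRingHom, MvPolynomial.map_aeval]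
    have e1 : (evalRingHom x).comp (algebraMap F F[X]) = RingHom.id F := by ext; simp
    rw [e1]
    have e2 : (fun i => evalRingHom x (![(X : F[X]), C z0] i)) = ![x, z0] := by
      funext i; fin_cases i <;> simp
    rw [e2]; rfl
  obtain ⟨z0, hz⟩ : ∃ z0 : F, MvPolynomial.aeval ![(X : F[X]), C z0] r ≠ 0 := by
    by_contra hcon
    push Not at hcon
    apply hr
    apply MvPolynomial.funext
    intro Q
    have := ev (Q 1) (Q 0)
    rw [hcon, eval_zero] at this
    rw [map_zero]
    have e3 : Q = ![Q 0, Q 1] := by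
      funext i
      fin_cases i <;> rfl
    rw [e3]
    exact this.symm
  calc Y.card ≤ (MvPolynomial.aeval ![(X : F[X]), C z0] r).roots.toFinset.card := by
        apply Finset.card_le_card
        intro y hy
        rw [Multiset.mem_toFinset, mem_roots hz, IsRoot, ev]
        exact h y hy z0
    _ ≤ _ := Multiset.toFinset_card_le _
    _ ≤ _ := card_roots' _
    _ ≤ _ := by
        apply natDegree_aeval_le (S := F)
        intro i
        fin_cases i <;> simp

lemma bezout {F : Type*} [Field F] [Infinite F] (f g : R3 F) (hf : Irreducible f) (hfg : ¬ f ∣ g)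
    (T : Finset (F × F × F)) (hinj : Set.InjOn (fun l : F × F × F => l.1) T)
    (hs : ∀ l ∈ T, l.2.1 ≠ 0) (h1 : ∀ l ∈ T, Van (pt2 l) f) (h2 : ∀ l ∈ T, Van (pt2 l) g) :
    T.card ≤ 2 * f.totalDegree * g.totalDegree := by
  classical
  obtain ⟨r, hr, hrd, hre⟩ := elim f g hf hfg
  rw [← Finset.card_image_of_injOn hinj]
  refine (card_le_of_eval2 r hr _ ?_).trans hrd
  intro y hy z
  rw [Finset.mem_image] at hy
  obtain ⟨l, hl, rfl⟩ := hy
  have e : pt2 l ((z - l.2.2) / l.2.1) = ![(z - l.2.2) / l.2.1, l.1, z] := by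
    have := hs l hl
    rw [pt2]
    congr 3
    field_simp
    ring
  apply hre ((z - l.2.2) / l.2.1)
  · rw [← e]; exact h1 l hl _
  · rw [← e]; exact h2 l hl _

lemma van_of_card {F : Type*} [Field F] [Infinite F] (c : Fin 3 → F[X]) (hc : ∀ i, (c i).natDegree ≤ 1)
    (f : R3 F) (Z : Finset F) (hZ : f.totalDegree < Z.card)
    (h : ∀ t ∈ Z, MvPolynomial.eval (fun i => (c i).eval t) f = 0) (t : F) :
    MvPolynomial.eval (fun i => (c i).eval t) f = 0 := by
  have ev : ∀ x : F, (MvPolynomial.aeval c f).eval x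
      = MvPolynomial.eval (fun i => (c i).eval x) f := by
    intro x
    rw [← Polynomial.coe_evalRingHom, MvPolynomial.map_aeval]
    have e1 : (evalRingHom x).comp (algebraMap F F[X]) = RingHom.id F := by ext; simp
    rw [e1]
    rfl
  have : MvPolynomial.aeval c f = 0 := by
    apply Polynomial.eq_zero_of_natDegree_lt_card_of_eval_eq_zero' _ Z
    · intro i hi
      rw [ev]; exact h i hi
    · exact (natDegree_aeval_le c hc f).trans_lt hZ
  rw [← ev, this, eval_zero]

lemma van1_of_card {F : Type*} [Field F] [Infinite F] (l : F × F × F)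
    (f : R3 F) (Z : Finset F) (hZ : f.totalDegree < Z.card)
    (h : ∀ t ∈ Z, MvPolynomial.eval (pt1 l t) f = 0) : Van (pt1 l) f := by
  have e : ∀ t, pt1 l t = fun i => ((![X, C l.1 * X + C l.2.1, C l.2.2] : Fin 3 → F[X]) i).eval t := by
    intro t; funext i; fin_cases i <;> simp [pt1]
  intro t
  rw [e]
  refine van_of_card _ ?_ f Z hZ ?_ t
  · intro i
    fin_cases i
    · simp
    · simp only [Fin.mk_one, Matrix.cons_val_one, Matrix.cons_val_zero]; compute_degree
    · simp
  · intro t ht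
    rw [← e]; exact h t ht

lemma van2_of_card {F : Type*} [Field F] [Infinite F] (l : F × F × F)
    (f : R3 F) (Z : Finset F) (hZ : f.totalDegree < Z.card)
    (h : ∀ t ∈ Z, MvPolynomial.eval (pt2 l t) f = 0) : Van (pt2 l) f := by
  have e : ∀ t, pt2 l t = fun i => ((![X, C l.1, C l.2.1 * X + C l.2.2] : Fin 3 → F[X]) i).eval t := by
    intro t; funext i; fin_cases i <;> simp [pt2]
  intro t
  rw [e]
  refine van_of_card _ ?_ f Z hZ ?_ t
  · intro i
    fin_cases i
    · simp
    · simp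
    · simp only [Fin.reduceFinMk, Matrix.cons_val]; compute_degree
  · intro t ht
    rw [← e]; exact h t ht

end
end SP


namespace SP

noncomputable section

def mexp {n : ℕ} (a : Fin 3 → Fin n) : Fin 3 →₀ ℕ := Finsupp.equivFunOnFinite.symm (fun i => (a i : ℕ))

lemma mexp_inj {n : ℕ} : Function.Injective (mexp (n := n)) := by
  intro a b h
  have := Finsupp.equivFunOnFinite.symm.injective h
  funext i
  exact Fin.ext (congrFun this i)

def mpoly (F : Type*) [Field F] (n : ℕ) : ((Fin 3 → Fin n) → F) →ₗ[F] R3 F :=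
  ∑ a : Fin 3 → Fin n, (MvPolynomial.monomial (mexp a)).comp (LinearMap.proj a)

lemma mpoly_apply (F : Type*) [Field F] (n : ℕ) (c : (Fin 3 → Fin n) → F) :
    mpoly F n c = ∑ a : Fin 3 → Fin n, MvPolynomial.monomial (mexp a) (c a) := by
  simp [mpoly]

lemma mpoly_coeff (F : Type*) [Field F] (n : ℕ) (c : (Fin 3 → Fin n) → F) (a : Fin 3 → Fin n) :
    MvPolynomial.coeff (mexp a) (mpoly F n c) = c a := by
  classical
  rw [mpoly_apply, MvPolynomial.coeff_sum]
  simp only [MvPolynomial.coeff_monomial]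
  rw [Finset.sum_eq_single a]
  · simp
  · intro b _ hb
    rw [if_neg]
    intro h; exact hb (mexp_inj h)
  · simp

lemma interp {F : Type*} [Field F] [Infinite F] (B : Finset (F × F × F)) (d : ℕ)
    (hB : 3 * B.card ≤ (d + 1) ^ 2) :
    ∃ h : R3 F, h ≠ 0 ∧ h.totalDegree ≤ 3 * d ∧ ∀ l ∈ B, Van (pt1 l) h := by
  classical
  obtain ⟨Z, hZ⟩ := Infinite.exists_subset_card_eq F (3 * d + 1)
  let ev : R3 F →ₗ[F] (B × Z → F) := LinearMap.pi (fun x =>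
    (MvPolynomial.aeval (R := F) (pt1 (x.1 : F × F × F) (x.2 : F))).toLinearMap)
  let L := ev.comp (mpoly F (d + 1))
  have hker : LinearMap.ker L ≠ ⊥ := by
    apply LinearMap.ker_ne_bot_of_finrank_lt
    rw [Module.finrank_fintype_fun_eq_card, Module.finrank_fintype_fun_eq_card]
    simp only [Fintype.card_prod, Fintype.card_coe, Fintype.card_fun, Fintype.card_fin, hZ]
    nlinarith
  obtain ⟨c, hc, hc0⟩ := (Submodule.ne_bot_iff _).mp hker
  have htd : (mpoly F (d + 1) c).totalDegree ≤ 3 * d := by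
    rw [mpoly_apply]
    apply MvPolynomial.totalDegree_finsetSum_le
    intro a _
    refine (MvPolynomial.totalDegree_monomial_le _ _).trans ?_
    rw [Finsupp.sum_fintype _ _ (fun _ => rfl), Fin.sum_univ_three]
    have := (a 0).is_lt
    have := (a 1).is_lt
    have := (a 2).is_lt
    simp only [mexp, Finsupp.equivFunOnFinite_symm_apply_apply, id]
    omega
  refine ⟨mpoly F (d + 1) c, ?_, htd, ?_⟩
  · intro h
    apply hc0
    funext a
    have := mpoly_coeff F (d + 1) c a
    rw [h] at this
    simpa using this.symm
  · intro l hl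
    apply van1_of_card l _ Z (by omega)
    intro t ht
    have := congrFun (LinearMap.mem_ker.mp hc) (⟨l, hl⟩, ⟨t, ht⟩)
    simpa [L, ev, MvPolynomial.aeval_eq_eval] using this

end
end SP


namespace SP

lemma sum_prod_colour {ι : Type*} [Fintype ι] [DecidableEq ι] (q : ℕ) (g : ι → Fin q → ℝ) :
    ∑ χ : ι → Fin q, ∏ i, g i (χ i) = ∏ i, ∑ c, g i c := by
  rw [Finset.prod_univ_sum]
  simp [Fintype.piFinset_univ]

lemma sum_w (q : ℕ) (hq : 0 < q) (a : ℝ) :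
    ∑ c : Fin q, (if (c : ℕ) = 0 then a else 1) = a + (q - 1) := by
  obtain ⟨k, rfl⟩ : ∃ k, q = k + 1 := ⟨q - 1, by omega⟩
  rw [Fin.sum_univ_succ]
  simp

lemma colour_bad {ι : Type*} [Fintype ι] [DecidableEq ι] (N : Finset ι) (q s R : ℕ) (hq : 0 < q)
    (hR : R ≤ N.card) (h : 2 * q * (s + 3) ≤ R) :
    8 * ((Finset.univ.filter (fun χ : ι → Fin q =>
      (N ∩ Finset.univ.filter (fun i => (χ i : ℕ) = 0)).card ≤ s)).card : ℝ) ≤ (q : ℝ) ^ Fintype.card ι := by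
  set bad := (Finset.univ.filter (fun χ : ι → Fin q =>
      (N ∩ Finset.univ.filter (fun i => (χ i : ℕ) = 0)).card ≤ s)) with hbad
  have hq' : (0 : ℝ) < q := by exact_mod_cast hq
  let g : ι → Fin q → ℝ := fun i c => if i ∈ N then (if (c : ℕ) = 0 then 1 / 2 else 1) else 1
  have h1 : ∑ χ : ι → Fin q, ∏ i, g i (χ i) = (q - 1 / 2) ^ N.card * q ^ (Fintype.card ι - N.card) := by
    rw [sum_prod_colour]
    have : ∀ i, ∑ c, g i c = if i ∈ N then ((q : ℝ) - 1 / 2) else q := by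
      intro i
      by_cases hi : i ∈ N
      · simp only [g, hi, if_true]
        rw [sum_w q hq]; ring
      · simp [g, hi]
    simp only [this]
    rw [Finset.prod_ite, Finset.prod_const, Finset.prod_const]
    congr 2
    · simp
    · rw [Finset.filter_not, Finset.card_sdiff]
      simp
  have h2 : (bad.card : ℝ) * (1 / 2) ^ s ≤ ∑ χ : ι → Fin q, ∏ i, g i (χ i) := by
    calc (bad.card : ℝ) * (1 / 2) ^ s = ∑ χ ∈ bad, (1 / 2 : ℝ) ^ s := by simp
      _ ≤ ∑ χ ∈ bad, ∏ i, g i (χ i) := by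
        apply Finset.sum_le_sum
        intro χ hχ
        rw [hbad, Finset.mem_filter] at hχ
        have : ∏ i, g i (χ i) = (1 / 2 : ℝ) ^ (N ∩ Finset.univ.filter (fun i => (χ i : ℕ) = 0)).card := by
          rw [← Finset.prod_const, ← Finset.prod_subset (Finset.subset_univ
            (N ∩ Finset.univ.filter (fun i => (χ i : ℕ) = 0)))]
          · apply Finset.prod_congr rfl
            intro i hi
            simp at hi
            simp [g, hi]
          · intro i _ hi
            simp at hi
            simp only [g]
            split_ifs with a b
            · exact absurd b (hi a)
            · rfl
            · rfl
        rw [this]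
        exact pow_le_pow_of_le_one (by norm_num) (by norm_num) hχ.2
      _ ≤ _ := by
        apply Finset.sum_le_sum_of_subset_of_nonneg (Finset.subset_univ _)
        intro χ _ _
        apply Finset.prod_nonneg
        intro i _
        simp only [g]
        split_ifs <;> norm_num
  have hNc : N.card ≤ Fintype.card ι := Finset.card_le_univ N
  have h3 : ((q : ℝ) - 1 / 2) ^ N.card ≤ q ^ N.card * Real.exp (-(s + 3)) := by
    have e1 : (q : ℝ) - 1 / 2 ≤ q * Real.exp (-(1 / (2 * q))) := by
      have := Real.add_one_le_exp (-(1 / (2 * (q : ℝ))))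
      calc (q : ℝ) - 1 / 2 = q * (-(1 / (2 * q)) + 1) := by field_simp; ring
        _ ≤ _ := by gcongr
    have hq1 : (1 : ℝ) ≤ q := by exact_mod_cast hq
    calc ((q : ℝ) - 1 / 2) ^ N.card ≤ (q * Real.exp (-(1 / (2 * q)))) ^ N.card := by
          apply pow_le_pow_left₀ (by linarith) e1
      _ = q ^ N.card * Real.exp (-(N.card / (2 * q))) := by
          rw [mul_pow, ← Real.exp_nat_mul]; congr 2; ring
      _ ≤ _ := by
          gcongr
          rw [le_div_iff₀ (by positivity)]
          have : ((2 * q * (s + 3) : ℕ) : ℝ) ≤ N.card := by exact_mod_cast h.trans hR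
          push_cast at this
          linarith
  have h4 : Real.exp (-((s : ℝ) + 3)) ≤ (1 / 2) ^ s * (1 / 8) := by
    have e1 : (2 : ℝ) ≤ Real.exp 1 := by have := Real.add_one_le_exp (1 : ℝ); linarith
    have e2 : (2 : ℝ) ^ (s + 3) ≤ Real.exp (s + 3) := by
      have := pow_le_pow_left₀ (by norm_num) e1 (s + 3)
      rw [← Real.exp_nat_mul] at this
      push_cast at this
      simpa using this
    rw [Real.exp_neg]
    calc (Real.exp (s + 3))⁻¹ ≤ ((2 : ℝ) ^ (s + 3))⁻¹ := by gcongr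
      _ = _ := by rw [pow_add, mul_inv, one_div, inv_pow]; norm_num
  have h5 : (bad.card : ℝ) * (1 / 2) ^ s ≤ (q : ℝ) ^ Fintype.card ι * ((1 / 2) ^ s * (1 / 8)) := by
    calc _ ≤ _ := h2
      _ = _ := h1
      _ ≤ (q ^ N.card * ((1 / 2) ^ s * (1 / 8))) * q ^ (Fintype.card ι - N.card) := by
          gcongr
          exact h3.trans (by gcongr)
      _ = _ := by
          rw [mul_right_comm, ← pow_add]; congr 2; omega
  have hp : (0 : ℝ) < (1 / 2) ^ s := by positivity
  have : (bad.card : ℝ) ≤ (q : ℝ) ^ Fintype.card ι * (1 / 8) := by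
    apply le_of_mul_le_mul_right _ hp
    linarith
  linarith

lemma colour_size {ι : Type*} [Fintype ι] [DecidableEq ι] (q : ℕ) (hq : 0 < q) :
    (q : ℝ) * ∑ χ : ι → Fin q, ((Finset.univ.filter (fun i => (χ i : ℕ) = 0)).card : ℝ)
      = Fintype.card ι * (q : ℝ) ^ Fintype.card ι := by
  have h1 : ∀ i0 : ι, (q : ℝ) * ∑ χ : ι → Fin q, (if (χ i0 : ℕ) = 0 then (1 : ℝ) else 0) =
      q ^ Fintype.card ι := by
    intro i0
    let g : ι → Fin q → ℝ := fun i c => if i = i0 then (if (c : ℕ) = 0 then 1 else 0) else 1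
    have h2 : ∀ χ : ι → Fin q, (if (χ i0 : ℕ) = 0 then (1 : ℝ) else 0) = ∏ i, g i (χ i) := by
      intro χ
      rw [Finset.prod_eq_single i0]
      · simp [g]
      · intro b _ hb; simp [g, hb]
      · simp
    simp only [h2]
    rw [sum_prod_colour, ← Finset.mul_prod_erase _ _ (Finset.mem_univ i0)]
    have h3 : ∑ c, g i0 c = 1 := by
      simp only [g, if_true]
      obtain ⟨k, rfl⟩ : ∃ k, q = k + 1 := ⟨q - 1, by omega⟩
      rw [Fin.sum_univ_succ]
      simp
    have h4 : ∏ x ∈ Finset.univ.erase i0, ∑ c, g x c = (q : ℝ) ^ (Fintype.card ι - 1) := by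
      rw [← Finset.card_univ, ← Finset.card_erase_of_mem (Finset.mem_univ i0), ← Finset.prod_const]
      apply Finset.prod_congr rfl
      intro i hi
      simp at hi
      simp [g, hi]
    rw [h3, h4, one_mul, ← pow_succ']
    congr 1
    have : 0 < Fintype.card ι := Fintype.card_pos_iff.mpr ⟨i0⟩
    omega
  have h5 : ∀ χ : ι → Fin q, ((Finset.univ.filter (fun i => (χ i : ℕ) = 0)).card : ℝ) =
      ∑ i, (if (χ i : ℕ) = 0 then (1 : ℝ) else 0) := by
    intro χ; simp
  simp only [h5]
  rw [Finset.sum_comm, Finset.mul_sum]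
  simp only [h1]
  simp

lemma sampling {ι κ : Type*} [Fintype ι] [DecidableEq ι] (J : Finset κ) (N : κ → Finset ι)
    (m q s R : ℕ) (hm0 : 0 < m) (hm : Fintype.card ι ≤ m) (hq : 0 < q)
    (hR : ∀ j ∈ J, R ≤ (N j).card) (h : 2 * q * (s + 3) ≤ R) :
    ∃ B : Finset ι, q * B.card ≤ 4 * m ∧
      J.card ≤ 2 * (J.filter (fun j => s < (N j ∩ B).card)).card := by
  classical
  rcases J.eq_empty_or_nonempty with rfl | hJ
  · exact ⟨∅, by simp⟩
  by_contra hcon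
  push Not at hcon
  let BB : (ι → Fin q) → Finset ι := fun χ => Finset.univ.filter (fun i => (χ i : ℕ) = 0)
  let bad : (ι → Fin q) → ℕ := fun χ => (J.filter (fun j => (N j ∩ BB χ).card ≤ s)).card
  have hJc : (0 : ℝ) < J.card := by exact_mod_cast hJ.card_pos
  have hm' : (0 : ℝ) < m := by exact_mod_cast hm0
  have hq' : (0 : ℝ) < q := by exact_mod_cast hq
  have key : ∀ χ, (1 : ℝ) ≤ 2 * bad χ / J.card + q * (BB χ).card / (4 * m) := by
    intro χ
    by_cases h1 : q * (BB χ).card ≤ 4 * m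
    · have h2 := hcon (BB χ) h1
      have h3 : J.card = bad χ + (J.filter (fun j => s < (N j ∩ BB χ).card)).card := by
        rw [← Finset.card_filter_add_card_filter_not (s := J) (fun j => (N j ∩ BB χ).card ≤ s)]
        simp [bad]
      have h4 : J.card ≤ 2 * bad χ := by omega
      have h5 : (1 : ℝ) ≤ 2 * bad χ / J.card := by
        rw [le_div_iff₀ hJc]; exact_mod_cast (by omega)
      have : (0 : ℝ) ≤ q * (BB χ).card / (4 * m) := by positivity
      linarith
    · have h5 : (1 : ℝ) ≤ q * (BB χ).card / (4 * m) := by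
        rw [le_div_iff₀ (by positivity)]; exact_mod_cast (by omega)
      have : (0 : ℝ) ≤ 2 * bad χ / J.card := by positivity
      linarith
  have hsum := Finset.sum_le_sum (s := (Finset.univ : Finset (ι → Fin q))) (fun χ _ => key χ)
  rw [Finset.sum_add_distrib, ← Finset.sum_div, ← Finset.sum_div, ← Finset.mul_sum,
    ← Finset.mul_sum, colour_size q hq] at hsum
  have hcard : ∑ χ : ι → Fin q, (1 : ℝ) = (q : ℝ) ^ Fintype.card ι := by simp
  rw [hcard] at hsum
  have hbad : 8 * ∑ χ : ι → Fin q, (bad χ : ℝ) ≤ J.card * (q : ℝ) ^ Fintype.card ι := by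
    have e1 : ∑ χ : ι → Fin q, (bad χ : ℝ) = ∑ j ∈ J, ((Finset.univ.filter (fun χ : ι → Fin q =>
      (N j ∩ Finset.univ.filter (fun i => (χ i : ℕ) = 0)).card ≤ s)).card : ℝ) := by
      simp only [bad, Finset.card_filter]
      push_cast
      rw [Finset.sum_comm]
    rw [e1, Finset.mul_sum]
    calc _ ≤ ∑ j ∈ J, (q : ℝ) ^ Fintype.card ι := by
          apply Finset.sum_le_sum
          intro j hj
          exact colour_bad (N j) q s R hq (hR j hj) h
      _ = _ := by simp
  have hQ : (0 : ℝ) < (q : ℝ) ^ Fintype.card ι := by positivity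
  have t1 : 2 * ∑ χ : ι → Fin q, (bad χ : ℝ) / J.card ≤ (q : ℝ) ^ Fintype.card ι / 4 := by
    rw [← Finset.sum_div, ← mul_div_assoc, div_le_iff₀ hJc]
    linarith
  have t1' : 2 * (∑ χ : ι → Fin q, (bad χ : ℝ)) / J.card ≤ (q : ℝ) ^ Fintype.card ι / 4 := by
    rw [div_le_iff₀ hJc]
    linarith
  have t2 : (Fintype.card ι : ℝ) * (q : ℝ) ^ Fintype.card ι / (4 * m) ≤ (q : ℝ) ^ Fintype.card ι / 4 := by
    rw [div_le_iff₀ (by positivity)]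
    have : (Fintype.card ι : ℝ) ≤ m := by exact_mod_cast hm
    nlinarith
  linarith

end SP


namespace SP
open Polynomial

noncomputable section

lemma deriv_aeval {F : Type*} [Field F] (c : Fin 3 → F[X]) (f : R3 F) :
    derivative (MvPolynomial.aeval c f) =
      ∑ i, MvPolynomial.aeval c (MvPolynomial.pderiv i f) * derivative (c i) := by
  induction f using MvPolynomial.induction_on with
  | C a => simp
  | add p q hp hq =>
    simp only [map_add, hp, hq, add_mul, Finset.sum_add_distrib]
  | mul_X p i hp =>
    simp only [map_mul, derivative_mul, hp, Derivation.leibniz, smul_eq_mul, map_add,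
      MvPolynomial.aeval_X, add_mul, Finset.sum_add_distrib, MvPolynomial.pderiv_X]
    rw [add_comm]
    congr 1
    · rw [Finset.sum_eq_single i]
      · simp
      · intro j _ hj
        simp [hj]
      · simp
    · rw [Finset.sum_mul]
      apply Finset.sum_congr rfl; intro j _; ring

def c1 {F : Type*} [Field F] (l : F × F × F) : Fin 3 → F[X] := ![X, C l.1 * X + C l.2.1, C l.2.2]
def c2 {F : Type*} [Field F] (l : F × F × F) : Fin 3 → F[X] := ![X, C l.1, C l.2.1 * X + C l.2.2]

lemma eval_aeval {F : Type*} [Field F] (c : Fin 3 → F[X]) (f : R3 F) (x : F) :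
    (MvPolynomial.aeval c f).eval x = MvPolynomial.eval (fun i => (c i).eval x) f := by
  rw [← Polynomial.coe_evalRingHom, MvPolynomial.map_aeval]
  have e1 : (evalRingHom x).comp (algebraMap F F[X]) = RingHom.id F := by ext; simp
  rw [e1]
  rfl

lemma pt1_eq {F : Type*} [Field F] (l : F × F × F) (t : F) :
    pt1 l t = fun i => ((c1 l) i).eval t := by
  funext i; fin_cases i <;> simp [pt1, c1]

lemma pt2_eq {F : Type*} [Field F] (l : F × F × F) (t : F) :
    pt2 l t = fun i => ((c2 l) i).eval t := by
  funext i; fin_cases i <;> simp [pt2, c2]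

lemma van1_iff {F : Type*} [Field F] [Infinite F] (l : F × F × F) (f : R3 F) :
    Van (pt1 l) f ↔ MvPolynomial.aeval (c1 l) f = 0 := by
  constructor
  · intro h
    apply Polynomial.funext
    intro x
    rw [eval_aeval, ← pt1_eq, h x, eval_zero]
  · intro h t
    rw [pt1_eq, ← eval_aeval, h, eval_zero]

lemma van2_iff {F : Type*} [Field F] [Infinite F] (l : F × F × F) (f : R3 F) :
    Van (pt2 l) f ↔ MvPolynomial.aeval (c2 l) f = 0 := by
  constructor
  · intro h
    apply Polynomial.funext
    intro x
    rw [eval_aeval, ← pt2_eq, h x, eval_zero]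
  · intro h t
    rw [pt2_eq, ← eval_aeval, h, eval_zero]

lemma van1_der {F : Type*} [Field F] [Infinite F] (l : F × F × F) (f : R3 F) (h : Van (pt1 l) f) :
    Van (pt1 l) (MvPolynomial.pderiv 0 f + MvPolynomial.C l.1 * MvPolynomial.pderiv 1 f) := by
  rw [van1_iff] at h ⊢
  have := deriv_aeval (c1 l) f
  rw [h, Fin.sum_univ_three] at this
  simp [c1] at this
  simp only [map_add, map_mul, MvPolynomial.algHom_C]
  rw [← Polynomial.C_eq_algebraMap]
  simp only [c1]
  linear_combination -this

lemma van2_der {F : Type*} [Field F] [Infinite F] (l : F × F × F) (f : R3 F) (h : Van (pt2 l) f) :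
    Van (pt2 l) (MvPolynomial.pderiv 0 f + MvPolynomial.C l.2.1 * MvPolynomial.pderiv 2 f) := by
  rw [van2_iff] at h ⊢
  have := deriv_aeval (c2 l) f
  rw [h, Fin.sum_univ_three] at this
  simp [c2] at this
  simp only [map_add, map_mul, MvPolynomial.algHom_C]
  rw [← Polynomial.C_eq_algebraMap]
  simp only [c2]
  linear_combination -this

lemma GG_van_aux {F : Type*} [Field F] (P : Fin 3 → F) (f : R3 F) (j : Fin 3) (a : F)
    (h1 : MvPolynomial.eval P (MvPolynomial.pderiv 0 f + MvPolynomial.C a * MvPolynomial.pderiv j f) = 0)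
    (h2 : MvPolynomial.eval P (MvPolynomial.pderiv 0 (MvPolynomial.pderiv 0 f +
        MvPolynomial.C a * MvPolynomial.pderiv j f) +
      MvPolynomial.C a * MvPolynomial.pderiv j (MvPolynomial.pderiv 0 f +
        MvPolynomial.C a * MvPolynomial.pderiv j f)) = 0) :
    MvPolynomial.eval P (GG j f) = 0 := by
  rw [GG]
  simp only [map_add, map_mul, MvPolynomial.eval_C, Derivation.leibniz, MvPolynomial.pderiv_C,
    smul_zero, mul_zero, map_zero, add_zero, smul_eq_mul, pderiv_comm' j 0 f, map_sub, map_pow, map_ofNat] at *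
  have h3 : MvPolynomial.eval P (MvPolynomial.pderiv 0 f) = - (a * MvPolynomial.eval P (MvPolynomial.pderiv j f)) := by
    linear_combination h1
  rw [h3]
  linear_combination (MvPolynomial.eval P (MvPolynomial.pderiv j f))^2 * h2

lemma van1_GG {F : Type*} [Field F] [Infinite F] (l : F × F × F) (f : R3 F) (h : Van (pt1 l) f) :
    Van (pt1 l) (GG 1 f) := by
  intro t
  exact GG_van_aux _ f 1 l.1 (van1_der l f h t) (van1_der l _ (van1_der l f h) t)

lemma van2_GG {F : Type*} [Field F] [Infinite F] (l : F × F × F) (f : R3 F) (h : Van (pt2 l) f) :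
    Van (pt2 l) (GG 2 f) := by
  intro t
  exact GG_van_aux _ f 2 l.2.1 (van2_der l f h t) (van2_der l _ (van2_der l f h) t)

lemma pderiv_deg {F : Type*} [Field F] (f : R3 F) (i : Fin 3) :
    (MvPolynomial.pderiv i f).totalDegree ≤ f.totalDegree - 1 := by
  conv_lhs => rw [f.as_sum, map_sum]
  apply MvPolynomial.totalDegree_finsetSum_le
  intro s hs
  rw [MvPolynomial.pderiv_monomial]
  by_cases h : s i = 0
  · simp [h]
  have h1 := MvPolynomial.le_totalDegree hs
  refine (MvPolynomial.totalDegree_monomial_le _ _).trans ?_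
  have h2 : s = (s - Finsupp.single i 1) + Finsupp.single i 1 := by
    ext j
    by_cases hj : i = j
    · subst hj; simp; omega
    · simp [Finsupp.single_apply, hj]
  rw [h2, Finsupp.sum_add_index' (by simp) (by simp)] at h1
  simp at h1
  simp only [Finsupp.sum, id_eq] at *
  omega

lemma GG_deg {F : Type*} [Field F] (f : R3 F) (j : Fin 3) :
    (GG j f).totalDegree ≤ 3 * f.totalDegree := by
  have hp := fun i => pderiv_deg f i
  have hpp := fun i k => pderiv_deg (MvPolynomial.pderiv k f) i
  have e2 : (2 : R3 F) = MvPolynomial.C 2 := (map_ofNat MvPolynomial.C 2).symm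
  have e3 : ∀ a b c : R3 F, (a * b * c).totalDegree ≤ a.totalDegree + b.totalDegree + c.totalDegree := by
    intro a b c
    have h1 := MvPolynomial.totalDegree_mul (a * b) c
    have h2 := MvPolynomial.totalDegree_mul a b
    omega
  have a1 := hp 0
  have a2 := hp j
  have b1 := hpp 0 0
  have b2 := hpp 0 j
  have b3 := hpp j j
  rw [GG]
  refine (MvPolynomial.totalDegree_add _ _).trans (max_le ((MvPolynomial.totalDegree_sub _ _).trans (max_le ?_ ?_)) ?_)
  · rw [pow_two, ← mul_assoc]
    have := e3 (MvPolynomial.pderiv 0 (MvPolynomial.pderiv 0 f)) (MvPolynomial.pderiv j f) (MvPolynomial.pderiv j f)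
    omega
  · have := e3 (2 * MvPolynomial.pderiv 0 (MvPolynomial.pderiv j f)) (MvPolynomial.pderiv 0 f) (MvPolynomial.pderiv j f)
    have t2 := MvPolynomial.totalDegree_mul 2 (MvPolynomial.pderiv 0 (MvPolynomial.pderiv j f))
    have t3 : (2 : R3 F).totalDegree = 0 := by rw [e2, MvPolynomial.totalDegree_C]
    omega
  · rw [pow_two, ← mul_assoc]
    have := e3 (MvPolynomial.pderiv j (MvPolynomial.pderiv j f)) (MvPolynomial.pderiv 0 f) (MvPolynomial.pderiv 0 f)
    omega

lemma van2_mul {F : Type*} [Field F] [Infinite F] (l : F × F × F) (f g : R3 F) :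
    Van (pt2 l) (f * g) ↔ Van (pt2 l) f ∨ Van (pt2 l) g := by
  simp [van2_iff]

lemma van1_mul {F : Type*} [Field F] [Infinite F] (l : F × F × F) (f g : R3 F) :
    Van (pt1 l) (f * g) ↔ Van (pt1 l) f ∨ Van (pt1 l) g := by
  simp [van1_iff]

lemma van1_pow {F : Type*} [Field F] [Infinite F] (l : F × F × F) (f : R3 F) (n : ℕ)
    (h : Van (pt1 l) (f ^ n)) : Van (pt1 l) f := by
  rw [van1_iff, map_pow] at h
  rw [van1_iff]
  exact eq_zero_of_pow_eq_zero h

lemma no_x {F : Type*} [Field F] [Infinite F] (f : R3 F)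
    (hd : ∀ i : ℕ, 0 < i → i ≤ f.totalDegree → (i : F) ≠ 0) (hx : MvPolynomial.pderiv 0 f = 0)
    (x x' y z : F) : MvPolynomial.eval ![x, y, z] f = MvPolynomial.eval ![x', y, z] f := by
  set c : Fin 3 → F[X] := ![X, C y, C z] with hc
  have ev : ∀ x, MvPolynomial.eval ![x, y, z] f = (MvPolynomial.aeval c f).eval x := by
    intro x
    rw [eval_aeval]
    congr 2
    funext i; fin_cases i <;> simp [hc]
  have h1 := deriv_aeval c f
  rw [Fin.sum_univ_three, hx] at h1
  simp [hc] at h1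
  rw [← hc] at h1
  have h2 : (MvPolynomial.aeval c f).natDegree ≤ f.totalDegree :=
    natDegree_aeval_le c (by intro i; fin_cases i <;> simp [hc]) f
  have h3 : MvPolynomial.aeval c f = C ((MvPolynomial.aeval c f).coeff 0) := by
    ext n
    rcases n with _ | n
    · simp
    rw [coeff_C_succ]
    by_cases hn : n + 1 ≤ f.totalDegree
    · have h4 := congrArg (fun p => p.coeff n) h1
      simp only [coeff_derivative, coeff_zero] at h4
      have := hd (n+1) (by omega) hn
      push_cast at this
      exact (mul_eq_zero.mp h4).resolve_right this
    · exact coeff_eq_zero_of_natDegree_lt (by omega)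
  rw [ev, ev, h3]
  simp

lemma nox_bound {F : Type*} [Field F] [Infinite F] (f : R3 F) (hf : f ≠ 0)
    (hd : ∀ i : ℕ, 0 < i → i ≤ f.totalDegree → (i : F) ≠ 0) (hx : MvPolynomial.pderiv 0 f = 0)
    (T : Finset (F × F × F)) (hinj : Set.InjOn (fun l : F × F × F => l.1) T)
    (hs : ∀ l ∈ T, l.2.1 ≠ 0) (h1 : ∀ l ∈ T, Van (pt2 l) f) : T.card ≤ f.totalDegree := by
  classical
  by_contra hcon
  push Not at hcon
  apply hf
  apply MvPolynomial.funext
  intro P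
  rw [map_zero]
  have hP : P = ![P 0, P 1, P 2] := by funext i; fin_cases i <;> rfl
  have ev : ∀ t, ![P 0, t, P 2] = fun i => ((![C (P 0), X, C (P 2)] : Fin 3 → F[X]) i).eval t := by
    intro t; funext i; fin_cases i <;> simp
  rw [hP, ev]
  refine van_of_card _ ?_ f (T.image (fun l => l.1)) ?_ ?_ (P 1)
  · intro i; fin_cases i <;> simp
  · rw [Finset.card_image_of_injOn hinj]; exact hcon
  · intro y hy
    rw [Finset.mem_image] at hy
    obtain ⟨l, hl, rfl⟩ := hy
    rw [← ev]
    have e : pt2 l ((P 2 - l.2.2) / l.2.1) = ![(P 2 - l.2.2) / l.2.1, l.1, P 2] := by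
      have := hs l hl
      rw [pt2]
      congr 3
      field_simp
      ring
    rw [no_x f hd hx (P 0) ((P 2 - l.2.2) / l.2.1), ← e]
    exact h1 l hl _

lemma Tbound {F : Type*} [Field F] [Infinite F] (f h : R3 F) (hf : Irreducible f) (hfh : f ∣ h)
    (h0 : h ≠ 0) (D k : ℕ) (hD : h.totalDegree ≤ D)
    (hd : ∀ i : ℕ, 0 < i → i ≤ D → (i : F) ≠ 0)
    (B : Finset (F × F × F)) (hB : ∀ b ∈ B, Van (pt1 b) h)
    (T : Finset (F × F × F)) (hinj : Set.InjOn (fun l : F × F × F => l.1) T)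
    (hs : ∀ l ∈ T, l.2.1 ≠ 0) (hT : ∀ l ∈ T, Van (pt2 l) f)
    (hZ : ∀ l ∈ T, ∃ Z : Finset F, 10 * D < Z.card ∧ ∀ t ∈ Z, ∃ b ∈ B, pt2 l t = pt1 b t)
    (hk : ∀ ε β γ δ : F, ∀ T' ⊆ T, (∀ l ∈ T', Van (pt2 l) (MvPolynomial.X 0 - (MvPolynomial.C ε *
      MvPolynomial.X 1 * MvPolynomial.X 2 + MvPolynomial.C β * MvPolynomial.X 1 +
      MvPolynomial.C γ * MvPolynomial.X 2 + MvPolynomial.C δ))) → T'.card ≤ k) :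
    T.card ≤ 8 * f.totalDegree * D + k := by
  classical
  have hfd : f.totalDegree ≤ D := (MvPolynomial.totalDegree_le_of_dvd_of_isDomain hfh h0).trans hD
  have hdf : ∀ i : ℕ, 0 < i → i ≤ f.totalDegree → (i : F) ≠ 0 := fun i a b => hd i a (b.trans hfd)
  set d := f.totalDegree with hdd
  by_cases hx : MvPolynomial.pderiv 0 f = 0
  · have := nox_bound f hf.ne_zero hdf hx T hinj hs hT
    rw [← hdd] at this
    have : d ≤ d * D := by
      rcases Nat.eq_zero_or_pos D with h | h
      · have : d = 0 := by omega
        simp [this]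
      · exact Nat.le_mul_of_pos_right _ h
    nlinarith
  have hdd' : d * d ≤ d * D := Nat.mul_le_mul_left _ hfd
  have hx' : ¬ f ∣ MvPolynomial.pderiv 0 f := by
    intro hdvd
    have h1 := MvPolynomial.totalDegree_le_of_dvd_of_isDomain hdvd hx
    have h2 := pderiv_deg f 0
    have h3 : f.totalDegree = 0 := by omega
    rw [MvPolynomial.totalDegree_eq_zero_iff_eq_C] at h3
    apply hx
    rw [h3]; simp
  by_cases hG2 : f ∣ GG 2 f
  swap
  · have h1 := bezout f (GG 2 f) hf hG2 T hinj hs hT (fun l hl => van2_GG l f (hT l hl))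
    have h2 := GG_deg f 2
    have h3 : 2 * d * (GG 2 f).totalDegree ≤ 2 * d * (3 * d) := Nat.mul_le_mul_left _ h2
    nlinarith
  by_cases hG1 : f ∣ GG 1 f
  swap
  · obtain ⟨e, h', hh'⟩ : ∃ e h', ¬ f ∣ h' ∧ h = f ^ e * h' := by
      have hfin : FiniteMultiplicity f h := FiniteMultiplicity.of_prime_left hf.prime h0
      obtain ⟨c, hc, hc'⟩ := hfin.exists_eq_pow_mul_and_not_dvd
      exact ⟨_, c, hc', hc⟩
    obtain ⟨hndvd, hh⟩ := hh'
    have hh'0 : h' ≠ 0 := by rintro rfl; simp at hndvd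
    have hh'd : h'.totalDegree ≤ D :=
      (MvPolynomial.totalDegree_le_of_dvd_of_isDomain (Dvd.intro_left _ hh.symm) h0).trans hD
    have c1 := bezout f h' hf hndvd (T.filter (fun l => Van (pt2 l) h'))
      (hinj.mono (by intro x hx; simp at hx; exact hx.1)) (by intro l hl; exact hs l (Finset.mem_filter.mp hl).1)
      (by intro l hl; exact hT l (Finset.mem_filter.mp hl).1)
      (by intro l hl; exact (Finset.mem_filter.mp hl).2)
    have c2 := bezout f (GG 1 f) hf hG1 (T.filter (fun l => ¬ Van (pt2 l) h'))
      (hinj.mono (by intro x hx; simp at hx; exact hx.1)) (by intro l hl; exact hs l (Finset.mem_filter.mp hl).1)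
      (by intro l hl; exact hT l (Finset.mem_filter.mp hl).1)
      (by
        intro l hl
        rw [Finset.mem_filter] at hl
        obtain ⟨Z, hZc, hZ'⟩ := hZ l hl.1
        have hc : Z.card = (Z.filter (fun t => MvPolynomial.eval (pt2 l t) h' = 0)).card +
          (Z.filter (fun t => ¬ MvPolynomial.eval (pt2 l t) h' = 0)).card :=
          (Finset.card_filter_add_card_filter_not _).symm
        have hc1 : (Z.filter (fun t => MvPolynomial.eval (pt2 l t) h' = 0)).card ≤ D := by
          by_contra hcon
          push Not at hcon
          apply hl.2
          exact van2_of_card l h' _ (hh'd.trans_lt hcon) (by intro t ht; exact (Finset.mem_filter.mp ht).2)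
        have hgd := GG_deg f 1
        refine van2_of_card l (GG 1 f) (Z.filter (fun t => ¬ MvPolynomial.eval (pt2 l t) h' = 0))
          (by omega) ?_
        intro t ht
        rw [Finset.mem_filter] at ht
        obtain ⟨b, hb, hbt⟩ := hZ' t ht.1
        rw [hbt]
        apply van1_GG
        have := hB b hb
        rw [hh, van1_mul] at this
        rcases this with this | this
        · exact van1_pow _ _ _ this
        · exact absurd (by rw [hbt]; exact this t) ht.2)
    have hc : T.card = _ := (Finset.card_filter_add_card_filter_not (fun l => Van (pt2 l) h')).symm
    have h2 := GG_deg f 1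
    have h3 : 2 * d * (GG 1 f).totalDegree ≤ 2 * d * (3 * d) := Nat.mul_le_mul_left _ h2
    have h4 : 2 * d * h'.totalDegree ≤ 2 * d * D := Nat.mul_le_mul_left _ hh'd
    nlinarith
  by_cases hall : ∀ l ∈ T, Van (pt2 l) (MvPolynomial.pderiv 0 f)
  · have h1 := bezout f _ hf hx' T hinj hs hT hall
    have h2 := pderiv_deg f 0
    have h3 : 2 * d * (MvPolynomial.pderiv 0 f).totalDegree ≤ 2 * d * d := Nat.mul_le_mul_left _ (by omega)
    nlinarith
  push Not at hall
  obtain ⟨l, hl, hl'⟩ := hall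
  rw [Van] at hl'
  push Not at hl'
  obtain ⟨t, ht⟩ := hl'
  obtain ⟨ε, β, γ, δ, hq⟩ := quadric f hf hdf hG1 hG2 (pt2 l t) (hT l hl t) ht
  have := hk ε β γ δ T subset_rfl (by
    intro l' hl'
    obtain ⟨c, hc⟩ := hq
    rw [hc, van2_mul]
    exact Or.inl (hT l' hl'))
  omega


set_option maxHeartbeats 2000000 in
/-- Rich lines bound. -/
theorem richLines {F : Type*} [Field F] [Infinite F] (L1 L2 : Finset (F × F × F)) (m R k q D' : ℕ)
    (hm0 : 0 < m) (hm : L1.card ≤ m) (hq : 0 < q) (hD' : 0 < D') (hk1 : 1 ≤ k)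
    (hqD : 12 * m ≤ q * (D' + 1) ^ 2) (hqR : 66 * q * D' ≤ R)
    (hd : ∀ i : ℕ, 0 < i → i ≤ 3 * D' → (i : F) ≠ 0)
    (hinj1 : Set.InjOn (fun l : F × F × F => l.2.2) L1)
    (hinj2 : Set.InjOn (fun l : F × F × F => l.1) L2)
    (hs : ∀ l ∈ L2, l.2.1 ≠ 0)
    (N : F × F × F → Finset (F × F × F)) (hNL : ∀ l ∈ L2, N l ⊆ L1)
    (hNR : ∀ l ∈ L2, R ≤ (N l).card) (hN : ∀ l ∈ L2, ∀ b ∈ N l, ∃ t, pt2 l t = pt1 b t)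
    (hk : ∀ ε β γ δ : F, ∀ T' ⊆ L2, (∀ l ∈ T', Van (pt2 l) (MvPolynomial.X 0 - (MvPolynomial.C ε *
      MvPolynomial.X 1 * MvPolynomial.X 2 + MvPolynomial.C β * MvPolynomial.X 1 +
      MvPolynomial.C γ * MvPolynomial.X 2 + MvPolynomial.C δ))) → T'.card ≤ k) :
    L2.card ≤ 144 * D' ^ 2 + 6 * k * D' := by
  classical
  obtain ⟨B0, hB0, hJ⟩ := sampling (ι := L1) L2 (fun l => (N l).subtype (fun x => x ∈ L1)) m q (30 * D') R
    hm0 (by simpa using hm) hq (by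
      intro l hl
      rw [Finset.card_subtype]
      refine (hNR l hl).trans (Finset.card_le_card ?_)
      intro x hx
      rw [Finset.mem_filter]; exact ⟨hx, hNL l hl hx⟩) (by nlinarith)
  set B : Finset (F × F × F) := B0.map (Function.Embedding.subtype _) with hB
  have hBc : B.card = B0.card := by rw [hB, Finset.card_map]
  have hBL : B ⊆ L1 := by
    intro x hx
    rw [hB, Finset.mem_map] at hx
    obtain ⟨y, _, rfl⟩ := hx
    exact y.2
  have hB3 : 3 * B.card ≤ (D' + 1) ^ 2 := by
    have : q * (3 * B.card) ≤ q * (D' + 1) ^ 2 := by rw [hBc]; linarith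
    exact Nat.le_of_mul_le_mul_left this hq
  obtain ⟨h, h0, hdeg, hvan⟩ := interp B D' hB3
  set J := L2.filter (fun j => 30 * D' < ((N j).subtype (fun x => x ∈ L1) ∩ B0).card) with hJdef
  have hJL : J ⊆ L2 := Finset.filter_subset _ _
  have hZ : ∀ l ∈ J, ∃ Z : Finset F, 10 * (3 * D') < Z.card ∧ ∀ t ∈ Z, ∃ b ∈ B, pt2 l t = pt1 b t := by
    intro l hl
    rw [hJdef, Finset.mem_filter] at hl
    set S := ((N l).subtype (fun x => x ∈ L1) ∩ B0).map (Function.Embedding.subtype _) with hS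
    have hSc : S.card = ((N l).subtype (fun x => x ∈ L1) ∩ B0).card := by rw [hS, Finset.card_map]
    have hSN : S ⊆ N l := by
      intro x hx
      rw [hS, Finset.mem_map] at hx
      obtain ⟨y, hy, rfl⟩ := hx
      rw [Finset.mem_inter, Finset.mem_subtype] at hy
      exact hy.1
    have hSB : S ⊆ B := by
      intro x hx
      rw [hS, Finset.mem_map] at hx
      obtain ⟨y, hy, rfl⟩ := hx
      rw [Finset.mem_inter] at hy
      rw [hB, Finset.mem_map]
      exact ⟨y, hy.2, rfl⟩
    have hch := fun b (hb : b ∈ S) => hN l hl.1 b (hSN hb)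
    choose! τ hτ using hch
    refine ⟨S.image τ, ?_, ?_⟩
    · rw [Finset.card_image_of_injOn, hSc]
      · omega
      · intro b hb b' hb' hbb
        have e1 := congrFun (hτ b hb) 2
        have e2 := congrFun (hτ b' hb') 2
        rw [hbb] at e1
        simp [pt1, pt2] at e1 e2
        exact hinj1 (hBL (hSB hb)) (hBL (hSB hb')) (e1.symm.trans e2)
    · intro t ht
      rw [Finset.mem_image] at ht
      obtain ⟨b, hb, rfl⟩ := ht
      exact ⟨b, hSB hb, hτ b hb⟩
  have hJh : ∀ l ∈ J, Van (pt2 l) h := by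
    intro l hl
    obtain ⟨Z, hZc, hZ'⟩ := hZ l hl
    refine van2_of_card l h Z (by omega) ?_
    intro t ht
    obtain ⟨b, hb, hbt⟩ := hZ' t ht
    rw [hbt]; exact hvan b hb t
  have key : ∀ g : R3 F, g ∣ h → (J.filter (fun l => Van (pt2 l) g)).card ≤
      g.totalDegree * (8 * (3 * D') + k) := by
    intro g
    induction g using WfDvdMonoid.induction_on_irreducible with
    | zero => intro h1; rw [zero_dvd_iff] at h1; exact absurd h1 h0
    | unit u hu =>
      intro _
      rw [Finset.filter_false_of_mem]
      · simp
      · intro l hl hv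
        have h1 := hv 0
        have h2 := hu.map (MvPolynomial.eval (pt2 l 0))
        rw [h1] at h2
        simp at h2
    | mul a i ha hi ih =>
      intro hdvd
      have h1 := ih (dvd_of_mul_left_dvd hdvd)
      have hidvd : i ∣ h := dvd_of_mul_right_dvd hdvd
      have h2 := Tbound i h hi hidvd h0 (3 * D') k hdeg hd B hvan (J.filter (fun l => Van (pt2 l) i))
        (hinj2.mono (by intro x hx; simp at hx; exact hJL hx.1))
        (by intro l hl; exact hs l (hJL (Finset.mem_filter.mp hl).1))
        (by intro l hl; exact (Finset.mem_filter.mp hl).2)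
        (by intro l hl; exact hZ l (Finset.mem_filter.mp hl).1)
        (by
          intro ε β γ δ T' hT'
          exact hk ε β γ δ T' (hT'.trans ((Finset.filter_subset _ _).trans hJL)))
      have hi1 : 1 ≤ i.totalDegree := by
        by_contra hcon
        have h3 : i.totalDegree = 0 := by omega
        rw [MvPolynomial.totalDegree_eq_zero_iff_eq_C] at h3
        apply hi.not_isUnit
        rw [h3]
        apply IsUnit.map
        rw [isUnit_iff_ne_zero]
        intro hc
        rw [hc] at h3
        exact hi.ne_zero (by simpa using h3)
      rw [MvPolynomial.totalDegree_mul_of_isDomain hi.ne_zero ha]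
      have h4 : J.filter (fun l => Van (pt2 l) (i * a)) ⊆
          J.filter (fun l => Van (pt2 l) i) ∪ J.filter (fun l => Van (pt2 l) a) := by
        intro l hl
        rw [Finset.mem_filter, van2_mul] at hl
        rw [Finset.mem_union]
        exact hl.2.elim (fun q => Or.inl (Finset.mem_filter.mpr ⟨hl.1, q⟩))
          (fun q => Or.inr (Finset.mem_filter.mpr ⟨hl.1, q⟩))
      have h5 := (Finset.card_le_card h4).trans (Finset.card_union_le _ _)
      nlinarith
  have h1 := key h dvd_rfl
  rw [Finset.filter_true_of_mem hJh] at h1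
  have h2 : h.totalDegree * (8 * (3 * D') + k) ≤ (3 * D') * (8 * (3 * D') + k) :=
    Nat.mul_le_mul_right _ hdeg
  nlinarith

end
end SP


namespace SP
open Polynomial

noncomputable section

section gen
variable {K : Type*} [Field K]

abbrev FF (K : Type*) [Field K] := RatFunc K

def io (P : K[X]) : FF K := algebraMap K[X] (RatFunc K) P

lemma io_inj : Function.Injective (io (K := K)) := RatFunc.algebraMap_injective K

lemma io_ne {P : K[X]} (h : P ≠ 0) : io P ≠ 0 := by
  intro h1
  apply h
  apply io_inj
  rw [h1]; simp [io]

lemma io_mul (P Q : K[X]) : io P * io Q = io (P * Q) := by simp [io]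
lemma io_add (P Q : K[X]) : io P + io Q = io (P + Q) := by simp [io]
lemma io_sub (P Q : K[X]) : io P - io Q = io (P - Q) := by simp [io]

instance : Infinite (FF K) := Infinite.of_injective (io (K := K)) io_inj

def pa (x : K × K × K) : K[X] := C x.2.2 - X ^ 2 - X ^ 3 * C x.1
def pd (x : K × K × K) : K[X] := C x.2.1 - X
def pw (y : K × K × K) : K[X] := C y.2.2 - X * C y.2.1 - X ^ 2
def pv (y : K × K × K) : K[X] := C y.1 + X ^ 3

lemma pa_ne (x : K × K × K) : pa x ≠ 0 := by
  intro h
  have := congrArg (fun q => q.coeff 2) h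
  simp [pa, coeff_X, coeff_X_pow, coeff_C] at this

lemma pv_ne (x : K × K × K) : pv x ≠ 0 := by
  intro h
  have := congrArg (fun q => q.coeff 3) h
  simp [pv, coeff_X, coeff_X_pow, coeff_C] at this

def li1 (x : K × K × K) : FF K × FF K × FF K := (io (pa x), io (C x.1), io (pd x) / io (pa x))
def li2 (y : K × K × K) : FF K × FF K × FF K :=
  (io (pw y) / io (pv y), io (pv y) / io (C y.2.1), - 1 / io (C y.2.1))

lemma li1_inj : Function.Injective (fun x : K × K × K => (li1 x).2.2) := by
  rintro x x' h
  simp only [li1] at h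
  rw [div_eq_div_iff (io_ne (pa_ne _)) (io_ne (pa_ne _)), io_mul, io_mul] at h
  have h := io_inj h
  have e : ∀ x x' : K × K × K, pd x * pa x' = C x'.1 * X ^ 4 + C (1 - x.2.1 * x'.1) * X ^ 3
      + C (- x.2.1) * X ^ 2 + C (- x'.2.2) * X + C (x.2.1 * x'.2.2) := by
    intro x x'
    simp [pd, pa]; ring
  rw [e, e] at h
  have h4 := congrArg (fun q => q.coeff 4) h
  have h2 := congrArg (fun q => q.coeff 2) h
  have h1 := congrArg (fun q => q.coeff 1) h
  simp only [coeff_add, coeff_C_mul, coeff_X, coeff_X_pow, coeff_C] at h4 h2 h1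
  norm_num at h4 h2 h1
  obtain ⟨a, b, c⟩ := x
  obtain ⟨a', b', c'⟩ := x'
  simp_all

lemma li2_inj : Function.Injective (fun x : K × K × K => (li2 x).1) := by
  rintro x x' h
  simp only [li2] at h
  rw [div_eq_div_iff (io_ne (pv_ne _)) (io_ne (pv_ne _)), io_mul, io_mul] at h
  have h := io_inj h
  have e : ∀ x x' : K × K × K, pw x * pv x' = C (-1) * X ^ 5 + C (- x.2.1) * X ^ 4 + C (x.2.2) * X ^ 3
      + C (- x'.1) * X ^ 2 + C (- x.2.1 * x'.1) * X + C (x.2.2 * x'.1) := by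
    intro x x'
    simp [pw, pv]; ring
  rw [e, e] at h
  have h4 := congrArg (fun q => q.coeff 4) h
  have h3 := congrArg (fun q => q.coeff 3) h
  have h2 := congrArg (fun q => q.coeff 2) h
  simp [coeff_X, coeff_X_pow, coeff_C] at h4 h2 h3
  obtain ⟨a, b, c⟩ := x
  obtain ⟨a', b', c'⟩ := x'
  simp_all

lemma meet (x y : K × K × K) (hy : y.2.1 ≠ 0) (h : x.1 * y.1 + x.2.1 * y.2.1 + x.2.2 = y.2.2) :
    ∃ t, pt2 (li2 y) t = pt1 (li1 x) t := by
  have ha := io_ne (pa_ne x)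
  have hv := io_ne (pv_ne y)
  have hc : io (C y.2.1) ≠ 0 := io_ne (by simpa using hy)
  have key : io (pd x) * io (C y.2.1) + io (pa x) = io (pw y) - io (C x.1) * io (pv y) := by
    rw [io_mul, io_add, io_mul, io_sub]
    congr 1
    rw [pd, pa, pw, pv, ← h]
    simp
    ring
  refine ⟨(io (pw y) / io (pv y) - io (C x.1)) / io (pa x), ?_⟩
  rw [pt1, pt2]
  simp only [li1, li2]
  congr 1
  funext i
  fin_cases i
  · simp
    field_simp
    ring
  · simp
    field_simp
    linear_combination -key

lemma on_surface (y : K × K × K) (hy : y.2.1 ≠ 0) (ε β γ δ : FF K)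
    (h : Van (pt2 (li2 y)) (MvPolynomial.X 0 - (MvPolynomial.C ε *
      MvPolynomial.X 1 * MvPolynomial.X 2 + MvPolynomial.C β * MvPolynomial.X 1 +
      MvPolynomial.C γ * MvPolynomial.X 2 + MvPolynomial.C δ))) :
    io (C y.2.1) = ε * io (pw y) + γ * io (pv y) ∧ 1 = β * io (pw y) + δ * io (pv y) := by
  have hv := io_ne (pv_ne y)
  have hc : io (C y.2.1) ≠ 0 := io_ne (by simpa using hy)
  have h0 := h 0
  have h1 := h 1
  simp [pt2, li2] at h0 h1
  field_simp at h0 h1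
  have e1 : io (C y.2.1) = ε * io (pw y) + γ * io (pv y) := by
    have : io (pv y) * io (C y.2.1) = io (pv y) * (ε * io (pw y) + γ * io (pv y)) := by
      linear_combination h1 - h0
    exact mul_left_cancel₀ hv this
  refine ⟨e1, ?_⟩
  have : io (C y.2.1) * 1 = io (C y.2.1) * (β * io (pw y) + δ * io (pv y)) := by
    linear_combination h0 + e1
  exact mul_left_cancel₀ hc this

lemma pv_inj {y y' : K × K × K} (h : io (pv y) = io (pv y')) : y.1 = y'.1 := by
  have h := congrArg (fun q => q.coeff 0) (io_inj h)
  simpa [pv] using h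

lemma pw_inj {y y' : K × K × K} (h : io (pw y) = io (pw y')) : y.2 = y'.2 := by
  have h0 := congrArg (fun q => q.coeff 0) (io_inj h)
  have h1 := congrArg (fun q => q.coeff 1) (io_inj h)
  simp [pw, coeff_X, coeff_X_pow, coeff_C] at h0 h1
  obtain ⟨a, b, c⟩ := y
  obtain ⟨a', b', c'⟩ := y'
  simp_all

lemma surface_count (T : Finset (K × K × K)) (k : ℕ) (hT : ∀ y ∈ T, y.2.1 ≠ 0)
    (Y1 Y2 : Finset K) (h1 : Y1.card ≤ k) (h2 : Y2.card ≤ k) (hT1 : ∀ y ∈ T, y.1 ∈ Y1)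
    (hT2 : ∀ y ∈ T, y.2.1 ∈ Y2)
    (h3 : ∀ a b, ∀ S ⊆ T, (∀ y ∈ S, y.1 = a ∧ y.2.1 = b) → S.card ≤ k)
    (ε β γ δ : FF K) (h : ∀ y ∈ T, Van (pt2 (li2 y)) (MvPolynomial.X 0 - (MvPolynomial.C ε *
      MvPolynomial.X 1 * MvPolynomial.X 2 + MvPolynomial.C β * MvPolynomial.X 1 +
      MvPolynomial.C γ * MvPolynomial.X 2 + MvPolynomial.C δ))) : T.card ≤ k := by
  classical
  have hs := fun y hy => on_surface y (hT y hy) ε β γ δ (h y hy)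
  by_cases hβ : β = 0
  · subst hβ
    have hδ : ∀ y ∈ T, δ * io (pv y) = 1 := by
      intro y hy; have := (hs y hy).2; rw [zero_mul, zero_add] at this; exact this.symm
    have hv : ∀ y ∈ T, ∀ y' ∈ T, y.1 = y'.1 := by
      intro y hy y' hy'
      apply pv_inj
      have e1 := hδ y hy
      have e2 := hδ y' hy'
      have : δ ≠ 0 := by rintro rfl; simp at e1
      apply mul_left_cancel₀ this
      rw [e1, e2]
    by_cases hε : ε = 0
    · subst hε
      rcases T.eq_empty_or_nonempty with rfl | ⟨y0, hy0⟩
      · simp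
      · apply h3 y0.1 y0.2.1 T subset_rfl
        intro y hy
        refine ⟨hv y hy y0 hy0, ?_⟩
        have e1 := (hs y hy).1
        have e2 := (hs y0 hy0).1
        have e3 : pv y = pv y0 := by rw [pv, pv, hv y hy y0 hy0]
        simp only [zero_mul, zero_add] at e1 e2
        rw [e3, ← e2] at e1
        exact C_injective (io_inj e1)
    · refine (Finset.card_le_card_of_injOn (s := T) (t := Y2) (fun y => y.2.1) (fun y hy => hT2 y hy) ?_).trans h2
      intro y hy y' hy' hyy
      have e1 := (hs y hy).1
      have e2 := (hs y' hy').1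
      have e3 : pv y = pv y' := by rw [pv, pv, hv y hy y' hy']
      simp only at hyy
      rw [hyy, e2, e3] at e1
      have e4 : ε * io (pw y') = ε * io (pw y) := by linear_combination e1
      exact Prod.ext (hv y hy y' hy') (pw_inj (mul_left_cancel₀ hε e4)).symm
  · refine (Finset.card_le_card_of_injOn (s := T) (t := Y1) (fun y => y.1) (fun y hy => hT1 y hy) ?_).trans h1
    intro y hy y' hy' hyy
    simp only at hyy
    have e1 := (hs y hy).2
    have e2 := (hs y' hy').2
    have e3 : pv y = pv y' := by rw [pv, pv, hyy]
    rw [e2, e3] at e1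
    have e4 : β * io (pw y') = β * io (pw y) := by linear_combination e1
    exact Prod.ext hyy (pw_inj (mul_left_cancel₀ hβ e4)).symm

end gen

theorem rich0 {p : ℕ} [Fact p.Prime] (P Q : Finset (ZMod p × ZMod p × ZMod p)) (m R k q D' : ℕ)
    (hm0 : 0 < m) (hm : P.card ≤ m) (hq : 0 < q) (hD' : 0 < D') (hk1 : 1 ≤ k)
    (hqD : 12 * m ≤ q * (D' + 1) ^ 2) (hqR : 66 * q * D' ≤ R) (hp : 3 * D' < p)
    (hQ : ∀ y ∈ Q, y.2.1 ≠ 0)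
    (Y1 Y2 : Finset (ZMod p)) (h1 : Y1.card ≤ k) (h2 : Y2.card ≤ k) (hT1 : ∀ y ∈ Q, y.1 ∈ Y1)
    (hT2 : ∀ y ∈ Q, y.2.1 ∈ Y2)
    (h3 : ∀ a b, ∀ S ⊆ Q, (∀ y ∈ S, y.1 = a ∧ y.2.1 = b) → S.card ≤ k)
    (hR : ∀ y ∈ Q, R ≤ (P.filter (fun x => x.1 * y.1 + x.2.1 * y.2.1 + x.2.2 = y.2.2)).card) :
    Q.card ≤ 144 * D' ^ 2 + 6 * k * D' := by
  classical
  have hl1 : Function.Injective (li1 (K := ZMod p)) := fun x y h => li1_inj (congrArg (fun l => l.2.2) h)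
  have hl2 : Function.Injective (li2 (K := ZMod p)) := fun x y h => li2_inj (congrArg (fun l => l.1) h)
  have hc2 : (Q.image li2).card = Q.card := Finset.card_image_of_injective _ hl2
  rw [← hc2]
  haveI : CharP (FF (ZMod p)) p :=
    charP_of_injective_ringHom (f := (algebraMap (ZMod p)[X] (RatFunc (ZMod p))).comp C)
      ((RatFunc.algebraMap_injective _).comp C_injective) p
  let inv : FF (ZMod p) × FF (ZMod p) × FF (ZMod p) → ZMod p × ZMod p × ZMod p := Function.invFun li2
  have hinv : ∀ y, inv (li2 y) = y := Function.leftInverse_invFun hl2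
  refine richLines (P.image li1) (Q.image li2) m R k q D' hm0 ?_ hq hD' hk1 hqD hqR ?_ ?_ ?_ ?_
    (fun l => (P.filter (fun x => x.1 * (inv l).1 + x.2.1 * (inv l).2.1 + x.2.2 = (inv l).2.2)).image li1)
    ?_ ?_ ?_ ?_
  · exact Finset.card_image_le.trans hm
  · intro i hi hi' h0
    have := (CharP.cast_eq_zero_iff (FF (ZMod p)) p i).mp h0
    exact absurd (Nat.le_of_dvd hi this) (by omega)
  · intro l hl l' hl' h
    simp only [Finset.coe_image, Set.mem_image] at hl hl'
    obtain ⟨x, _, rfl⟩ := hl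
    obtain ⟨x', _, rfl⟩ := hl'
    rw [li1_inj h]
  · intro l hl l' hl' h
    simp only [Finset.coe_image, Set.mem_image] at hl hl'
    obtain ⟨x, _, rfl⟩ := hl
    obtain ⟨x', _, rfl⟩ := hl'
    rw [li2_inj h]
  · intro l hl
    rw [Finset.mem_image] at hl
    obtain ⟨y, hy, rfl⟩ := hl
    exact div_ne_zero (io_ne (pv_ne _)) (io_ne (by simpa using hQ y hy))
  · intro l hl
    exact Finset.image_subset_image (Finset.filter_subset _ _)
  · intro l hl
    rw [Finset.mem_image] at hl
    obtain ⟨y, hy, rfl⟩ := hl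
    rw [Finset.card_image_of_injective _ hl1, hinv]
    exact hR y hy
  · intro l hl b hb
    rw [Finset.mem_image] at hl hb
    obtain ⟨y, hy, rfl⟩ := hl
    obtain ⟨x, hx, rfl⟩ := hb
    rw [hinv, Finset.mem_filter] at hx
    exact meet x y (hQ y hy) hx.2
  · intro ε β γ δ T' hT' hv
    obtain ⟨S, hS, rfl⟩ := Finset.subset_image_iff.mp hT'
    rw [Finset.card_image_of_injective _ hl2]
    have hSQ : S ⊆ Q := by exact_mod_cast hS
    exact surface_count S k (fun y hy => hQ y (hSQ hy)) Y1 Y2 h1 h2 (fun y hy => hT1 y (hSQ hy))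
      (fun y hy => hT2 y (hSQ hy)) (fun a b S' hS' => h3 a b S' (hS'.trans hSQ)) ε β γ δ
      (fun y hy => hv _ (Finset.mem_image_of_mem _ hy))

end
end SP


namespace SP

noncomputable section

theorem rich1 {p : ℕ} [Fact p.Prime] (P Q : Finset (ZMod p × ZMod p × ZMod p)) (m R k : ℕ)
    (hm : P.card ≤ m) (hk1 : 1 ≤ k) (hR1 : 1 ≤ R) (hRm : R ≤ m) (hRm2 : 104610 * m ≤ R ^ 2)
    (hp : 4755 * m < p * R)
    (hQ : ∀ y ∈ Q, y.2.1 ≠ 0)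
    (Y1 Y2 : Finset (ZMod p)) (h1 : Y1.card ≤ k) (h2 : Y2.card ≤ k) (hT1 : ∀ y ∈ Q, y.1 ∈ Y1)
    (hT2 : ∀ y ∈ Q, y.2.1 ∈ Y2)
    (h3 : ∀ a b, ∀ S ⊆ Q, (∀ y ∈ S, y.1 = a ∧ y.2.1 = b) → S.card ≤ k)
    (hR : ∀ y ∈ Q, R ≤ (P.filter (fun x => x.1 * y.1 + x.2.1 * y.2.1 + x.2.2 = y.2.2)).card) :
    (Q.card : ℝ) ≤ 4 * 10 ^ 8 * ((m : ℝ) ^ 2 / R ^ 2 + k * m / R) := by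
  obtain ⟨D', hD'⟩ : ∃ D', D' = 1584 * m / R + 1 := ⟨_, rfl⟩
  obtain ⟨q, hq⟩ : ∃ q, q = R / (66 * D') := ⟨_, rfl⟩
  have a1 : D' * R ≤ 1585 * m := by
    have := Nat.div_mul_le_self (1584 * m) R
    rw [hD']; nlinarith
  have a2 : 1584 * m < D' * R := by
    have := Nat.lt_div_mul_add (a := 1584 * m) (b := R) (by omega)
    rw [hD']; nlinarith
  have hD0 : 0 < D' := by rw [hD']; exact Nat.succ_pos _
  have a3 : 66 * D' ≤ R := by
    have : (66 * D') * R ≤ R * R := by nlinarith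
    exact Nat.le_of_mul_le_mul_right this (by omega)
  have hq0 : 0 < q := by rw [hq]; exact Nat.div_pos a3 (by omega)
  have a4 : q * (66 * D') ≤ R := by rw [hq]; exact Nat.div_mul_le_self _ _
  have a5 : R < q * (66 * D') + 66 * D' := by
    rw [hq]; exact Nat.lt_div_mul_add (by omega)
  have a6 : R ≤ 132 * (q * D') := by nlinarith
  have a7 : 12 * m ≤ q * (D' + 1) ^ 2 := by
    have : D' * R ≤ D' * (132 * (q * D')) := Nat.mul_le_mul_left _ a6
    nlinarith
  have a8 : 3 * D' < p := by
    have : (3 * D') * R < p * R := by nlinarith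
    exact Nat.lt_of_mul_lt_mul_right this
  have := rich0 P Q m R k q D' (by omega) hm hq0 hD0 hk1 a7 (by nlinarith) a8 hQ Y1 Y2 h1 h2 hT1 hT2 h3 hR
  have hRr : (0 : ℝ) < R := by exact_mod_cast hR1
  have b1 : (D' : ℝ) ≤ 1585 * (m / R) := by
    rw [← mul_div_assoc, le_div_iff₀ hRr]; exact_mod_cast a1
  have b2 : (Q.card : ℝ) ≤ 144 * D' ^ 2 + 6 * k * D' := by exact_mod_cast this
  have hkr : (0 : ℝ) ≤ k := by positivity
  have b3 : (D' : ℝ) ^ 2 ≤ (1585 * (m / R)) ^ 2 := by gcongr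
  have b4 : (k : ℝ) * D' ≤ k * (1585 * (m / R)) := by gcongr
  have e1 : (m : ℝ) ^ 2 / R ^ 2 = (m / R) ^ 2 := by rw [div_pow]
  have e2 : (k : ℝ) * m / R = k * (m / R) := by ring
  rw [e1, e2]
  have : (0 : ℝ) ≤ k * (m / R) := by positivity
  nlinarith [sq_nonneg ((m : ℝ) / R)]

theorem incid {p : ℕ} [Fact p.Prime] (P Q : Finset (ZMod p × ZMod p × ZMod p)) (m k : ℕ)
    (hm : P.card ≤ m) (hmQ : Q.card ≤ m) (hk1 : 1 ≤ k) (hm1 : 1 ≤ m)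
    (hQ : ∀ y ∈ Q, y.2.1 ≠ 0)
    (Y1 Y2 : Finset (ZMod p)) (h1 : Y1.card ≤ k) (h2 : Y2.card ≤ k) (hT1 : ∀ y ∈ Q, y.1 ∈ Y1)
    (hT2 : ∀ y ∈ Q, y.2.1 ∈ Y2)
    (h3 : ∀ a b, ∀ S ⊆ Q, (∀ y ∈ S, y.1 = a ∧ y.2.1 = b) → S.card ≤ k) :
    (((P ×ˢ Q).filter (fun z => z.1.1 * z.2.1 + z.1.2.1 * z.2.2.1 + z.1.2.2 = z.2.2.2)).card : ℝ) ≤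
      10 ^ 9 * (1 + Real.log m) * (m * √m + k * m + (m : ℝ) ^ 2 / p) := by
  classical
  set f : ZMod p × ZMod p × ZMod p → ℕ := fun y =>
    (P.filter (fun x => x.1 * y.1 + x.2.1 * y.2.1 + x.2.2 = y.2.2)).card with hf
  have hp0 : (0 : ℝ) < p := by exact_mod_cast (Fact.out : p.Prime).pos
  have hm0 : (0 : ℝ) < m := by exact_mod_cast hm1
  have e1 : ((P ×ˢ Q).filter (fun z => z.1.1 * z.2.1 + z.1.2.1 * z.2.2.1 + z.1.2.2 = z.2.2.2)).card =
      ∑ y ∈ Q, f y := by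
    simp only [hf, Finset.card_filter]
    rw [Finset.sum_product_right]
  have hfm : ∀ y, f y ≤ m := fun y => (Finset.card_filter_le _ _).trans hm
  have e2 : ∑ y ∈ Q, f y = ∑ r ∈ Finset.Icc 1 m, (Q.filter (fun y => r ≤ f y)).card := by
    simp only [Finset.card_filter]
    rw [Finset.sum_comm]
    apply Finset.sum_congr rfl
    intro y _
    rw [← Finset.card_filter]
    have : (Finset.Icc 1 m).filter (fun r => r ≤ f y) = Finset.Icc 1 (f y) := by
      ext r; simp only [Finset.mem_filter, Finset.mem_Icc]; have := hfm y; omega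
    rw [this]; simp
  set R0 : ℝ := 400 * √m + 5000 * (m / p) with hR0
  have hs : √(m : ℝ) * √m = m := Real.mul_self_sqrt hm0.le
  have hs0 : 0 < √(m : ℝ) := Real.sqrt_pos.mpr hm0
  have hmp : 0 < (m : ℝ) / p := by positivity
  set M : ℝ := m * R0 + 4 * 10 ^ 8 * (m * √m + k * m) with hM
  have hM0 : 0 ≤ M := by positivity
  have key : ∀ r ∈ Finset.Icc 1 m, ((Q.filter (fun y => r ≤ f y)).card : ℝ) ≤ M * (r : ℝ)⁻¹ := by
    intro r hr
    rw [Finset.mem_Icc] at hr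
    have hr0 : (0 : ℝ) < r := by exact_mod_cast hr.1
    rw [← div_eq_mul_inv, le_div_iff₀ hr0]
    by_cases hlt : (r : ℝ) < R0
    · have c1 : ((Q.filter (fun y => r ≤ f y)).card : ℝ) ≤ m := by
        exact_mod_cast (Finset.card_filter_le _ _).trans hmQ
      have : ((Q.filter (fun y => r ≤ f y)).card : ℝ) * r ≤ m * R0 := by gcongr
      have : (0 : ℝ) ≤ m * √m + k * m := by positivity
      rw [hM]; linarith
    · push Not at hlt
      have d1 : 400 * √(m : ℝ) ≤ r := by rw [hR0] at hlt; nlinarith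
      have d2 : 5000 * ((m : ℝ) / p) ≤ r := by rw [hR0] at hlt; nlinarith
      have c2 : 104610 * m ≤ r ^ 2 := by
        have : (104610 : ℝ) * m ≤ (r : ℝ) ^ 2 := by nlinarith
        exact_mod_cast this
      have c3 : 4755 * m < p * r := by
        have : (4755 : ℝ) * m < p * r := by
          rw [← mul_div_assoc, div_le_iff₀ hp0] at d2
          nlinarith
        exact_mod_cast this
      have := rich1 P (Q.filter (fun y => r ≤ f y)) m r k hm hk1 hr.1 hr.2 c2 c3
        (fun y hy => hQ y (Finset.mem_filter.mp hy).1) Y1 Y2 h1 h2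
        (fun y hy => hT1 y (Finset.mem_filter.mp hy).1)
        (fun y hy => hT2 y (Finset.mem_filter.mp hy).1)
        (fun a b S hS => h3 a b S (hS.trans (Finset.filter_subset _ _)))
        (fun y hy => (Finset.mem_filter.mp hy).2)
      have c4 : (m : ℝ) ^ 2 / r ^ 2 * r ≤ m * √m := by
        have : (m : ℝ) ^ 2 / r ^ 2 * r = m ^ 2 / r := by field_simp
        rw [this, div_le_iff₀ hr0]
        have : (m : ℝ) * √m * (√m) ≤ m * √m * r := by
          have : √(m : ℝ) ≤ r := by linarith
          gcongr
        nlinarith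
      have c5 : (k : ℝ) * m / r * r = k * m := by field_simp
      have c6 : ((Q.filter (fun y => r ≤ f y)).card : ℝ) * r ≤
          4 * 10 ^ 8 * ((m : ℝ) ^ 2 / r ^ 2 + k * m / r) * r := by gcongr
      have : 0 ≤ (m : ℝ) * R0 := by positivity
      rw [hM]
      nlinarith
  rw [e1, e2]
  push_cast
  calc _ ≤ ∑ r ∈ Finset.Icc 1 m, M * (r : ℝ)⁻¹ := Finset.sum_le_sum key
    _ = M * ∑ r ∈ Finset.Icc 1 m, (r : ℝ)⁻¹ := by rw [Finset.mul_sum]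
    _ ≤ M * (1 + Real.log m) := by
        gcongr
        have := harmonic_le_one_add_log m
        rw [harmonic_eq_sum_Icc] at this
        push_cast at this
        exact this
    _ ≤ _ := by
        have hl : 0 ≤ Real.log m := Real.log_nonneg (by exact_mod_cast hm1)
        have : M ≤ 10 ^ 9 * (m * √m + k * m + (m : ℝ) ^ 2 / p) := by
          have e : (m : ℝ) ^ 2 / p = m * (m / p) := by ring
          rw [hM, hR0, e]
          have t1 : 0 ≤ (m : ℝ) * √m := by positivity
          have t2 : 0 ≤ (k : ℝ) * m := by positivity
          have t3 : 0 ≤ (m : ℝ) * (m / p) := by positivity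
          nlinarith
        calc M * (1 + Real.log m) ≤ (10 ^ 9 * (m * √m + k * m + (m : ℝ) ^ 2 / p)) * (1 + Real.log m) := by
              gcongr
          _ = _ := by ring

end
end SP


namespace SP

noncomputable section

/-- number of collisions of `f` on `T`. -/
def coll {α β : Type*} [DecidableEq β] (T : Finset α) (f : α → β) : ℕ :=
  ((T ×ˢ T).filter (fun z => f z.1 = f z.2)).card

lemma coll_eq {α β : Type*} [DecidableEq β] (T : Finset α) (f : α → β) (S : Finset β)
    (hS : ∀ a ∈ T, f a ∈ S) : coll T f = ∑ b ∈ S, (T.filter (fun a => f a = b)).card ^ 2 := by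
  classical
  rw [coll, Finset.card_eq_sum_card_fiberwise (t := S) (f := fun z => f z.1)]
  · apply Finset.sum_congr rfl
    intro b _
    rw [pow_two, ← Finset.card_product]
    congr 1
    ext ⟨x, y⟩
    simp only [Finset.mem_filter, Finset.mem_product]
    constructor
    · rintro ⟨⟨⟨h1, h2⟩, h3⟩, h4⟩
      exact ⟨⟨h1, h4⟩, h2, h3 ▸ h4⟩
    · rintro ⟨⟨h1, h4⟩, h2, h3⟩
      exact ⟨⟨⟨h1, h2⟩, h4.trans h3.symm⟩, h4⟩
  · intro z hz
    simp at hz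
    exact hS _ hz.1.1

lemma coll_cs {α β : Type*} [DecidableEq β] (T : Finset α) (f : α → β) (S : Finset β)
    (hS : ∀ a ∈ T, f a ∈ S) : T.card ^ 2 ≤ S.card * coll T f := by
  classical
  rw [coll_eq T f S hS, Finset.card_eq_sum_card_fiberwise (t := S) (f := f) hS]
  exact sq_sum_le_card_mul_sum_sq

lemma coll_mono {α β : Type*} [DecidableEq β] {T T' : Finset α} (h : T ⊆ T') (f : α → β) :
    coll T f ≤ coll T' f := by
  apply Finset.card_le_card
  apply Finset.filter_subset_filter
  exact Finset.product_subset_product h h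

variable {p : ℕ} [Fact p.Prime]

lemma J1_bound (U V S : Finset (ZMod p)) (hV : (0 : ZMod p) ∉ V) (m k : ℕ)
    (hm : U.card * (V.card * S.card) ≤ m) (hm1 : 1 ≤ m) (hk1 : 1 ≤ k) (hU : U.card ≤ k) (hVk : V.card ≤ k)
    (hS : S.card ≤ k) :
    (coll (U ×ˢ V ×ˢ S) (fun t => t.1 * t.2.1 + t.2.2) : ℝ) ≤
      10 ^ 9 * (1 + Real.log m) * (m * √m + k * m + (m : ℝ) ^ 2 / p) := by
  classical
  let T := U ×ˢ V ×ˢ S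
  have hTc : T.card ≤ m := by simpa [T, Finset.card_product] using hm
  let P := T.image (fun t : ZMod p × ZMod p × ZMod p => (- t.2.1, t.1, t.2.2))
  have hPc : P.card ≤ m := Finset.card_image_le.trans hTc
  refine le_trans ?_ (incid P T m k hPc hTc hk1 hm1 ?_ U V hU hVk ?_ ?_ ?_)
  · rw [coll]
    norm_cast
    apply Finset.card_le_card_of_injOn (fun z : (ZMod p × ZMod p × ZMod p) × (ZMod p × ZMod p × ZMod p) =>
      ((- z.2.2.1, z.1.1, z.1.2.2), (z.2.1, z.1.2.1, z.2.2.2)))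
    · rintro ⟨⟨u, v, s⟩, ⟨u', v', s'⟩⟩ hz
      simp only [Finset.coe_filter, Finset.mem_product, Set.mem_setOf_eq] at hz
      obtain ⟨⟨⟨h1, h2, h3⟩, h4, h5, h6⟩, h7⟩ := hz
      simp only [Finset.coe_filter, Finset.mem_product, Set.mem_setOf_eq]
      refine ⟨⟨?_, ?_⟩, ?_⟩
      · simp only [P, Finset.mem_image]
        exact ⟨(u, v', s), by simp [T, h1, h5, h3], rfl⟩
      · simp [T, h4, h2, h6]
      · linear_combination h7
    · rintro ⟨⟨u, v, s⟩, ⟨u', v', s'⟩⟩ hz ⟨⟨u1, v1, s1⟩, ⟨u1', v1', s1'⟩⟩ hz1 h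
      simp at h
      simp [h]
  · intro y hy h0
    simp only [T, Finset.mem_product] at hy
    exact hV (h0 ▸ hy.2.1)
  · intro y hy
    simp only [T, Finset.mem_product] at hy
    exact hy.1
  · intro y hy
    simp only [T, Finset.mem_product] at hy
    exact hy.2.1
  · intro a b S' hS' hab
    refine (Finset.card_le_card_of_injOn (s := S') (t := S) (fun y => y.2.2) ?_ ?_).trans hS
    · intro y hy
      have := hS' hy
      simp only [T, Finset.mem_product] at this
      exact this.2.2
    · intro y hy y' hy' h
      have h1 := hab y hy
      have h2 := hab y' hy'
      exact Prod.ext (h1.1.trans h2.1.symm) (Prod.ext (h1.2.trans h2.2.symm) h)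

lemma J2_bound (A B X : Finset (ZMod p)) (hA : (0 : ZMod p) ∉ A) (m k : ℕ)
    (hm : A.card * (B.card * X.card) ≤ m) (hm1 : 1 ≤ m) (hk1 : 1 ≤ k) (hAk : A.card ≤ k) (hBk : B.card ≤ k)
    (hX : X.card ≤ k) :
    (coll (A ×ˢ B ×ˢ X) (fun t => t.1 * (t.2.1 + t.2.2)) : ℝ) ≤
      10 ^ 9 * (1 + Real.log m) * (m * √m + k * m + (m : ℝ) ^ 2 / p) := by
  classical
  let T := A ×ˢ B ×ˢ X
  have hTc : T.card ≤ m := by simpa [T, Finset.card_product] using hm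
  let P := T.image (fun t : ZMod p × ZMod p × ZMod p => (t.1, t.2.1, - (t.1 * t.2.2)))
  let Q := T.image (fun t : ZMod p × ZMod p × ZMod p => (- t.2.1, t.1, - (t.1 * t.2.2)))
  have hPc : P.card ≤ m := Finset.card_image_le.trans hTc
  have hQc : Q.card ≤ m := Finset.card_image_le.trans hTc
  have hQ : ∀ y ∈ Q, y.1 ∈ B.image (fun b => - b) ∧ y.2.1 ∈ A ∧ ∃ x ∈ X, y.2.2 = - (y.2.1 * x) := by
    intro y hy
    simp only [Q, Finset.mem_image] at hy
    obtain ⟨⟨c, b, x⟩, ht, rfl⟩ := hy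
    simp only [T, Finset.mem_product] at ht
    exact ⟨Finset.mem_image_of_mem _ ht.2.1, ht.1, x, ht.2.2, rfl⟩
  refine le_trans ?_ (incid P Q m k hPc hQc hk1 hm1 ?_ (B.image (fun b => - b)) A
    (Finset.card_image_le.trans hBk) hAk ?_ ?_ ?_)
  · rw [coll]
    norm_cast
    apply Finset.card_le_card_of_injOn (fun z : (ZMod p × ZMod p × ZMod p) × (ZMod p × ZMod p × ZMod p) =>
      ((z.2.1, z.1.2.1, - (z.2.1 * z.2.2.2)), (- z.2.2.1, z.1.1, - (z.1.1 * z.1.2.2))))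
    · rintro ⟨⟨u, v, s⟩, ⟨u', v', s'⟩⟩ hz
      simp only [Finset.coe_filter, Finset.mem_product, Set.mem_setOf_eq] at hz
      obtain ⟨⟨⟨h1, h2, h3⟩, h4, h5, h6⟩, h7⟩ := hz
      simp only [Finset.coe_filter, Finset.mem_product, Set.mem_setOf_eq]
      refine ⟨⟨?_, ?_⟩, ?_⟩
      · simp only [P, Finset.mem_image]
        exact ⟨(u', v, s'), by simp [T, h4, h2, h6], rfl⟩
      · simp only [Q, Finset.mem_image]
        exact ⟨(u, v', s), by simp [T, h1, h5, h3], rfl⟩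
      · linear_combination h7
    · rintro ⟨⟨u, v, s⟩, ⟨u', v', s'⟩⟩ hz ⟨⟨u1, v1, s1⟩, ⟨u1', v1', s1'⟩⟩ hz1 h
      simp only [Finset.coe_filter, Finset.mem_product, Set.mem_setOf_eq] at hz
      have hu : u ≠ 0 := fun h0 => hA (h0 ▸ hz.1.1.1)
      have hu' : u' ≠ 0 := fun h0 => hA (h0 ▸ hz.1.2.1)
      simp only [Prod.mk.injEq, neg_inj] at h
      obtain ⟨⟨h1, h2, h3⟩, h4, h5, h6⟩ := h
      subst h1 h2 h4 h5
      rw [mul_left_cancel₀ hu h6, mul_left_cancel₀ hu' h3]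
  · intro y hy h0
    exact hA (h0 ▸ (hQ y hy).2.1)
  · intro y hy
    exact (hQ y hy).1
  · intro y hy
    exact (hQ y hy).2.1
  · intro a b S' hS' hab
    have : S' ⊆ X.image (fun x => (a, b, - (b * x))) := by
      intro y hy
      have h1 := hab y hy
      obtain ⟨_, _, x, hx, hxx⟩ := hQ y (hS' hy)
      rw [Finset.mem_image]
      refine ⟨x, hx, ?_⟩
      rw [h1.2] at hxx
      exact Prod.ext h1.1.symm (Prod.ext h1.2.symm hxx.symm)
    exact ((Finset.card_le_card this).trans Finset.card_image_le).trans hX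

end
end SP


namespace SP
open Pointwise

noncomputable section

lemma sum_inv_le (n : ℕ) : ∑ r ∈ Finset.Icc 1 n, (r : ℝ)⁻¹ ≤ 1 + Real.log n := by
  have := harmonic_le_one_add_log n
  rw [harmonic_eq_sum_Icc] at this
  push_cast at this
  exact this

lemma pow4_le (r : ℕ) : r ^ 4 ≤ ∑ σ ∈ Finset.Icc 1 r, 4 * σ ^ 3 := by
  induction r with
  | zero => simp
  | succ r ih =>
    rw [Finset.sum_Icc_succ_top (by omega)]
    nlinarith [Nat.zero_le r, pow_pos (Nat.succ_pos r) 2]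

lemma layer4 {α : Type*} (D : Finset α) (r : α → ℕ) (n : ℕ) (hr : ∀ t ∈ D, r t ≤ n) (Z : ℝ) (hZ : 0 ≤ Z)
    (h : ∀ σ ∈ Finset.Icc 1 n, (σ : ℝ) ^ 4 * (D.filter (fun t => σ ≤ r t)).card ≤ Z) :
    ((∑ t ∈ D, r t ^ 4 : ℕ) : ℝ) ≤ 4 * Z * (1 + Real.log n) := by
  have h1 : ∑ t ∈ D, r t ^ 4 ≤ ∑ σ ∈ Finset.Icc 1 n, 4 * σ ^ 3 * (D.filter (fun t => σ ≤ r t)).card := by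
    calc _ ≤ ∑ t ∈ D, ∑ σ ∈ Finset.Icc 1 n, if σ ≤ r t then 4 * σ ^ 3 else 0 := by
          apply Finset.sum_le_sum
          intro t ht
          refine (pow4_le _).trans ?_
          rw [← Finset.sum_filter]
          apply Finset.sum_le_sum_of_subset
          intro σ hσ
          have := hr t ht
          simp at hσ ⊢
          omega
      _ = _ := by
          rw [Finset.sum_comm]
          apply Finset.sum_congr rfl
          intro σ _
          rw [← Finset.sum_filter, Finset.sum_const, smul_eq_mul, mul_comm]
  calc ((∑ t ∈ D, r t ^ 4 : ℕ) : ℝ) ≤ ((∑ σ ∈ Finset.Icc 1 n, 4 * σ ^ 3 * (D.filter (fun t => σ ≤ r t)).card : ℕ) : ℝ) := by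
        exact_mod_cast h1
    _ ≤ ∑ σ ∈ Finset.Icc 1 n, 4 * Z * (σ : ℝ)⁻¹ := by
        push_cast
        apply Finset.sum_le_sum
        intro σ hσ
        have h2 := h σ hσ
        have : (0 : ℝ) < σ := by
          rw [Finset.mem_Icc] at hσ; exact_mod_cast hσ.1
        rw [← div_eq_mul_inv, le_div_iff₀ this]
        linarith
    _ = 4 * Z * ∑ σ ∈ Finset.Icc 1 n, (σ : ℝ)⁻¹ := by rw [Finset.mul_sum]
    _ ≤ _ := by
        gcongr
        exact sum_inv_le n

def LL (n : ℕ) : ℝ := 2 * 10 ^ 9 * (1 + 6 * Real.log n)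

lemma LL_ge (n : ℕ) : 1 ≤ LL n := by
  have : 0 ≤ Real.log n := Real.log_natCast_nonneg n
  rw [LL]; linarith

lemma log_le (n m : ℕ) (hm1 : 1 ≤ m) (hm : m ≤ n ^ 6) : 1 + Real.log m ≤ 1 + 6 * Real.log n := by
  have h1 : Real.log m ≤ Real.log ((n : ℝ) ^ 6) := by
    apply Real.log_le_log
    · exact_mod_cast hm1
    · exact_mod_cast hm
  rw [Real.log_pow] at h1
  push_cast at h1
  linarith

lemma L_bound (n m k p : ℕ) (hm1 : 1 ≤ m) (hm : m ≤ n ^ 6) (hk : k ^ 2 ≤ m) :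
    10 ^ 9 * (1 + Real.log m) * (m * √m + k * m + (m : ℝ) ^ 2 / p) ≤
      LL n * (m * √m + (m : ℝ) ^ 2 / p) := by
  have h1 := log_le n m hm1 hm
  have h0 : 0 ≤ Real.log m := Real.log_natCast_nonneg m
  have h2 : (k : ℝ) ≤ √m := by
    apply Real.le_sqrt_of_sq_le
    exact_mod_cast hk
  have h3 : (k : ℝ) * m ≤ m * √m := by rw [mul_comm]; gcongr
  have h4 : (0 : ℝ) ≤ (m : ℝ) ^ 2 / p := by positivity
  calc _ ≤ 10 ^ 9 * (1 + 6 * Real.log n) * (2 * (m * √m + (m : ℝ) ^ 2 / p)) := by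
        gcongr
        linarith
    _ = _ := by rw [LL]; ring

variable {p : ℕ} [Fact p.Prime]

def rm (A B : Finset (ZMod p)) (t : ZMod p) : ℕ := ((A ×ˢ B).filter (fun z => z.1 - z.2 = t)).card

lemma rm_le (A B : Finset (ZMod p)) (t : ZMod p) : rm A B t ≤ A.card := by
  apply Finset.card_le_card_of_injOn (fun z => z.1)
  · intro z hz; simp at hz; exact hz.1.1
  · rintro ⟨a, b⟩ hz ⟨a', b'⟩ hz' h
    simp at hz hz' h
    have := hz.2.trans hz'.2.symm
    rw [h] at this
    simp at this
    rw [h, this]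

lemma sum_rm_le (A B Y : Finset (ZMod p)) : ∑ t ∈ Y, rm A B t ≤ A.card * B.card := by
  classical
  rw [← Finset.card_product]
  calc _ ≤ ∑ t : ZMod p, rm A B t := Finset.sum_le_sum_of_subset (Finset.subset_univ _)
    _ = _ := by
      rw [Finset.card_eq_sum_card_fiberwise (t := Finset.univ) (f := fun z : ZMod p × ZMod p => z.1 - z.2)]
      · rfl
      · intro z _; simp

def Yl (A B : Finset (ZMod p)) (σ : ℕ) : Finset (ZMod p) := Finset.univ.filter (fun t => σ ≤ rm A B t)

lemma Yl_card (A B : Finset (ZMod p)) (σ : ℕ) : σ * (Yl A B σ).card ≤ A.card * B.card := by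
  refine le_trans ?_ (sum_rm_le A B (Yl A B σ))
  rw [mul_comm, ← smul_eq_mul]
  apply Finset.card_nsmul_le_sum
  intro t ht
  simpa [Yl] using ht

theorem E4_bound (A : Finset (ZMod p)) (hA0 : (0 : ZMod p) ∉ A) (n N : ℕ) (hn : A.card = n) (hn1 : 1 ≤ n)
    (hM : (A * A).card ≤ N) :
    ((∑ t, rm A A t ^ 4 : ℕ) : ℝ) ≤ 4 * (4 * N ^ 2 * LL n ^ 2 * n ^ 2 + 2 * N * LL n * n ^ 5 / p) *
      (1 + Real.log n) := by
  classical
  have hL := LL_ge n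
  have hp0 : (0 : ℝ) < p := by exact_mod_cast (Fact.out : p.Prime).pos
  have hn0 : (0 : ℝ) < n := by exact_mod_cast hn1
  have hN0 : (0 : ℝ) ≤ N := by positivity
  apply layer4 _ _ _ (fun t _ => hn ▸ rm_le A A t) _ (by positivity)
  intro σ hσ
  rw [Finset.mem_Icc] at hσ
  change (σ : ℝ) ^ 4 * (Yl A A σ).card ≤ _
  set Y := Yl A A σ with hY
  rcases Nat.eq_zero_or_pos Y.card with h0 | hy1
  · rw [h0]; simp; positivity
  have hσy : σ * Y.card ≤ n ^ 2 := by have := Yl_card A A σ; rw [hn] at this; rw [pow_two]; exact this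
  have hyn : Y.card ≤ n ^ 2 := le_trans (by nlinarith) hσy
  have hT : (n * (σ * Y.card)) ^ 2 ≤ N * coll (A ×ˢ A ×ˢ Y) (fun t => t.1 * (t.2.1 + t.2.2)) := by
    let T := (A ×ˢ A ×ˢ Y).filter (fun t => t.2.1 + t.2.2 ∈ A)
    have h1 : n * (σ * Y.card) ≤ T.card := by
      have e1 : T = A ×ˢ ((A ×ˢ Y).filter (fun t => t.1 + t.2 ∈ A)) := by
        ext ⟨a, b, c⟩; simp [T]; tauto
      rw [e1, Finset.card_product, hn]
      apply Nat.mul_le_mul_left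
      rw [Finset.card_filter, Finset.sum_product_right, mul_comm, ← smul_eq_mul]
      apply Finset.card_nsmul_le_sum
      intro t ht
      have ht' : σ ≤ rm A A t := by simpa [hY, Yl] using ht
      refine ht'.trans ?_
      rw [← Finset.card_filter]
      apply Finset.card_le_card_of_injOn (fun z => z.2)
      · rintro ⟨a, b⟩ hz
        simp at hz ⊢
        refine ⟨hz.1.2, ?_⟩
        rw [← hz.2]; simpa using hz.1.1
      · rintro ⟨a, b⟩ hz ⟨a', b'⟩ hz' h
        simp at hz hz' h
        have := hz.2.trans hz'.2.symm
        rw [h] at this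
        simp at this
        rw [h, this]
    have h2 := coll_cs T (fun t => t.1 * (t.2.1 + t.2.2)) (A * A) (by
      rintro ⟨a, b, c⟩ h
      simp [T] at h
      exact Finset.mul_mem_mul h.1.1 h.2)
    have h3 := coll_mono (Finset.filter_subset (fun t : ZMod p × ZMod p × ZMod p => t.2.1 + t.2.2 ∈ A) (A ×ˢ A ×ˢ Y)) (fun t => t.1 * (t.2.1 + t.2.2))
    calc _ ≤ T.card ^ 2 := Nat.pow_le_pow_left h1 2
      _ ≤ _ := h2
      _ ≤ _ := Nat.mul_le_mul hM h3
  have hJ := J2_bound A A Y hA0 (n ^ 2 * Y.card) (max n Y.card) (by rw [hn]; nlinarith) (by nlinarith [Nat.one_le_pow 2 n hn1])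
    (le_max_of_le_left hn1) (hn ▸ le_max_left _ _) (hn ▸ le_max_left _ _) (le_max_right _ _)
  have hLb := L_bound n (n ^ 2 * Y.card) (max n Y.card) p (by nlinarith [Nat.one_le_pow 2 n hn1])
    (by
      calc n ^ 2 * Y.card ≤ n ^ 2 * n ^ 2 := Nat.mul_le_mul_left _ hyn
        _ = n ^ 4 := by ring
        _ ≤ n ^ 6 := Nat.pow_le_pow_right hn1 (by norm_num))
    (by
      rcases max_choice n Y.card with h | h <;> rw [h]
      · nlinarith [Nat.zero_le (n ^ 2)]
      · nlinarith)
  have hJ2 := hJ.trans hLb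
  have hT' : ((n : ℝ) * (σ * Y.card)) ^ 2 ≤ N * (LL n * (((n ^ 2 * Y.card : ℕ) : ℝ) * √((n ^ 2 * Y.card : ℕ) : ℝ) +
      ((n ^ 2 * Y.card : ℕ) : ℝ) ^ 2 / p)) := by
    calc ((n : ℝ) * (σ * Y.card)) ^ 2 ≤ N * (coll (A ×ˢ A ×ˢ Y) (fun t => t.1 * (t.2.1 + t.2.2)) : ℝ) := by
          exact_mod_cast hT
      _ ≤ _ := by gcongr
  obtain ⟨w, hw, hw0⟩ : ∃ w : ℝ, w ^ 2 = Y.card ∧ 0 < w :=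
    ⟨√Y.card, Real.sq_sqrt (by positivity), Real.sqrt_pos.mpr (by exact_mod_cast hy1)⟩
  have hsq : √((n ^ 2 * Y.card : ℕ) : ℝ) = n * w := by
    push_cast
    rw [← hw, ← mul_pow, Real.sqrt_sq (by positivity)]
  rw [hsq] at hT'
  push_cast at hT'
  rw [← hw] at hT' ⊢
  have hσy' : (σ : ℝ) * w ^ 2 ≤ n ^ 2 := by rw [hw]; exact_mod_cast hσy
  have hσn : (σ : ℝ) ≤ n := by exact_mod_cast hσ.2
  have hσ0 : (0 : ℝ) < σ := by exact_mod_cast hσ.1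
  have hmain : (σ : ℝ) ^ 2 * w ≤ N * LL n * n + N * LL n * n ^ 2 / p * w := by
    have : ((n : ℝ) ^ 2 * w ^ 3) * ((σ : ℝ) ^ 2 * w) ≤ ((n : ℝ) ^ 2 * w ^ 3) * (N * LL n * n + N * LL n * n ^ 2 / p * w) := by
      calc _ = ((n : ℝ) * (σ * w ^ 2)) ^ 2 := by ring
        _ ≤ _ := hT'
        _ = _ := by ring
    exact le_of_mul_le_mul_left this (by positivity)
  by_cases hc : 2 * (N * LL n * n ^ 2 / p) ≤ (σ : ℝ) ^ 2
  · have h1 : (σ : ℝ) ^ 2 * w ≤ 2 * (N * LL n * n) := by nlinarith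
    have h2 : ((σ : ℝ) ^ 2 * w) ^ 2 ≤ (2 * (N * LL n * n)) ^ 2 := by gcongr
    have h3 : (0 : ℝ) ≤ 2 * N * LL n * n ^ 5 / p := by positivity
    nlinarith
  · push Not at hc
    have h1 : (σ : ℝ) ^ 2 * w ^ 2 ≤ n ^ 3 := by
      calc (σ : ℝ) ^ 2 * w ^ 2 = σ * (σ * w ^ 2) := by ring
        _ ≤ (n : ℝ) * (n : ℝ) ^ 2 := by gcongr
        _ = (n : ℝ) ^ 3 := by ring
    have h2 : (σ : ℝ) ^ 2 * ((σ : ℝ) ^ 2 * w ^ 2) ≤ (2 * (N * LL n * n ^ 2 / p)) * n ^ 3 := by gcongr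
    have h3 : (2 * (N * LL n * n ^ 2 / p)) * (n : ℝ) ^ 3 = 2 * N * LL n * n ^ 5 / p := by ring
    have h4 : (0 : ℝ) ≤ 4 * N ^ 2 * LL n ^ 2 * n ^ 2 := by positivity
    calc (σ : ℝ) ^ 4 * w ^ 2 = (σ : ℝ) ^ 2 * ((σ : ℝ) ^ 2 * w ^ 2) := by ring
      _ ≤ _ := h2
      _ = _ := h3
      _ ≤ _ := by linarith

end
end SP


namespace SP
open Pointwise

noncomputable section

variable {p : ℕ} [Fact p.Prime]

def rp (A : Finset (ZMod p)) (t : ZMod p) : ℕ := ((A ×ˢ A).filter (fun z => z.1 + z.2 = t)).card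

def PP (A : Finset (ZMod p)) (N : ℕ) : Finset (ZMod p) :=
  (A + A).filter (fun s => A.card ^ 2 ≤ 2 * N * rp A s)

lemma W_card (A : Finset (ZMod p)) (N : ℕ) (hN : 0 < N) (h : (A + A).card ≤ N) :
    A.card ^ 2 ≤ 2 * ((A ×ˢ A).filter (fun z => z.1 + z.2 ∈ PP A N)).card := by
  classical
  have h1 : A.card ^ 2 = ((A ×ˢ A).filter (fun z => z.1 + z.2 ∈ PP A N)).card +
      ((A ×ˢ A).filter (fun z => ¬ z.1 + z.2 ∈ PP A N)).card := by
    rw [Finset.card_filter_add_card_filter_not, Finset.card_product, pow_two]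
  have h2 : 2 * N * ((A ×ˢ A).filter (fun z => ¬ z.1 + z.2 ∈ PP A N)).card ≤ N * A.card ^ 2 := by
    rw [Finset.card_eq_sum_card_fiberwise (t := A + A) (f := fun z : ZMod p × ZMod p => z.1 + z.2), Finset.mul_sum]
    · calc _ ≤ ∑ s ∈ A + A, A.card ^ 2 := by
            apply Finset.sum_le_sum
            intro s hs
            by_cases hsP : s ∈ PP A N
            · rw [Finset.filter_filter, Finset.filter_false_of_mem]
              · simp
              · rintro z hz ⟨h3, h4⟩
                exact h3 (h4 ▸ hsP)
            · have h5 : ¬ (A.card ^ 2 ≤ 2 * N * rp A s) := fun h6 => hsP (Finset.mem_filter.mpr ⟨hs, h6⟩)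
              push Not at h5
              refine le_trans ?_ h5.le
              apply Nat.mul_le_mul_left
              apply Finset.card_le_card
              apply Finset.filter_subset_filter
              exact Finset.filter_subset _ _
        _ ≤ _ := by
            rw [Finset.sum_const, smul_eq_mul]
            exact Nat.mul_le_mul_right _ h
    · intro z hz
      simp only [Finset.coe_filter, Finset.mem_product, Set.mem_setOf_eq] at hz
      exact Finset.add_mem_add hz.1.1 hz.1.2
  have h3 : 2 * ((A ×ˢ A).filter (fun z => ¬ z.1 + z.2 ∈ PP A N)).card ≤ A.card ^ 2 := by
    apply Nat.le_of_mul_le_mul_left _ hN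
    linarith
  linarith

def QQ (A P : Finset (ZMod p)) : Finset (ZMod p × ZMod p × ZMod p × ZMod p) :=
  (A ×ˢ A ×ˢ A ×ˢ A).filter (fun z => z.1 + z.2.2.1 ∈ P ∧ z.2.1 + z.2.2.1 ∈ P ∧ z.1 + z.2.2.2 ∈ P ∧ z.2.1 + z.2.2.2 ∈ P)

lemma QQ_card (A P : Finset (ZMod p)) :
    ((A ×ˢ A).filter (fun z => z.1 + z.2 ∈ P)).card ^ 4 ≤ A.card ^ 4 * (QQ A P).card := by
  classical
  set W := (A ×ˢ A).filter (fun z => z.1 + z.2 ∈ P) with hW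
  have hWm : ∀ z, z ∈ W ↔ (z.1 ∈ A ∧ z.2 ∈ A) ∧ z.1 + z.2 ∈ P := by
    intro z; rw [hW, Finset.mem_filter, Finset.mem_product]
  have h1 := coll_cs W (fun z => z.2) A (fun z hz => ((hWm z).1 hz).1.2)
  set T2 := (W ×ˢ W).filter (fun z => z.1.2 = z.2.2) with hT2
  have hc : coll W (fun z => z.2) = T2.card := rfl
  rw [hc] at h1
  have hTm : ∀ z, z ∈ T2 ↔ (z.1 ∈ W ∧ z.2 ∈ W) ∧ z.1.2 = z.2.2 := by
    intro z; rw [hT2, Finset.mem_filter, Finset.mem_product]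
  have h2 := coll_cs T2 (fun z => (z.1.1, z.2.1)) (A ×ˢ A) (by
    intro z hz
    have h3 := (hTm z).1 hz
    exact Finset.mem_product.mpr ⟨((hWm _).1 h3.1.1).1.1, ((hWm _).1 h3.1.2).1.1⟩)
  have h3 : coll T2 (fun z => (z.1.1, z.2.1)) ≤ (QQ A P).card := by
    apply Finset.card_le_card_of_injOn (s := (T2 ×ˢ T2).filter (fun z => (z.1.1.1, z.1.2.1) = (z.2.1.1, z.2.2.1)))
      (t := QQ A P) (fun z => (z.1.1.1, z.1.2.1, z.1.1.2, z.2.1.2))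
    · rintro ⟨⟨⟨a, c⟩, ⟨b, c'⟩⟩, ⟨⟨a', d⟩, ⟨b', d'⟩⟩⟩ hz
      simp only [Finset.coe_filter, Finset.mem_product, Set.mem_setOf_eq, hTm, hWm, Prod.mk.injEq] at hz
      simp only [QQ, Finset.coe_filter, Finset.mem_product, Set.mem_setOf_eq]
      obtain ⟨⟨⟨⟨⟨⟨h1, h2⟩, h3⟩, ⟨h4, h5⟩, h6⟩, h7⟩, ⟨⟨⟨h8, h9⟩, h10⟩, ⟨h11, h12⟩, h13⟩, h14⟩, h15, h16⟩ := hz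
      subst h7 h14 h15 h16
      exact ⟨⟨h1, h4, h2, h9⟩, h3, h6, h10, h13⟩
    · rintro ⟨⟨⟨a, c⟩, ⟨b, c'⟩⟩, ⟨⟨a', d⟩, ⟨b', d'⟩⟩⟩ hz ⟨⟨⟨a1, c1⟩, ⟨b1, c1'⟩⟩, ⟨⟨a1', d1⟩, ⟨b1', d1'⟩⟩⟩ hz' h
      simp only [Finset.coe_filter, Finset.mem_product, Set.mem_setOf_eq, hTm, hWm, Prod.mk.injEq] at hz hz' h
      obtain ⟨⟨⟨_, h7⟩, ⟨_, h14⟩⟩, h15, h16⟩ := hz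
      obtain ⟨⟨⟨_, h7'⟩, ⟨_, h14'⟩⟩, h15', h16'⟩ := hz'
      obtain ⟨e1, e2, e3, e4⟩ := h
      subst h7 h14 h15 h16 h7' h14' h15' h16' e1 e2 e3 e4
      rfl
  calc W.card ^ 4 = (W.card ^ 2) ^ 2 := by ring
    _ ≤ (A.card * T2.card) ^ 2 := Nat.pow_le_pow_left h1 2
    _ = A.card ^ 2 * T2.card ^ 2 := by ring
    _ ≤ A.card ^ 2 * ((A ×ˢ A).card * coll T2 (fun z => (z.1.1, z.2.1))) := Nat.mul_le_mul_left _ h2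
    _ ≤ A.card ^ 2 * ((A ×ˢ A).card * (QQ A P).card) := by gcongr
    _ = _ := by rw [Finset.card_product]; ring

lemma QQ_sq (A P : Finset (ZMod p)) :
    (QQ A P).card ^ 2 ≤ coll (P ×ˢ P) (fun z => z.1 - z.2) * ∑ t, rm A A t ^ 4 := by
  classical
  let g : ZMod p × ZMod p × ZMod p × ZMod p → (ZMod p × ZMod p) × (ZMod p × ZMod p) :=
    fun z => ((z.1 + z.2.2.1, z.2.1 + z.2.2.1), (z.1 + z.2.2.2, z.2.1 + z.2.2.2))
  have h1 := coll_cs (QQ A P) g (((P ×ˢ P) ×ˢ (P ×ˢ P)).filter (fun z => z.1.1 - z.1.2 = z.2.1 - z.2.2)) (by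
    rintro ⟨a, b, c, d⟩ hz
    simp only [QQ, Finset.mem_filter, Finset.mem_product] at hz
    simp only [g, Finset.mem_filter, Finset.mem_product]
    exact ⟨⟨⟨hz.2.1, hz.2.2.1⟩, hz.2.2.2.1, hz.2.2.2.2⟩, by ring⟩)
  refine h1.trans (Nat.mul_le_mul_left _ ?_)
  rw [coll, Finset.card_eq_sum_card_fiberwise (t := Finset.univ) (f := fun z => z.1.1 - z.2.1) (by intro z _; simp)]
  apply Finset.sum_le_sum
  intro t _
  let D := (A ×ˢ A).filter (fun z => z.1 - z.2 = t)
  have hD : rm A A t ^ 4 = (D ×ˢ D ×ˢ D ×ˢ D).card := by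
    simp only [Finset.card_product]
    change rm A A t ^ 4 = rm A A t * (rm A A t * (rm A A t * rm A A t))
    ring
  rw [hD, Finset.filter_filter]
  apply Finset.card_le_card_of_injOn (fun z => ((z.1.1, z.2.1), (z.1.2.1, z.2.2.1), (z.2.2.2.1, z.1.2.2.1), (z.2.2.2.2, z.1.2.2.2)))
  · rintro ⟨⟨a, b, c, d⟩, ⟨a', b', c', d'⟩⟩ hz
    simp only [Finset.coe_filter, Finset.mem_product, Set.mem_setOf_eq, QQ, Finset.mem_filter, g, Prod.mk.injEq] at hz
    obtain ⟨⟨⟨⟨h1, h2, h3, h4⟩, _⟩, ⟨h5, h6, h7, h8⟩, _⟩, ⟨⟨e1, e2⟩, e3, e4⟩, e5⟩ := hz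
    simp only [Finset.mem_coe, D, Finset.mem_product, Finset.mem_filter]
    refine ⟨⟨⟨h1, h5⟩, e5⟩, ⟨⟨h2, h6⟩, ?_⟩, ⟨⟨h7, h3⟩, ?_⟩, ⟨⟨h8, h4⟩, ?_⟩⟩
    · linear_combination e5 + e2 - e1
    · linear_combination e5 - e1
    · linear_combination e5 - e3
  · rintro ⟨⟨a, b, c, d⟩, ⟨a', b', c', d'⟩⟩ hz ⟨⟨a1, b1, c1, d1⟩, ⟨a1', b1', c1', d1'⟩⟩ hz1 h
    simp at h
    simp [h]

theorem cstep1 (A : Finset (ZMod p)) (N : ℕ) (hA : 0 < A.card) (hN : 0 < N) (h : (A + A).card ≤ N) :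
    A.card ^ 8 ≤ 256 * coll (PP A N ×ˢ PP A N) (fun z => z.1 - z.2) * ∑ t, rm A A t ^ 4 := by
  have h1 := W_card A N hN h
  have h2 := QQ_card A (PP A N)
  have h3 := QQ_sq A (PP A N)
  have h4 : A.card ^ 4 ≤ 16 * (QQ A (PP A N)).card := by
    apply Nat.le_of_mul_le_mul_left _ (pow_pos hA 4)
    calc A.card ^ 4 * A.card ^ 4 = (A.card ^ 2) ^ 4 := by ring
      _ ≤ (2 * ((A ×ˢ A).filter (fun z => z.1 + z.2 ∈ PP A N)).card) ^ 4 := Nat.pow_le_pow_left h1 4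
      _ = 16 * ((A ×ˢ A).filter (fun z => z.1 + z.2 ∈ PP A N)).card ^ 4 := by ring
      _ ≤ 16 * (A.card ^ 4 * (QQ A (PP A N)).card) := Nat.mul_le_mul_left _ h2
      _ = _ := by ring
  calc A.card ^ 8 = (A.card ^ 4) ^ 2 := by ring
    _ ≤ (16 * (QQ A (PP A N)).card) ^ 2 := Nat.pow_le_pow_left h4 2
    _ = 256 * (QQ A (PP A N)).card ^ 2 := by ring
    _ ≤ 256 * _ := Nat.mul_le_mul_left _ h3
    _ = _ := by ring

/-- additive energy of `A` and `P` -/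
def EAP (A P : Finset (ZMod p)) : ℕ := ∑ t, rm A P t ^ 2

lemma EAP_eq (A P : Finset (ZMod p)) : EAP A P = coll (A ×ˢ P) (fun z => z.1 - z.2) := by
  rw [coll_eq _ _ Finset.univ (by simp)]
  rfl

lemma EAP_triv (A P : Finset (ZMod p)) : EAP A P ≤ A.card * (A.card * P.card) := by
  calc EAP A P ≤ ∑ t, A.card * rm A P t := by
        apply Finset.sum_le_sum
        intro t _
        rw [pow_two]
        exact Nat.mul_le_mul_right _ (rm_le A P t)
    _ = A.card * ∑ t, rm A P t := by rw [Finset.mul_sum]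
    _ ≤ _ := Nat.mul_le_mul_left _ (sum_rm_le A P _)

lemma Yl_sq (A P : Finset (ZMod p)) (σ : ℕ) : σ ^ 2 * (Yl A P σ).card ≤ EAP A P := by
  calc σ ^ 2 * (Yl A P σ).card ≤ ∑ t ∈ Yl A P σ, rm A P t ^ 2 := by
        rw [mul_comm, ← smul_eq_mul]
        apply Finset.card_nsmul_le_sum
        intro t ht
        apply Nat.pow_le_pow_left
        simpa [Yl] using ht
    _ ≤ _ := Finset.sum_le_sum_of_subset (Finset.subset_univ _)

lemma cstep3 (A P : Finset (ZMod p)) (hA0 : (0 : ZMod p) ∉ A) :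
    A.card ^ 2 * EAP A P ≤ coll ((A * A) ×ˢ (A.image (fun c => c⁻¹)) ×ˢ P) (fun t => t.1 * t.2.1 + t.2.2) := by
  classical
  have e : A.card ^ 2 * EAP A P = ((A ×ˢ A) ×ˢ (((A ×ˢ P) ×ˢ (A ×ˢ P)).filter (fun z => z.1.1 - z.1.2 = z.2.1 - z.2.2))).card := by
    rw [Finset.card_product, Finset.card_product, EAP_eq, coll, pow_two]
  rw [e]
  apply Finset.card_le_card_of_injOn (fun z => ((z.2.1.1 * z.1.1, z.1.1⁻¹, z.2.2.2), (z.2.2.1 * z.1.2, z.1.2⁻¹, z.2.1.2)))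
  · rintro ⟨⟨c, c'⟩, ⟨b, y⟩, ⟨b', y'⟩⟩ hz
    simp only [Finset.coe_product, Set.mem_prod, Finset.mem_coe, Finset.mem_filter, Finset.mem_product] at hz
    obtain ⟨⟨h1, h2⟩, ⟨⟨h3, h4⟩, h5, h6⟩, h7⟩ := hz
    have hc : c ≠ 0 := fun h => hA0 (h ▸ h1)
    have hc' : c' ≠ 0 := fun h => hA0 (h ▸ h2)
    simp only [Finset.coe_filter, Finset.mem_product, Set.mem_setOf_eq]
    refine ⟨⟨⟨Finset.mul_mem_mul h3 h1, Finset.mem_image_of_mem _ h1, h6⟩,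
      Finset.mul_mem_mul h5 h2, Finset.mem_image_of_mem _ h2, h4⟩, ?_⟩
    rw [mul_inv_cancel_right₀ hc, mul_inv_cancel_right₀ hc']
    linear_combination h7
  · rintro ⟨⟨c, c'⟩, ⟨b, y⟩, ⟨b', y'⟩⟩ hz ⟨⟨c1, c1'⟩, ⟨b1, y1⟩, ⟨b1', y1'⟩⟩ hz1 h
    simp only [Finset.coe_product, Set.mem_prod, Finset.mem_coe, Finset.mem_filter, Finset.mem_product] at hz
    have hc : c ≠ 0 := fun h => hA0 (h ▸ hz.1.1)
    have hc' : c' ≠ 0 := fun h => hA0 (h ▸ hz.1.2)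
    simp only [Prod.mk.injEq, inv_inj] at h
    obtain ⟨⟨h1, h2, h3⟩, h4, h5, h6⟩ := h
    subst h2 h3 h5 h6
    rw [mul_right_cancel₀ hc h1, mul_right_cancel₀ hc' h4]

/-- main pointwise bound for step 4 -/
lemma step4_pt (A : Finset (ZMod p)) (hA0 : (0 : ZMod p) ∉ A) (N : ℕ) (v : ZMod p) :
    A.card ^ 3 * ((PP A N ×ˢ PP A N).filter (fun z => z.1 - z.2 = v)).card ≤
      2 * N * ∑ σ ∈ Finset.Icc 1 A.card,
        (((A * A) ×ˢ (A.image (fun c => c⁻¹)) ×ˢ Yl A (PP A N) σ).filter (fun t => t.1 * t.2.1 + t.2.2 = v)).card := by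
  classical
  set P := PP A N with hP
  set K := (P ×ˢ P).filter (fun z => z.1 - z.2 = v) with hK
  set U := A * A
  set V := A.image (fun c => c⁻¹)
  -- first
  have h1 : A.card ^ 2 * K.card ≤ 2 * N * ∑ z ∈ K, rp A z.1 := by
    rw [Finset.mul_sum, mul_comm, ← smul_eq_mul]
    apply Finset.card_nsmul_le_sum
    intro z hz
    have h2 : z.1 ∈ P := (Finset.mem_product.mp (Finset.mem_filter.mp hz).1).1
    exact (Finset.mem_filter.mp h2).2
  -- second: triples
  set H := ((U ×ˢ V) ×ˢ (A ×ˢ P)).filter (fun z => z.1.1 * z.1.2 + (z.2.1 - z.2.2) = v) with hH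
  have h2 : A.card * ∑ z ∈ K, rp A z.1 ≤ H.card := by
    have e : A.card * ∑ z ∈ K, rp A z.1 =
        (A ×ˢ (K.sigma (fun z => (A ×ˢ A).filter (fun w => w.1 + w.2 = z.1)))).card := by
      rw [Finset.card_product, Finset.card_sigma]; rfl
    rw [e]
    apply Finset.card_le_card_of_injOn (fun z => ((z.2.2.1 * z.1, z.1⁻¹), (z.2.2.2, z.2.1.2)))
    · rintro ⟨c, ⟨⟨w, x⟩, ⟨a, b⟩⟩⟩ hz
      simp only [Finset.coe_product, Set.mem_prod, Finset.mem_coe, Finset.mem_sigma, Finset.mem_filter, hK, Finset.mem_product] at hz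
      obtain ⟨h1, ⟨⟨h2, h3⟩, h4⟩, ⟨h5, h6⟩, h7⟩ := hz
      have hc : c ≠ 0 := fun h => hA0 (h ▸ h1)
      simp only [hH, Finset.coe_filter, Finset.mem_product, Set.mem_setOf_eq]
      refine ⟨⟨⟨Finset.mul_mem_mul h5 h1, Finset.mem_image_of_mem _ h1⟩, h6, h3⟩, ?_⟩
      rw [mul_inv_cancel_right₀ hc]
      linear_combination h7 + h4
    · rintro ⟨c, ⟨⟨w, x⟩, ⟨a, b⟩⟩⟩ hz ⟨c', ⟨⟨w', x'⟩, ⟨a', b'⟩⟩⟩ hz' h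
      simp only [Finset.coe_product, Set.mem_prod, Finset.mem_coe, Finset.mem_sigma, Finset.mem_filter, hK, Finset.mem_product] at hz hz'
      have hc : c ≠ 0 := fun h => hA0 (h ▸ hz.1)
      simp only [Prod.mk.injEq, inv_inj] at h
      obtain ⟨⟨h1, h2⟩, h3, h4⟩ := h
      subst h2 h3 h4
      have h5 := mul_right_cancel₀ hc h1
      subst h5
      have h6 := hz.2.2.2.symm.trans hz'.2.2.2
      subst h6
      rfl
  have h3 : H.card ≤ ∑ σ ∈ Finset.Icc 1 A.card, ((U ×ˢ V ×ˢ Yl A P σ).filter (fun t => t.1 * t.2.1 + t.2.2 = v)).card := by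
    rw [Finset.card_eq_sum_card_fiberwise (t := U ×ˢ V) (f := fun z => z.1)]
    · calc _ ≤ ∑ q ∈ U ×ˢ V, rm A P (v - q.1 * q.2) := by
            apply Finset.sum_le_sum
            rintro ⟨u, w⟩ hq
            apply Finset.card_le_card_of_injOn (fun z => z.2)
            · rintro ⟨⟨u', w'⟩, ⟨a, x⟩⟩ hz
              simp only [hH, Finset.coe_filter, Finset.mem_filter, Finset.mem_product, Set.mem_setOf_eq, Prod.mk.injEq] at hz ⊢
              obtain ⟨⟨⟨_, h1⟩, h2⟩, h3, h4⟩ := hz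
              subst h3 h4
              exact ⟨h1, by linear_combination h2⟩
            · rintro ⟨⟨u', w'⟩, ⟨a, x⟩⟩ hz ⟨⟨u1, w1⟩, ⟨a1, x1⟩⟩ hz' h
              simp only [hH, Finset.coe_filter, Finset.mem_filter, Finset.mem_product, Set.mem_setOf_eq, Prod.mk.injEq] at hz hz' h
              simp [hz.2, hz'.2, h]
        _ = ∑ q ∈ U ×ˢ V, ∑ σ ∈ Finset.Icc 1 A.card, (if v - q.1 * q.2 ∈ Yl A P σ then 1 else 0) := by
            apply Finset.sum_congr rfl
            intro q _
            rw [← Finset.card_filter]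
            have : (Finset.Icc 1 A.card).filter (fun σ => v - q.1 * q.2 ∈ Yl A P σ) = Finset.Icc 1 (rm A P (v - q.1 * q.2)) := by
              ext σ
              have := rm_le A P (v - q.1 * q.2)
              simp only [Yl, Finset.mem_filter, Finset.mem_Icc, Finset.mem_univ, true_and]
              omega
            rw [this]; simp
        _ = ∑ σ ∈ Finset.Icc 1 A.card, ∑ q ∈ U ×ˢ V, (if v - q.1 * q.2 ∈ Yl A P σ then 1 else 0) := Finset.sum_comm
        _ ≤ _ := by
            apply Finset.sum_le_sum
            intro σ _
            rw [← Finset.card_filter]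
            apply Finset.card_le_card_of_injOn (fun q => (q.1, q.2, v - q.1 * q.2))
            · rintro ⟨u, w⟩ hz
              simp only [Finset.coe_filter, Finset.mem_product, Set.mem_setOf_eq] at hz ⊢
              exact ⟨⟨hz.1.1, hz.1.2, hz.2⟩, by ring⟩
            · rintro ⟨u, w⟩ hz ⟨u', w'⟩ hz' h
              simp at h
              simp [h]
    · intro z hz
      simp only [hH, Finset.coe_filter, Finset.mem_product, Set.mem_setOf_eq] at hz
      exact Finset.mem_coe.mpr (Finset.mem_product.mpr hz.1.1)
  calc A.card ^ 3 * K.card = A.card * (A.card ^ 2 * K.card) := by ring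
    _ ≤ A.card * (2 * N * ∑ z ∈ K, rp A z.1) := Nat.mul_le_mul_left _ h1
    _ = 2 * N * (A.card * ∑ z ∈ K, rp A z.1) := by ring
    _ ≤ 2 * N * _ := Nat.mul_le_mul_left _ (h2.trans h3)

lemma weighted_cs (n : ℕ) (g : ℕ → ℝ) :
    (∑ σ ∈ Finset.Icc 1 n, g σ) ^ 2 ≤ (1 + Real.log n) * ∑ σ ∈ Finset.Icc 1 n, σ * g σ ^ 2 := by
  have h := Finset.sum_sq_le_sum_mul_sum_of_sq_le_mul (Finset.Icc 1 n) (r := g) (f := fun σ => (σ : ℝ)⁻¹)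
    (g := fun σ => σ * g σ ^ 2) (by intros; positivity) (by intros; positivity) (by
      intro σ hσ
      rw [Finset.mem_Icc] at hσ
      have : (σ : ℝ) ≠ 0 := by have := hσ.1; positivity
      rw [inv_mul_cancel_left₀ this])
  refine h.trans ?_
  have := sum_inv_le n
  gcongr

theorem cstep4 (A : Finset (ZMod p)) (hA0 : (0 : ZMod p) ∉ A) (N : ℕ) :
    (A.card : ℝ) ^ 6 * coll (PP A N ×ˢ PP A N) (fun z => z.1 - z.2) ≤
      4 * N ^ 2 * ((1 + Real.log A.card) * ∑ σ ∈ Finset.Icc 1 A.card,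
        (σ : ℝ) * coll ((A * A) ×ˢ (A.image (fun c => c⁻¹)) ×ˢ Yl A (PP A N) σ) (fun t => t.1 * t.2.1 + t.2.2)) := by
  classical
  rw [coll_eq (PP A N ×ˢ PP A N) _ Finset.univ (by simp)]
  have e : ∀ σ : ℕ, (coll ((A * A) ×ˢ (A.image (fun c => c⁻¹)) ×ˢ Yl A (PP A N) σ) (fun t => t.1 * t.2.1 + t.2.2) : ℝ) =
      ∑ v, ((((A * A) ×ˢ (A.image (fun c => c⁻¹)) ×ˢ Yl A (PP A N) σ).filter (fun t => t.1 * t.2.1 + t.2.2 = v)).card : ℝ) ^ 2 := by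
    intro σ
    rw [coll_eq _ _ Finset.univ (by simp)]
    push_cast
    rfl
  simp_rw [e, Finset.mul_sum]
  rw [Finset.sum_comm]
  push_cast
  rw [Finset.mul_sum]
  apply Finset.sum_le_sum
  intro v _
  have h1 : (A.card : ℝ) ^ 3 * ((PP A N ×ˢ PP A N).filter (fun z => z.1 - z.2 = v)).card ≤
      2 * N * ∑ σ ∈ Finset.Icc 1 A.card,
        ((((A * A) ×ˢ (A.image (fun c => c⁻¹)) ×ˢ Yl A (PP A N) σ).filter (fun t => t.1 * t.2.1 + t.2.2 = v)).card : ℝ) := by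
    exact_mod_cast step4_pt A hA0 N v
  have h2 := weighted_cs A.card (fun σ => ((((A * A) ×ˢ (A.image (fun c => c⁻¹)) ×ˢ Yl A (PP A N) σ).filter (fun t => t.1 * t.2.1 + t.2.2 = v)).card : ℝ))
  calc _ = ((A.card : ℝ) ^ 3 * ((PP A N ×ˢ PP A N).filter (fun z => z.1 - z.2 = v)).card) ^ 2 := by ring
    _ ≤ _ := pow_le_pow_left₀ (by positivity) h1 2
    _ = 4 * N ^ 2 * (∑ σ ∈ Finset.Icc 1 A.card,
        ((((A * A) ×ˢ (A.image (fun c => c⁻¹)) ×ˢ Yl A (PP A N) σ).filter (fun t => t.1 * t.2.1 + t.2.2 = v)).card : ℝ)) ^ 2 := by ring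
    _ ≤ 4 * N ^ 2 * _ := mul_le_mul_of_nonneg_left h2 (by positivity)
    _ = _ := by simp only [Finset.mul_sum]

end
end SP


namespace SP
open Pointwise

noncomputable section

variable {p : ℕ} [Fact p.Prime]

lemma le_sq_help {a b : ℝ} (h : a ^ 2 ≤ b ^ 2) (hb : 0 ≤ b) : a ≤ b := abs_le_of_sq_le_sq' h hb |>.2

lemma PP_card (A : Finset (ZMod p)) (N : ℕ) (h : (A + A).card ≤ N) : (PP A N).card ≤ N :=
  (Finset.card_filter_le _ _).trans h

lemma inv_image_zero (A : Finset (ZMod p)) (hA0 : (0 : ZMod p) ∉ A) : (0 : ZMod p) ∉ A.image (fun c => c⁻¹) := by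
  intro h
  rw [Finset.mem_image] at h
  obtain ⟨a, ha, h⟩ := h
  rw [inv_eq_zero] at h
  exact hA0 (h ▸ ha)

lemma E_bound (A : Finset (ZMod p)) (hA0 : (0 : ZMod p) ∉ A) (n N : ℕ) (hn : A.card = n) (hn1 : 1 ≤ n)
    (hS : (A + A).card ≤ N) (hM : (A * A).card ≤ N) (hnN : n ≤ N) (hN2 : N ≤ n ^ 2)
    (ν : ℝ) (hν : 1 ≤ ν) (hnν : (n : ℝ) = ν ^ 64) (hp : ν ^ 117 ≤ p) (hNν : (N : ℝ) ≤ ν ^ 78) :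
    ν ^ 32 * (EAP A (PP A N) : ℝ) ≤ 2 * LL n * N ^ 3 := by
  have hν0 : 0 < ν := by linarith
  have hL := LL_ge n
  have hp0 : (0 : ℝ) < p := by exact_mod_cast (Fact.out : p.Prime).pos
  have hN1 : 1 ≤ N := hn1.trans hnN
  have hN0 : (0 : ℝ) < N := by exact_mod_cast hN1
  have hPc := PP_card A N hS
  have hVc : (A.image (fun c => c⁻¹)).card ≤ n := hn ▸ Finset.card_image_le
  have hm1 : 1 ≤ N ^ 2 * n := Nat.mul_pos (pow_pos hN1 2) hn1
  have h3 := cstep3 A (PP A N) hA0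
  have hJ := J1_bound (A * A) (A.image (fun c => c⁻¹)) (PP A N) (inv_image_zero A hA0) (N ^ 2 * n) N
    (by
      calc _ ≤ N * (n * N) := by gcongr
        _ = _ := by ring) hm1 hN1 hM (hVc.trans hnN) hPc
  have hLb := L_bound n (N ^ 2 * n) N p hm1 (by
      calc N ^ 2 * n ≤ (n ^ 2) ^ 2 * n := by gcongr
        _ = n ^ 5 := by ring
        _ ≤ n ^ 6 := Nat.pow_le_pow_right hn1 (by norm_num)) (Nat.le_mul_of_pos_right _ hn1)
  have h4 : (n : ℝ) ^ 2 * EAP A (PP A N) ≤ LL n * (((N ^ 2 * n : ℕ) : ℝ) * √((N ^ 2 * n : ℕ) : ℝ) + ((N ^ 2 * n : ℕ) : ℝ) ^ 2 / p) := by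
    rw [hn] at h3
    refine le_trans ?_ (hJ.trans hLb)
    exact_mod_cast h3
  have hsq : √((N ^ 2 * n : ℕ) : ℝ) = N * ν ^ 32 := by
    push_cast
    rw [hnν, show (N : ℝ) ^ 2 * ν ^ 64 = (N * ν ^ 32) ^ 2 by ring, Real.sqrt_sq (by positivity)]
  rw [hsq] at h4
  push_cast at h4
  rw [hnν] at h4
  have h5 : ((N : ℝ) ^ 2 * ν ^ 64) ^ 2 / p ≤ N ^ 3 * ν ^ 96 := by
    rw [div_le_iff₀ hp0]
    have : (N : ℝ) * ν ^ 32 ≤ p := by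
      calc (N : ℝ) * ν ^ 32 ≤ ν ^ 78 * ν ^ 32 := by gcongr
        _ = ν ^ 110 := by ring
        _ ≤ ν ^ 117 := pow_le_pow_right₀ hν (by norm_num)
        _ ≤ p := hp
    calc ((N : ℝ) ^ 2 * ν ^ 64) ^ 2 = N ^ 3 * ν ^ 96 * (N * ν ^ 32) := by ring
      _ ≤ _ := by gcongr
  have h6 : ν ^ 96 * (ν ^ 32 * (EAP A (PP A N) : ℝ)) ≤ ν ^ 96 * (2 * LL n * N ^ 3) := by
    calc _ = (ν ^ 64) ^ 2 * (EAP A (PP A N) : ℝ) := by ring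
      _ ≤ _ := h4
      _ ≤ LL n * (N ^ 2 * ν ^ 64 * (N * ν ^ 32) + N ^ 3 * ν ^ 96) := by gcongr
      _ = _ := by ring
  exact le_of_mul_le_mul_left h6 (by positivity)

lemma coll_sigma (A : Finset (ZMod p)) (hA0 : (0 : ZMod p) ∉ A) (n N : ℕ) (hn : A.card = n) (hn1 : 1 ≤ n)
    (hS : (A + A).card ≤ N) (hM : (A * A).card ≤ N) (hnN : n ≤ N) (hN2 : N ≤ n ^ 2)
    (q e : ℝ) (hq0 : 0 < q) (he0 : 0 ≤ e) (hq : q ^ 2 = N * n) (he : e ^ 2 = (EAP A (PP A N) : ℝ))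
    (σ : ℕ) (hσ : 1 ≤ σ) :
    (σ : ℝ) * coll ((A * A) ×ˢ (A.image (fun c => c⁻¹)) ×ˢ Yl A (PP A N) σ) (fun t => t.1 * t.2.1 + t.2.2) ≤
      LL n * (2 * q ^ 5 * e + q ^ 8 / p) * (σ : ℝ)⁻¹ := by
  have hL := LL_ge n
  have hp0 : (0 : ℝ) < p := by exact_mod_cast (Fact.out : p.Prime).pos
  have hN1 : 1 ≤ N := hn1.trans hnN
  have hN0 : (0 : ℝ) < N := by exact_mod_cast hN1
  have hσ0 : (0 : ℝ) < σ := by exact_mod_cast hσ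
  have hPc := PP_card A N hS
  have hVc : (A.image (fun c => c⁻¹)).card ≤ n := hn ▸ Finset.card_image_le
  have hy1 : σ * (Yl A (PP A N) σ).card ≤ n * N := by
    refine (Yl_card A (PP A N) σ).trans ?_
    rw [hn]; gcongr
  have hy2 := Yl_sq A (PP A N) σ
  have hE := EAP_triv A (PP A N)
  set P := PP A N with hP
  set Y := Yl A P σ with hY
  rcases Nat.eq_zero_or_pos Y.card with h0 | hy0
  · have : Y = ∅ := Finset.card_eq_zero.mp h0
    rw [this, coll]
    simp
    positivity
  have hyN : Y.card ≤ n * N := le_trans (Nat.le_mul_of_pos_left _ hσ) hy1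
  have hm1 : 1 ≤ N * n * Y.card := Nat.mul_pos (Nat.mul_pos hN1 hn1) hy0
  have hJ := J1_bound (A * A) (A.image (fun c => c⁻¹)) Y (inv_image_zero A hA0) (N * n * Y.card) (N + Y.card)
    (by
      calc _ ≤ N * (n * Y.card) := by gcongr
        _ = _ := by ring) hm1 (by omega) (by omega) (by omega) (by omega)
  have hlog := log_le n (N * n * Y.card) hm1 (by
      calc N * n * Y.card ≤ N * n * (n * N) := by gcongr
        _ = N ^ 2 * n ^ 2 := by ring
        _ ≤ (n ^ 2) ^ 2 * n ^ 2 := by gcongr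
        _ = n ^ 6 := by ring)
  have hlog0 : 0 ≤ Real.log ((N * n * Y.card : ℕ) : ℝ) := Real.log_natCast_nonneg _
  obtain ⟨w, hw, hw0⟩ : ∃ w : ℝ, w ^ 2 = Y.card ∧ 0 < w :=
    ⟨√Y.card, Real.sq_sqrt (by positivity), Real.sqrt_pos.mpr (by exact_mod_cast hy0)⟩
  have hm : ((N * n * Y.card : ℕ) : ℝ) = (q * w) ^ 2 := by
    push_cast
    rw [mul_pow, hq, hw]
  have hsq : √((N * n * Y.card : ℕ) : ℝ) = q * w := by
    rw [hm, Real.sqrt_sq (by positivity)]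
  have hwq : w ≤ q := by
    apply le_sq_help _ hq0.le
    rw [hw, hq, mul_comm]
    exact_mod_cast hyN
  have hσ1 : (σ : ℝ) * w ^ 2 ≤ q ^ 2 := by
    rw [hw, hq, mul_comm (N : ℝ)]; exact_mod_cast hy1
  have hσ2 : (σ : ℝ) * w ≤ e := by
    apply le_sq_help _ he0
    rw [he, mul_pow, hw]
    exact_mod_cast hy2
  have hNe : N * e ≤ q ^ 3 := by
    apply le_sq_help _ (by positivity)
    have h1 : (EAP A P : ℝ) ≤ n * (n * N) := by
      have : EAP A P ≤ n * (n * N) := by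
        refine hE.trans ?_
        rw [hn]; gcongr
      exact_mod_cast this
    have hn1' : (1 : ℝ) ≤ n := by exact_mod_cast hn1
    calc ((N : ℝ) * e) ^ 2 = N ^ 2 * e ^ 2 := by ring
      _ ≤ (N : ℝ) ^ 2 * ((n : ℝ) * (n * N)) := by rw [he]; gcongr
      _ = (N : ℝ) ^ 3 * (n : ℝ) ^ 2 * 1 := by ring
      _ ≤ (N : ℝ) ^ 3 * (n : ℝ) ^ 2 * (n : ℝ) := by gcongr
      _ = ((N : ℝ) * n) ^ 3 := by ring
      _ = (q ^ 3) ^ 2 := by rw [← hq]; ring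
  have hJ2 : (coll ((A * A) ×ˢ (A.image (fun c => c⁻¹)) ×ˢ Y) (fun t => t.1 * t.2.1 + t.2.2) : ℝ) ≤
      LL n * (q ^ 3 * w ^ 3 + N * (q * w) ^ 2 + (q * w) ^ 4 / p) := by
    refine hJ.trans ?_
    rw [hsq] at *
    have hc : ((N + Y.card : ℕ) : ℝ) ≤ N + q * w := by
      push_cast
      rw [← hw]
      nlinarith
    calc _ ≤ 10 ^ 9 * (1 + 6 * Real.log n) * (((N * n * Y.card : ℕ) : ℝ) * (q * w) + (N + q * w) * ((N * n * Y.card : ℕ) : ℝ) + ((N * n * Y.card : ℕ) : ℝ) ^ 2 / p) := by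
          gcongr
      _ = 10 ^ 9 * (1 + 6 * Real.log n) * (2 * (q ^ 3 * w ^ 3) + N * (q * w) ^ 2 + (q * w) ^ 4 / p) := by
          rw [hm]; ring
      _ ≤ 10 ^ 9 * (1 + 6 * Real.log n) * (2 * (q ^ 3 * w ^ 3 + N * (q * w) ^ 2 + (q * w) ^ 4 / p)) := by
          have : 0 ≤ Real.log n := Real.log_natCast_nonneg n
          gcongr
          have h1 : 0 ≤ N * (q * w) ^ 2 := by positivity
          have h2 : 0 ≤ (q * w) ^ 4 / p := by positivity
          linarith
      _ = _ := by rw [LL]; ring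
  rw [← div_eq_mul_inv, le_div_iff₀ hσ0]
  have t1 : (σ : ℝ) ^ 2 * (q ^ 3 * w ^ 3) ≤ q ^ 5 * e := by
    calc (σ : ℝ) ^ 2 * (q ^ 3 * w ^ 3) = q ^ 3 * ((σ * w ^ 2) * (σ * w)) := by ring
      _ ≤ q ^ 3 * (q ^ 2 * e) := by gcongr
      _ = _ := by ring
  have t2 : (σ : ℝ) ^ 2 * (N * (q * w) ^ 2) ≤ q ^ 5 * e := by
    calc (σ : ℝ) ^ 2 * (N * (q * w) ^ 2) = N * q ^ 2 * (σ * w) ^ 2 := by ring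
      _ ≤ N * q ^ 2 * e ^ 2 := by gcongr
      _ = (N * e) * (q ^ 2 * e) := by ring
      _ ≤ q ^ 3 * (q ^ 2 * e) := by gcongr
      _ = _ := by ring
  have t3 : (σ : ℝ) ^ 2 * ((q * w) ^ 4 / p) ≤ q ^ 8 / p := by
    calc (σ : ℝ) ^ 2 * ((q * w) ^ 4 / p) = q ^ 4 * (σ * w ^ 2) ^ 2 / p := by ring
      _ ≤ q ^ 4 * (q ^ 2) ^ 2 / p := by gcongr
      _ = _ := by ring
  calc _ = (σ : ℝ) ^ 2 * (coll ((A * A) ×ˢ (A.image (fun c => c⁻¹)) ×ˢ Y) (fun t => t.1 * t.2.1 + t.2.2) : ℝ) := by ring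
    _ ≤ (σ : ℝ) ^ 2 * (LL n * (q ^ 3 * w ^ 3 + N * (q * w) ^ 2 + (q * w) ^ 4 / p)) := by gcongr
    _ = LL n * ((σ : ℝ) ^ 2 * (q ^ 3 * w ^ 3) + (σ : ℝ) ^ 2 * (N * (q * w) ^ 2) + (σ : ℝ) ^ 2 * ((q * w) ^ 4 / p)) := by ring
    _ ≤ LL n * (2 * q ^ 5 * e + q ^ 8 / p) := by
        gcongr
        linarith

lemma EP_bound (A : Finset (ZMod p)) (hA0 : (0 : ZMod p) ∉ A) (n N : ℕ) (hn : A.card = n) (hn1 : 1 ≤ n)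
    (hS : (A + A).card ≤ N) (hM : (A * A).card ≤ N) (hnN : n ≤ N) (hN2 : N ≤ n ^ 2)
    (ν : ℝ) (hν : 1 ≤ ν) (hnν : (n : ℝ) = ν ^ 64) (hp : ν ^ 117 ≤ p) (hNν : (N : ℝ) ≤ ν ^ 78) :
    ν ^ 240 * (coll (PP A N ×ˢ PP A N) (fun z => z.1 - z.2) : ℝ) ≤
      20 * (1 + Real.log n) ^ 2 * LL n ^ 2 * N ^ 6 := by
  have hν0 : 0 < ν := by linarith
  have hL := LL_ge n
  have hp0 : (0 : ℝ) < p := by exact_mod_cast (Fact.out : p.Prime).pos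
  have hN1 : 1 ≤ N := hn1.trans hnN
  have hN0 : (0 : ℝ) < N := by exact_mod_cast hN1
  have hlg : 0 ≤ Real.log n := Real.log_natCast_nonneg n
  obtain ⟨s, hs, hs0⟩ : ∃ s : ℝ, s ^ 2 = N ∧ 0 < s :=
    ⟨√N, Real.sq_sqrt (by positivity), Real.sqrt_pos.mpr hN0⟩
  obtain ⟨e, he, he0⟩ : ∃ e : ℝ, e ^ 2 = (EAP A (PP A N) : ℝ) ∧ 0 ≤ e :=
    ⟨√(EAP A (PP A N) : ℝ), Real.sq_sqrt (by positivity), Real.sqrt_nonneg _⟩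
  have hE := E_bound A hA0 n N hn hn1 hS hM hnN hN2 ν hν hnν hp hNν
  have he2 : ν ^ 16 * e ≤ 2 * LL n * s ^ 3 := by
    apply le_sq_help _ (by positivity)
    calc (ν ^ 16 * e) ^ 2 = ν ^ 32 * e ^ 2 := by ring
      _ ≤ 2 * LL n * N ^ 3 := by rw [he]; exact hE
      _ ≤ (2 * LL n) ^ 2 * N ^ 3 := by
          gcongr
          nlinarith
      _ = (2 * LL n * s ^ 3) ^ 2 := by rw [← hs]; ring
  have h4 := cstep4 A hA0 N
  rw [hn] at h4
  have h5 : ∑ σ ∈ Finset.Icc 1 n,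
        (σ : ℝ) * coll ((A * A) ×ˢ (A.image (fun c => c⁻¹)) ×ˢ Yl A (PP A N) σ) (fun t => t.1 * t.2.1 + t.2.2) ≤
      LL n * (2 * (s * ν ^ 32) ^ 5 * e + (s * ν ^ 32) ^ 8 / p) * (1 + Real.log n) := by
    refine le_trans (Finset.sum_le_sum (fun σ hσ => coll_sigma A hA0 n N hn hn1 hS hM hnN hN2 (s * ν ^ 32) e
      (by positivity) he0 (by rw [mul_pow, hs, hnν]; ring) he σ (Finset.mem_Icc.mp hσ).1)) ?_
    rw [← Finset.mul_sum]
    gcongr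
    exact sum_inv_le n
  have h6 : 2 * (s * ν ^ 32) ^ 5 * e + (s * ν ^ 32) ^ 8 / p ≤ 5 * LL n * N ^ 4 * ν ^ 144 := by
    have a1 : 2 * (s * ν ^ 32) ^ 5 * e ≤ 4 * LL n * N ^ 4 * ν ^ 144 := by
      calc 2 * (s * ν ^ 32) ^ 5 * e = 2 * s ^ 5 * ν ^ 144 * (ν ^ 16 * e) := by ring
        _ ≤ 2 * s ^ 5 * ν ^ 144 * (2 * LL n * s ^ 3) := by gcongr
        _ = 4 * LL n * N ^ 4 * ν ^ 144 := by rw [← hs]; ring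
    have a2 : (s * ν ^ 32) ^ 8 / p ≤ LL n * N ^ 4 * ν ^ 144 := by
      rw [div_le_iff₀ hp0]
      calc (s * ν ^ 32) ^ 8 = 1 * (s ^ 2) ^ 4 * (ν ^ 139 * ν ^ 117) := by ring
        _ = 1 * N ^ 4 * (ν ^ 139 * ν ^ 117) := by rw [hs]
        _ ≤ LL n * N ^ 4 * (ν ^ 144 * p) := by
            gcongr
            norm_num
        _ = _ := by ring
    linarith
  have h7 : ν ^ 144 * (ν ^ 240 * (coll (PP A N ×ˢ PP A N) (fun z => z.1 - z.2) : ℝ)) ≤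
      ν ^ 144 * (20 * (1 + Real.log n) ^ 2 * LL n ^ 2 * N ^ 6) := by
    calc _ = (n : ℝ) ^ 6 * (coll (PP A N ×ˢ PP A N) (fun z => z.1 - z.2) : ℝ) := by rw [hnν]; ring
      _ ≤ _ := h4
      _ ≤ 4 * N ^ 2 * ((1 + Real.log n) * (LL n * (5 * LL n * N ^ 4 * ν ^ 144) * (1 + Real.log n))) := by
          refine mul_le_mul_of_nonneg_left ?_ (by positivity)
          refine mul_le_mul_of_nonneg_left (h5.trans ?_) (by positivity)
          gcongr
      _ = _ := by ring
  exact le_of_mul_le_mul_left h7 (by positivity)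

lemma main_nu (A : Finset (ZMod p)) (hA0 : (0 : ZMod p) ∉ A) (n N : ℕ) (hn : A.card = n) (hn1 : 1 ≤ n)
    (hS : (A + A).card ≤ N) (hM : (A * A).card ≤ N) (hnN : n ≤ N) (hN2 : N ≤ n ^ 2)
    (ν : ℝ) (hν : 1 ≤ ν) (hnν : (n : ℝ) = ν ^ 64) (hp : ν ^ 117 ≤ p) :
    ν ^ 78 ≤ 122880 * (1 + Real.log n) ^ 3 * LL n ^ 4 * N := by
  have hν0 : 0 < ν := by linarith
  have hL := LL_ge n
  have hp0 : (0 : ℝ) < p := by exact_mod_cast (Fact.out : p.Prime).pos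
  have hN1 : 1 ≤ N := hn1.trans hnN
  have hN0 : (0 : ℝ) < N := by exact_mod_cast hN1
  have hlg : 0 ≤ Real.log n := Real.log_natCast_nonneg n
  have hlam : 1 ≤ (1 + Real.log n) ^ 3 * LL n ^ 4 :=
    one_le_mul_of_one_le_of_one_le (one_le_pow₀ (by linarith)) (one_le_pow₀ hL)
  have hK : 1 ≤ 122880 * (1 + Real.log n) ^ 3 * LL n ^ 4 := by rw [mul_assoc]; linarith
  rcases le_or_gt (ν ^ 78) (N : ℝ) with hc | hc
  · exact hc.trans (le_mul_of_one_le_left hN0.le hK)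
  have hEP := EP_bound A hA0 n N hn hn1 hS hM hnN hN2 ν hν hnν hp hc.le
  have hE4 := E4_bound A hA0 n N hn hn1 hM
  have hst : (n : ℝ) ^ 8 ≤ 256 * (coll (PP A N ×ˢ PP A N) (fun z => z.1 - z.2) : ℝ) * ((∑ t, rm A A t ^ 4 : ℕ) : ℝ) := by
    have := cstep1 A N (by omega) hN1 hS
    rw [hn] at this
    exact_mod_cast this
  generalize (coll (PP A N ×ˢ PP A N) (fun z => z.1 - z.2) : ℝ) = X at *
  have hE4' : ((∑ t, rm A A t ^ 4 : ℕ) : ℝ) ≤ 24 * (1 + Real.log n) * LL n ^ 2 * N * ν ^ 206 := by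
    refine hE4.trans ?_
    have a1 : (4 : ℝ) * N ^ 2 * LL n ^ 2 * n ^ 2 ≤ 4 * LL n ^ 2 * N * ν ^ 206 := by
      calc (4 : ℝ) * N ^ 2 * LL n ^ 2 * n ^ 2 = 4 * LL n ^ 2 * N * (N * ν ^ 128) := by rw [hnν]; ring
        _ ≤ 4 * LL n ^ 2 * N * (ν ^ 78 * ν ^ 128) := by gcongr
        _ = _ := by ring
    have a2 : 2 * N * LL n * n ^ 5 / p ≤ 2 * LL n ^ 2 * N * ν ^ 206 := by
      rw [div_le_iff₀ hp0]
      calc 2 * N * LL n * (n : ℝ) ^ 5 = 2 * (LL n * 1) * N * (ν ^ 203 * ν ^ 117) := by rw [hnν]; ring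
        _ ≤ 2 * (LL n * LL n) * N * (ν ^ 206 * p) := by
            gcongr
            norm_num
        _ = _ := by ring
    calc _ ≤ 4 * (4 * LL n ^ 2 * N * ν ^ 206 + 2 * LL n ^ 2 * N * ν ^ 206) * (1 + Real.log n) := by gcongr
      _ = _ := by ring
  have hZ0 : (0 : ℝ) ≤ ((∑ t, rm A A t ^ 4 : ℕ) : ℝ) := Nat.cast_nonneg _
  generalize ((∑ t, rm A A t ^ 4 : ℕ) : ℝ) = Z at *
  have h8 : ν ^ 206 * (ν ^ 78) ^ 7 ≤ ν ^ 206 * (122880 * (1 + Real.log n) ^ 3 * LL n ^ 4 * N ^ 7) := by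
    calc ν ^ 206 * (ν ^ 78) ^ 7 = ν ^ 240 * (n : ℝ) ^ 8 := by rw [hnν]; ring
      _ ≤ ν ^ 240 * (256 * X * Z) := by gcongr
      _ = 256 * (ν ^ 240 * X) * Z := by ring
      _ ≤ 256 * (20 * (1 + Real.log n) ^ 2 * LL n ^ 2 * N ^ 6) * (24 * (1 + Real.log n) * LL n ^ 2 * N * ν ^ 206) := by
          gcongr
      _ = _ := by ring
  have h9 := le_of_mul_le_mul_left h8 (by positivity)
  have h10 : (ν ^ 78) ^ 7 ≤ (122880 * (1 + Real.log n) ^ 3 * LL n ^ 4 * N) ^ 7 := by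
    refine h9.trans ?_
    rw [mul_pow]
    gcongr
    exact le_self_pow₀ hK (by norm_num)
  exact le_of_pow_le_pow_left₀ (by norm_num) (by positivity) h10

end
end SP

open Pointwise
theorem stmt_16 :
    ∃ C : ℝ, 0 < C ∧ ∀ (p : ℕ), p.Prime → ∀ (A : Finset (ZMod p)), A.Nonempty →
          (A.card : ℝ) ≤ (p : ℝ) ^ ((64 : ℝ) / 117) →
          (A.card : ℝ) ^ ((39 : ℝ) / 32) ≤
            C * (max 1 (Real.log A.card)) ^ C * (max (A + A).card (A * A).card : ℕ) := by
  refine ⟨4 * (122880 * 8 * (14 * 10 ^ 9) ^ 4), by norm_num, ?_⟩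
  intro p hp A hA hAp
  haveI : Fact p.Prime := ⟨hp⟩
  set C : ℝ := 4 * (122880 * 8 * (14 * 10 ^ 9) ^ 4) with hC
  have hC7 : 7 ≤ C := by rw [hC]; norm_num
  set l : ℝ := max 1 (Real.log A.card) with hl
  have hl1 : 1 ≤ l := le_max_left _ _
  have hlC : l ^ 7 ≤ l ^ C := by
    rw [← Real.rpow_natCast]
    exact Real.rpow_le_rpow_of_exponent_le hl1 (by exact_mod_cast hC7)
  have hlC1 : 1 ≤ l ^ C := (one_le_pow₀ hl1).trans hlC
  set M := max (A + A).card (A * A).card with hM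
  have hM1 : 1 ≤ M := le_max_of_le_left (Finset.card_pos.mpr (hA.add hA))
  have hM1' : (1 : ℝ) ≤ M := by exact_mod_cast hM1
  have hp0 : (0 : ℝ) < p := by exact_mod_cast hp.pos
  set B := A.erase 0 with hB
  have hBA : B ⊆ A := Finset.erase_subset _ _
  have hAB : A.card ≤ B.card + 1 := by
    have : A.card - 1 ≤ B.card := Finset.pred_card_le_card_erase
    omega
  have hA1 : 1 ≤ A.card := Finset.card_pos.mpr hA
  rcases Nat.eq_zero_or_pos B.card with h0 | hB1
  · have : A.card = 1 := by omega
    rw [this]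
    simp only [Nat.cast_one, Real.one_rpow]
    exact one_le_mul_of_one_le_of_one_le (one_le_mul_of_one_le_of_one_le (by linarith) hlC1) hM1'
  have hBle : B.card ≤ A.card := Finset.card_le_card hBA
  have hB0 : (0 : ℝ) < B.card := by exact_mod_cast hB1
  have hBR1 : (1 : ℝ) ≤ B.card := by exact_mod_cast hB1
  have hBleR : (B.card : ℝ) ≤ A.card := by exact_mod_cast hBle
  have hBne : B.Nonempty := Finset.card_pos.mp hB1
  set ν : ℝ := (B.card : ℝ) ^ ((1 : ℝ) / 64) with hν
  have hν1 : 1 ≤ ν := Real.one_le_rpow hBR1 (by norm_num)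
  have hν64 : (B.card : ℝ) = ν ^ 64 := by
    rw [hν, ← Real.rpow_natCast, ← Real.rpow_mul hB0.le]
    norm_num
  have hν78 : ν ^ 78 = (B.card : ℝ) ^ ((39 : ℝ) / 32) := by
    rw [hν, ← Real.rpow_natCast, ← Real.rpow_mul hB0.le]
    norm_num
  have hν117 : ν ^ 117 ≤ p := by
    calc ν ^ 117 = (B.card : ℝ) ^ ((117 : ℝ) / 64) := by
          rw [hν, ← Real.rpow_natCast, ← Real.rpow_mul hB0.le]
          norm_num
      _ ≤ ((p : ℝ) ^ ((64 : ℝ) / 117)) ^ ((117 : ℝ) / 64) :=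
          Real.rpow_le_rpow hB0.le (hBleR.trans hAp) (by norm_num)
      _ = p := by
          rw [← Real.rpow_mul hp0.le]
          norm_num
  set N := max (B + B).card (B * B).card with hN
  have hNM : N ≤ M := max_le_max (Finset.card_le_card (Finset.add_subset_add hBA hBA))
    (Finset.card_le_card (Finset.mul_subset_mul hBA hBA))
  have hNM' : (N : ℝ) ≤ M := by exact_mod_cast hNM
  have hmain := SP.main_nu B (Finset.notMem_erase _ _) B.card N rfl hB1 (le_max_left _ _) (le_max_right _ _)
    (le_max_of_le_left (Finset.card_le_card_add_right hBne))
    (by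
      rw [pow_two]
      exact max_le Finset.card_add_le Finset.card_mul_le) ν hν1 hν64 hν117
  have hlog : Real.log B.card ≤ l := by
    refine le_trans (Real.log_le_log hB0 hBleR) (le_max_right _ _)
  have hlog0 : 0 ≤ Real.log B.card := Real.log_natCast_nonneg _
  have hL1 := SP.LL_ge B.card
  have hL : SP.LL B.card ≤ 14 * 10 ^ 9 * l := by
    rw [SP.LL]
    linarith
  have hA2 : (A.card : ℝ) ≤ 2 * B.card := by
    have : A.card ≤ 2 * B.card := by omega
    exact_mod_cast this
  clear_value C l M N ν
  generalize SP.LL B.card = L at *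
  generalize Real.log B.card = lb at *
  clear hN hB hM
  clear_value B
  generalize (B.card : ℝ) = b at *
  clear hl
  have hAn : (0 : ℝ) ≤ A.card := Nat.cast_nonneg _
  generalize (A.card : ℝ) = a at *
  have h4 : (a : ℝ) ^ ((39 : ℝ) / 32) ≤ 4 * ν ^ 78 := by
    calc a ^ ((39 : ℝ) / 32) ≤ (2 * b : ℝ) ^ ((39 : ℝ) / 32) :=
          Real.rpow_le_rpow (by positivity) hA2 (by norm_num)
      _ = (2 : ℝ) ^ ((39 : ℝ) / 32) * ν ^ 78 := by
          rw [Real.mul_rpow (by norm_num) hB0.le, hν78]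
      _ ≤ (2 : ℝ) ^ (2 : ℝ) * ν ^ 78 := by
          gcongr
          · norm_num
          · norm_num
      _ = 4 * ν ^ 78 := by norm_num
  calc a ^ ((39 : ℝ) / 32) ≤ 4 * ν ^ 78 := h4
    _ ≤ 4 * (122880 * (1 + lb) ^ 3 * L ^ 4 * N) := by gcongr
    _ ≤ 4 * (122880 * (2 * l) ^ 3 * (14 * 10 ^ 9 * l) ^ 4 * M) := by
        gcongr
        linarith
    _ = C * l ^ 7 * M := by rw [hC]; ring
    _ ≤ C * l ^ C * M := by gcongr
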